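/- arXiv:2107.13417 — 4 statements merged into one kernel-verified Lean document; each statement's English description precedes it below -/
import Mathlib

section
/- For all n, p ≥ 1, the Fuss–Catalan number A_n(p,1) satisfies A_n(p,1) = Σ_{ν} ξ_n(ν), where the sum is over all ν = (ν_1,…,ν_p) ∈ (ℤ≥0)^p with ν_1 + ⋯ + ν_p < n, and ξ_n(ν) := n^{p−1} · C(ν_1+⋯+ν_p, n−(ν_1+⋯+ν_p)−1) · Π_{i=1}^p (1/(n−ν_i))·C(n−ν_i, ν_i) (an identity of rational numbers; each denominator n−ν_i is positive since ν_i < n). -/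
/-!
The numbers `n / (n - k) * C(n - k, k)` are the coefficients of the Lucas polynomial `L_n`, given
by `L_0 = 2`, `L_1 = 1`, `L_{n+2} = L_{n+1} + X L_n` (`lucasPoly_coeff`). Hence the sum of the
products in `xiDist n p ν` over all `ν` of weight `s` is `n ^ (-p)` times the coefficient of `X ^ s`
in `L_n ^ p`. The remaining factor `C(s, n - s - 1)` is the coefficient of `X ^ (n - 1)` in
`(X + X ^ 2) ^ s`, so summing over `s` extracts the coefficient of `X ^ (n - 1)` in
`L_n(X + X ^ 2) ^ p`, up to the factor `1 / n`.

The substitution `X + X ^ 2` makes Binet's formula polynomial: the roots of `t ^ 2 = t + X + X ^ 2`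
are `1 + X` and `-X`, so `L_n(X + X ^ 2) = (1 + X) ^ n + (-X) ^ n` (`lucasPoly_comp`). Modulo `X ^ n`
its `p`-th power is `(1 + X) ^ (n p)`, and the coefficient sought is `C(n p, n - 1)`, which is
`n` times the Fuss–Catalan number.
-/

/- Fuss–Catalan number `A_n(p,r) = (r/(np+r))·C(np+r,n)`. -/
def fussCat (n p r : ℕ) : ℚ := ((r : ℚ) / ((n * p + r : ℕ) : ℚ)) * ((n * p + r).choose n : ℚ)

/- `ξ_n(ν) = n^{p-1}·C(|ν|, n-|ν|-1)·Π_i (1/(n-ν_i))·C(n-ν_i, ν_i)`. -/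
def xiDist (n p : ℕ) (ν : Fin p → ℕ) : ℚ :=
  (n : ℚ) ^ (p - 1) * ((∑ i, ν i).choose (n - (∑ i, ν i) - 1) : ℚ) *
    ∏ i : Fin p, (1 / ((n : ℚ) - (ν i : ℚ))) * ((n - ν i).choose (ν i) : ℚ)

open Polynomial

/-- The Lucas polynomials in the normalisation `L_{n+2} = L_{n+1} + X L_n`, for which
`L_n = α ^ n + β ^ n` whenever `α + β = 1` and `α β = -X`. -/
noncomputable def lucasPoly : ℕ → ℚ[X]
  | 0 => 2
  | 1 => 1
  | n + 2 => lucasPoly (n + 1) + X * lucasPoly n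

/-- Binet's formula after the substitution `X ↦ X + X ^ 2`, where the two roots become `1 + X`
and `-X`. -/
theorem lucasPoly_comp (n : ℕ) :
    (lucasPoly n).comp (X + X ^ 2) = (1 + X) ^ n + (-X) ^ n := by
  induction n using lucasPoly.induct with
  | case1 => 
    simp only [lucasPoly]
    rw [show (2 : ℚ[X]) = C 2 from rfl, C_comp, pow_zero, pow_zero,
      show (C 2 : ℚ[X]) = 2 from rfl]
    norm_num
  | case2 => simp [lucasPoly]
  | case3 n h1 h2 => simp only [lucasPoly, add_comp, mul_comp, X_comp, h1, h2,
      Nat.succ_eq_add_one]; ring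

theorem lucasPoly_coeff_eq_zero (n k : ℕ) (h : n < 2 * k) : (lucasPoly n).coeff k = 0 := by
  induction n using lucasPoly.induct generalizing k with
  | case1 => simp only [lucasPoly]; rw [show (2 : ℚ[X]) = C 2 from rfl, coeff_C, if_neg (by omega)]
  | case2 => simp only [lucasPoly]; rw [coeff_one, if_neg (by omega)]
  | case3 n h1 h2 =>
    obtain ⟨k, rfl⟩ : ∃ j, k = j + 1 := ⟨k - 1, by omega⟩
    simp only [lucasPoly, coeff_add, coeff_X_mul]
    rw [h1 _ (by omega), h2 _ (by omega), add_zero]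

theorem lucasPoly_coeff_zero (n : ℕ) : (lucasPoly (n + 1)).coeff 0 = 1 := by
  induction n with
  | zero => simp [lucasPoly]
  | succ n ih => simp [lucasPoly, ih]

/-- The coefficient `n / (n - j) * C(n - j, j)` for `j = k + 1` and `n - j = m + 1`, in the
division-free form that follows Pascal's rule. -/
theorem lucasPoly_coeff_succ (k m : ℕ) :
    (lucasPoly (k + 1 + (m + 1))).coeff (k + 1) = (m + 1).choose (k + 1) + m.choose k := by
  induction k generalizing m with
  | zero =>
    induction m with
    | zero => simp [lucasPoly, coeff_one]; norm_num
    | succ m ih =>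
      rw [show 0 + 1 + (m + 1 + 1) = (m + 1) + 2 by ring, lucasPoly, coeff_add, coeff_X_mul,
        show m + 1 + 1 = 0 + 1 + (m + 1) by ring, ih,
        lucasPoly_coeff_zero]
      simp; ring
  | succ k ihk =>
    induction m with
    | zero =>
      rw [lucasPoly_coeff_eq_zero _ _ (by omega)]
      simp [Nat.choose_eq_zero_of_lt]
    | succ m ih =>
      rw [show k + 1 + 1 + (m + 1 + 1) = (k + 1 + (m + 1)) + 1 + 1 by ring, lucasPoly, coeff_add,
        coeff_X_mul, show k + 1 + (m + 1) + 1 = k + 1 + 1 + (m + 1) by ring, ih, ihk,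
        Nat.choose_succ_succ (m + 1) (k + 1), Nat.choose_succ_succ m k]
      push_cast [Nat.choose_succ_succ]; ring

/-- The hypothesis `k < n` keeps the denominator nonzero; it also excludes `L_0 = 2`. -/
theorem lucasPoly_coeff (n k : ℕ) (h : k < n) :
    (lucasPoly n).coeff k = n * (1 / ((n : ℚ) - k) * ((n - k).choose k : ℚ)) := by
  obtain ⟨m, rfl⟩ : ∃ m, n = k + (m + 1) := ⟨n - k - 1, by omega⟩
  have hm : (m : ℚ) + 1 ≠ 0 := by positivity
  rw [Nat.add_sub_cancel_left]
  push_cast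
  rw [add_sub_cancel_left]
  field_simp
  cases k with
  | zero => rw [zero_add, lucasPoly_coeff_zero]; simp
  | succ k =>
    rw [lucasPoly_coeff_succ]
    have := Nat.add_one_mul_choose_eq m k
    have h : ((m : ℚ) + 1) * m.choose k = (m + 1).choose (k + 1) * (k + 1) := by exact_mod_cast this
    push_cast
    linear_combination h

theorem coeff_pow_antidiagonalTuple (P : ℚ[X]) (p s : ℕ) :
    (P ^ p).coeff s = ∑ ν ∈ Finset.Nat.antidiagonalTuple p s, ∏ i, P.coeff (ν i) := by
  induction p generalizing s with
  | zero => cases s <;> simp [coeff_one]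
  | succ p ih =>
    rw [pow_succ', coeff_mul]
    simp_rw [ih, Finset.mul_sum]
    rw [Finset.sum_sigma']
    refine Finset.sum_bij' (fun x _ => Fin.cons x.1.1 x.2)
      (fun ν _ => ⟨(ν 0, ∑ i, Fin.tail ν i), Fin.tail ν⟩) ?_ ?_ ?_ ?_ ?_
    · rintro ⟨⟨a, b⟩, ν⟩ h
      simp only [Finset.mem_sigma, Finset.Nat.mem_antidiagonalTuple] at h ⊢
      simpa [Fin.sum_univ_succ, h.2] using Finset.HasAntidiagonal.mem_antidiagonal.1 h.1
    · intro ν h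
      simp only [Finset.mem_sigma, Finset.HasAntidiagonal.mem_antidiagonal,
        Finset.Nat.mem_antidiagonalTuple] at h ⊢
      simpa [Fin.sum_univ_succ, Fin.tail] using h
    · rintro ⟨⟨a, b⟩, ν⟩ h
      simp only [Finset.mem_sigma, Finset.Nat.mem_antidiagonalTuple] at h
      simp [h.2]
    · intro ν h
      simp
    · rintro ⟨⟨a, b⟩, ν⟩ h
      simp [Fin.prod_univ_succ]

/-- Since `(X + X ^ 2) ^ s = X ^ s (1 + X) ^ s`, its coefficient at `X ^ (n - 1)` is
`C(s, n - s - 1)` for `s < n` and zero for larger `s`. -/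
theorem coeff_comp_X_add_X_sq (P : ℚ[X]) (n : ℕ) (hn : 1 ≤ n) :
    (P.comp (X + X ^ 2)).coeff (n - 1) =
      ∑ s ∈ Finset.range n, (s.choose (n - s - 1) : ℚ) * P.coeff s := by
  have key (s : ℕ) : ((X + X ^ 2 : ℚ[X]) ^ s).coeff (n - 1) =
      if s < n then (s.choose (n - s - 1) : ℚ) else 0 := by
    rw [show (X + X ^ 2 : ℚ[X]) = X * (1 + X) by ring, mul_pow, coeff_X_pow_mul',
      coeff_one_add_X_pow, show n - 1 - s = n - s - 1 by omega]
    exact if_congr (by omega) rfl rfl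
  rw [comp, eval₂_eq_sum_range' C (n := n + P.natDegree + 1) (by omega), finsetSum_coeff]
  simp_rw [coeff_C_mul, key]
  symm
  refine Finset.sum_subset_zero_on_sdiff (by intro; simp; omega) ?_ ?_
  · intro s hs
    simp only [Finset.mem_sdiff, Finset.mem_range] at hs
    simp [hs.2]
  · intro s hs
    rw [if_pos (Finset.mem_range.1 hs), mul_comm]

/-- The term `(-X) ^ n` in Binet's formula does not contribute below degree `n`. -/
theorem coeff_lucasPoly_pow_comp (n p : ℕ) (hn : 1 ≤ n) :
    (((lucasPoly n) ^ p).comp (X + X ^ 2)).coeff (n - 1) = ((n * p).choose (n - 1) : ℚ) := by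
  rw [pow_comp, lucasPoly_comp]
  have h : (X : ℚ[X]) ^ n ∣ ((1 + X) ^ n + (-X) ^ n) ^ p - ((1 + X) ^ n) ^ p := by
    refine dvd_trans ?_ (sub_dvd_pow_sub_pow _ _ p)
    rw [add_sub_cancel_left, neg_pow]
    exact dvd_mul_left _ _
  have := X_pow_dvd_iff.1 h (n - 1) (by omega)
  rw [coeff_sub, sub_eq_zero] at this
  rw [this, ← pow_mul, coeff_one_add_X_pow]

theorem fussCat_one (n p : ℕ) (hn : 1 ≤ n) :
    fussCat n p 1 = 1 / n * ((n * p).choose (n - 1) : ℚ) := by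
  obtain ⟨m, rfl⟩ : ∃ m, n = m + 1 := ⟨n - 1, by omega⟩
  have h : (((m + 1) * p + 1 : ℕ) : ℚ) * ((m + 1) * p).choose m =
      ((m + 1) * p + 1).choose (m + 1) * ((m + 1 : ℕ) : ℚ) := by
    exact_mod_cast Nat.add_one_mul_choose_eq ((m + 1) * p) m
  have h1 : (((m + 1) * p + 1 : ℕ) : ℚ) ≠ 0 := by positivity
  have h2 : ((m + 1 : ℕ) : ℚ) ≠ 0 := by positivity
  rw [fussCat, Nat.cast_one, Nat.add_sub_cancel, div_mul_eq_mul_div, div_mul_eq_mul_div, div_eq_div_iff h1 h2]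
  linear_combination -h

theorem sum_xiDist (n p s : ℕ) (hp : 1 ≤ p) (hs : s < n) :
    ∑ ν ∈ Finset.Nat.antidiagonalTuple p s, xiDist n p ν =
      1 / n * ((s.choose (n - s - 1) : ℚ) * (lucasPoly n ^ p).coeff s) := by
  have hn : (n : ℚ) ≠ 0 := by exact_mod_cast (by omega : n ≠ 0)
  rw [coeff_pow_antidiagonalTuple, Finset.mul_sum, Finset.mul_sum]
  refine Finset.sum_congr rfl fun ν hν => ?_
  rw [Finset.Nat.mem_antidiagonalTuple] at hν
  have hlt (i : Fin p) : ν i < n :=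
    ((Finset.single_le_sum (fun _ _ => Nat.zero_le _) (Finset.mem_univ i)).trans_eq hν).trans_lt hs
  have hprod : ∏ i, (lucasPoly n).coeff (ν i) =
      n ^ p * ∏ i, (1 / ((n : ℚ) - (ν i : ℚ))) * ((n - ν i).choose (ν i) : ℚ) := by
    rw [Finset.prod_congr rfl fun i _ => lucasPoly_coeff n (ν i) (hlt i), Finset.prod_mul_distrib]
    simp
  obtain ⟨q, rfl⟩ : ∃ q, p = q + 1 := ⟨p - 1, by omega⟩
  rw [xiDist, hν, hprod, Nat.add_sub_cancel, pow_succ]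
  field_simp

/-- `A_n(p,1) = Σ_{ν ∈ (ℤ≥0)^p, |ν| < n} ξ_n(ν)`; the inner sum over
`antidiagonalTuple p s` enumerates the `ν` with `|ν| = s`, and `s` ranges over
`0,…,n-1`. -/
theorem statement4 (n p : ℕ) (hn : 1 ≤ n) (hp : 1 ≤ p) :
    fussCat n p 1 =
      ∑ s ∈ Finset.range n, ∑ ν ∈ Finset.Nat.antidiagonalTuple p s, xiDist n p ν := by
  rw [fussCat_one n p hn, ← coeff_lucasPoly_pow_comp n p hn, coeff_comp_X_add_X_sq _ n hn,
    Finset.mul_sum]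
  exact Finset.sum_congr rfl fun s hs => (sum_xiDist n p s hp (Finset.mem_range.1 hs)).symm
end

section
/- Let n ∈ ℤ≥0, p ≥ 1, ℓ ≥ 1, and let ρ = (ρ_1 ≥ ρ_2 ≥ … ≥ ρ_{p+1} ≥ 0) be a partition of ℓ into at most p+1 parts. For μ = (μ_1,…,μ_p) ∈ (ℤ≥0)^p with |μ| := μ_1+⋯+μ_p ≤ n, define α_n(ρ,μ) := δ_{n,0} if ρ_1 = ℓ and μ_1 = n, and otherwise α_n(ρ,μ) := P_{p+1}(ρ_1+μ_1,…,ρ_p+μ_p, ρ_{p+1}+n−|μ|, ρ_1,…,ρ_{p+1}) · (1/(ℓ+|μ|−ρ_{p+1}))·C(ℓ+|μ|−ρ_{p+1}, n−|μ|) · Π_{i=1}^p (1/(ℓ+n−ρ_i−μ_i))·C(ℓ+n−ρ_i−μ_i, μ_i). Then A_n(p, pℓ) = Σ_{μ ∈ (ℤ≥0)^p, |μ| ≤ n} α_n(ρ,μ) (an identity of rational numbers; all denominators appearing in the 'otherwise' case are positive). -/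
/-!
Put `N = ℓ + n`, `μ_{p+1} = n - |μ|`, `x_i = ρ_i + μ_i`, `a_i = N - ρ_i` and
`b_i = N - x_i = a_i - μ_i`. Because `∑ x_i = N`, the polynomial factors as
`N * P_{p+1}(x, ρ) = ∑_j ρ_j b_j ∏_{i ≠ j} a_i` (`Ppoly_eq`), hence
`N * α_n(ρ, μ) = ∑_j ρ_j C(a_j - μ_j, μ_j) ∏_{i ≠ j} a_i / (a_i - μ_i) * C(a_i - μ_i, μ_i)`
(`alphaDist_eq`).

For each `j` the sum over `μ` is a convolution of Rothe–Hagen type. With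
`G_a = ∑ C(a - m, m) X^m` and `F_a = ∑ a / (a - m) * C(a - m, m) X^m`, one has
`F_a * G_b = G_{a+b}` (`fSer_mul_gSer`): both families satisfy `H_{a+1} = H_a + X * H_{a-1}`, and
`F_0 = 1`. Since `∑ a_i = p N + n`, the convolution equals `C(p N, n)`, independently of `j`, and
`∑ ρ_j = ℓ` gives `ℓ / N * C(p N, n)`, which is the Fuss–Catalan number `A_n(p, p ℓ)`.
-/

/- The key polynomial `P_k`, as a function on rational values. -/
def Ppoly (k : ℕ) (x y : Fin k → ℚ) : ℚ :=
  ∑ S : Finset (Fin k),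
    if S = Finset.univ then (-1 : ℚ)^k * (1 - (k : ℚ)) * ∏ i : Fin k, y i
    else (-1 : ℚ)^S.card * (∏ i ∈ S, y i) *
      (∑ i : Fin k, ((if i ∈ S then (1:ℚ) else 0) - (S.card : ℚ)) * x i) *
      (∑ i : Fin k, x i)^(k - S.card - 1)

/- `α_n(ρ,μ)` for a partition `ρ` of `ℓ` into at most `p+1` parts and
`μ ∈ (ℤ≥0)^p` with `|μ| ≤ n`. -/
noncomputable def alphaDist (n p ℓ : ℕ) (hp : 1 ≤ p) (ρ : Fin (p + 1) → ℕ)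
    (μ : Fin p → ℕ) : ℚ :=
  if ρ 0 = ℓ ∧ μ ⟨0, hp⟩ = n then (if n = 0 then 1 else 0)
  else
    Ppoly (p + 1)
      (Fin.snoc (fun i : Fin p => (ρ i.castSucc : ℚ) + (μ i : ℚ))
        ((ρ (Fin.last p) : ℚ) + (n : ℚ) - ∑ i, (μ i : ℚ)))
      (fun i => (ρ i : ℚ)) *
    ((1 / ((ℓ : ℚ) + (∑ i, (μ i : ℚ)) - (ρ (Fin.last p) : ℚ))) *
      ((ℓ + (∑ i, μ i) - ρ (Fin.last p)).choose (n - ∑ i, μ i) : ℚ)) *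
    ∏ i : Fin p,
      (1 / ((ℓ : ℚ) + (n : ℚ) - (ρ i.castSucc : ℚ) - (μ i : ℚ))) *
        ((ℓ + n - ρ i.castSucc - μ i).choose (μ i) : ℚ)

open Finset

/-! ### Two families of power series -/

/-- The power series `G_a = ∑ C(a - m, m) X^m` for an integer `a`. The binomials are the polynomial
ones (`Ring.choose`), so that the recurrence in `a` holds for all integers without exception. -/
noncomputable def gSer (a : ℤ) : PowerSeries ℤ :=
  PowerSeries.mk fun m => Ring.choose (a - m) m

/-- The power series `F_a = ∑ a / (a - m) * C(a - m, m) X^m`, written without division through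
`a / (a - m) * C(a - m, m) = C(a - m, m) + C(a - m - 1, m - 1)`; see `coeff_fSer`. -/
noncomputable def fSer (a : ℤ) : PowerSeries ℤ :=
  gSer a + PowerSeries.X * gSer (a - 2)

lemma gSer_succ (a : ℤ) : gSer (a + 1) = gSer a + PowerSeries.X * gSer (a - 1) := by
  ext (_ | m)
  · simp [gSer]
  · have h := Ring.choose_succ_succ (a - 1 - m) m
    simp only [gSer, map_add, PowerSeries.coeff_succ_X_mul, PowerSeries.coeff_mk]
    push_cast
    rw [show a + 1 - ((m : ℤ) + 1) = a - 1 - m + 1 by ring, h, add_comm]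
    congr 2
    ring

lemma fSer_succ (a : ℤ) : fSer (a + 1) = fSer a + PowerSeries.X * fSer (a - 1) := by
  simp only [fSer]
  rw [gSer_succ a, show a + 1 - 2 = (a - 2) + 1 by ring, gSer_succ (a - 2),
    show a - 1 - 2 = a - 2 - 1 by ring]
  ring

lemma fSer_zero : fSer 0 = 1 := by
  ext (_ | m)
  · simp [fSer, gSer]
  · simp only [fSer, gSer, map_add, PowerSeries.coeff_succ_X_mul, PowerSeries.coeff_mk]
    rw [show (0 : ℤ) - ((m + 1 : ℕ) : ℤ) = -((m + 1 : ℕ) : ℤ) by ring,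
      show (0 : ℤ) - 2 - (m : ℤ) = -((m + 2 : ℕ) : ℤ) by push_cast; ring,
      Ring.choose_neg, Ring.choose_neg,
      show ((m + 1 : ℕ) : ℤ) + ((m + 1 : ℕ) : ℤ) - 1 = ((2 * m + 1 : ℕ) : ℤ) by push_cast; ring,
      show ((m + 2 : ℕ) : ℤ) + (m : ℤ) - 1 = ((2 * m + 1 : ℕ) : ℤ) by push_cast; ring,
      Ring.choose_natCast, Ring.choose_natCast,
      Nat.choose_symm_of_eq_add (show 2 * m + 1 = (m + 1) + m by ring)]
    simp [PowerSeries.coeff_one, Int.negOnePow_succ]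

/-- A family of power series with this recurrence is determined by its member at `0`: if `X ^ n`
divides every `D a`, then consecutive members agree modulo `X ^ (n + 1)`, so that `X ^ (n + 1)`
divides all of them as well. -/
lemma eq_zero_of_recurrence (D : ℤ → PowerSeries ℤ) (h0 : D 0 = 0)
    (hD : ∀ a, D (a + 1) = D a + PowerSeries.X * D (a - 1)) (a : ℤ) : D a = 0 := by
  have key : ∀ n : ℕ, ∀ a, (PowerSeries.X : PowerSeries ℤ) ^ n ∣ D a := by
    intro n
    induction n with
    | zero => simp
    | succ n ih =>
      have step (a : ℤ) : (PowerSeries.X : PowerSeries ℤ) ^ (n + 1) ∣ PowerSeries.X * D a := by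
        rw [pow_succ']
        exact mul_dvd_mul_left _ (ih a)
      intro a
      induction a with
      | zero => simp [h0]
      | succ i hi =>
        rw [hD]
        exact dvd_add hi (step _)
      | pred i hi =>
        have := hD (-(i : ℤ) - 1)
        rw [sub_add_cancel] at this
        rw [eq_sub_of_add_eq this.symm]
        exact dvd_sub hi (step _)
  ext m
  exact (PowerSeries.X_pow_dvd_iff.1 (key (m + 1) a)) m (Nat.lt_succ_self m)

/-- The Rothe–Hagen convolution identity, in generating-function form. Both sides satisfy the same
recurrence in `a`. -/
lemma fSer_mul_gSer (a b : ℤ) : fSer a * gSer b = gSer (a + b) := by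
  rw [← sub_eq_zero]
  refine eq_zero_of_recurrence (fun a => fSer a * gSer b - gSer (a + b)) ?_ ?_ a
  · simp [fSer_zero]
  · intro a
    rw [fSer_succ, show a + 1 + b = a + b + 1 by ring, gSer_succ,
      show a + b - 1 = a - 1 + b by ring]
    ring

lemma prod_fSer_mul_gSer {ι : Type*} (s : Finset ι) (a : ι → ℤ) (b : ℤ) :
    (∏ i ∈ s, fSer (a i)) * gSer b = gSer (∑ i ∈ s, a i + b) := by
  classical
  induction s using Finset.induction_on with
  | empty => simp
  | insert i s hi ih => rw [prod_insert hi, mul_assoc, ih, fSer_mul_gSer, sum_insert hi, add_assoc]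

/-! ### Coefficients at natural numbers and of products -/

lemma coeff_gSer (b m : ℕ) : PowerSeries.coeff m (gSer ((b + m : ℕ) : ℤ)) = (b.choose m : ℤ) := by
  simp only [gSer, PowerSeries.coeff_mk]
  rw [← Ring.choose_natCast]
  push_cast
  simp

lemma coeff_fSer (b m : ℕ) (hb : 0 < b) :
    ((PowerSeries.coeff m (fSer ((b + m : ℕ) : ℤ)) : ℤ) : ℚ) =
      ((b + m : ℕ) : ℚ) * (1 / (b : ℚ) * (b.choose m : ℚ)) := by
  rw [fSer, map_add, coeff_gSer]
  obtain ⟨c, rfl⟩ : ∃ c, b = c + 1 := ⟨b - 1, by omega⟩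
  have hc : ((c : ℚ) + 1) ≠ 0 := by positivity
  cases m with
  | zero => simp; field_simp
  | succ m =>
    rw [PowerSeries.coeff_succ_X_mul,
      show ((c + 1 + (m + 1) : ℕ) : ℤ) - 2 = ((c + m : ℕ) : ℤ) by push_cast; ring, coeff_gSer]
    have h : ((c : ℚ) + 1) * c.choose m = (c + 1).choose (m + 1) * ((m : ℚ) + 1) := by
      exact_mod_cast Nat.add_one_mul_choose_eq c m
    push_cast
    field_simp
    linear_combination h

lemma coeff_prod_fin (p s : ℕ) (H : Fin p → PowerSeries ℤ) :
    PowerSeries.coeff s (∏ i, H i) =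
      ∑ μ ∈ Finset.Nat.antidiagonalTuple p s, ∏ i, PowerSeries.coeff (μ i) (H i) := by
  rw [PowerSeries.coeff_prod]
  refine Finset.sum_bij' (fun l _ => (l : Fin p → ℕ)) (fun μ _ => Finsupp.equivFunOnFinite.symm μ)
    ?_ ?_ ?_ ?_ ?_
  · intro l hl
    simpa [Finset.Nat.mem_antidiagonalTuple] using hl
  · intro l hl
    simpa [Finset.Nat.mem_antidiagonalTuple] using hl
  · intro l hl; ext; simp
  · intro l hl; ext; simp
  · intro l hl; rfl

lemma coeff_prod_snoc (p n : ℕ) (H : Fin (p + 1) → PowerSeries ℤ) :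
    PowerSeries.coeff n (∏ i, H i) =
      ∑ s ∈ range (n + 1), ∑ μ ∈ Finset.Nat.antidiagonalTuple p s,
        (∏ i, PowerSeries.coeff (μ i) (H i.castSucc)) *
          PowerSeries.coeff (n - s) (H (Fin.last p)) := by
  rw [Fin.prod_univ_castSucc, PowerSeries.coeff_mul,
    Finset.Nat.sum_antidiagonal_eq_sum_range_succ
      (fun i j => PowerSeries.coeff i (∏ i : Fin p, H i.castSucc) *
        PowerSeries.coeff j (H (Fin.last p)))]
  simp only [coeff_prod_fin, sum_mul]

/-! ### The polynomial `P_k` -/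

/-- Since `∑ i, x i = N`, the linear factor of the `S`-summand of `Ppoly` is
`-∑ j ∈ S, (N - x j)`, also for `S = univ`. Exchanging the sums over `S` and `j ∈ S` gives the
expansion of `∏ i ≠ j, (N - y i)`. -/
lemma Ppoly_eq (k : ℕ) (x y : Fin k → ℚ) (N : ℚ) (hx : ∑ i, x i = N) :
    N * Ppoly k x y = ∑ j, y j * (N - x j) * ∏ i ∈ univ.erase j, (N - y i) := by
  have h1 (j : Fin k) : -(y j * ∏ i ∈ univ.erase j, (N - y i)) =
      ∑ S : Finset (Fin k), if j ∈ S then (-1) ^ S.card * (∏ i ∈ S, y i) * N ^ (k - S.card)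
        else 0 := by
    -- The zero at `j` keeps exactly the subsets `S` containing `j`.
    have h := Fintype.prod_add (fun i => -y i) (fun i => if i = j then 0 else N)
    rw [← mul_prod_erase univ _ (mem_univ j)] at h
    rw [prod_congr (g := fun i => N - y i) rfl (by
      intro i hi; rw [if_neg (ne_of_mem_erase hi)]; ring)] at h
    simp only [if_true, add_zero, neg_mul] at h
    rw [h]
    refine sum_congr rfl fun S _ => ?_
    split_ifs with hj
    · rw [prod_congr (s₁ := Sᶜ) (g := fun _ => N) rfl (by
        intro i hi
        rw [if_neg]
        rintro rfl
        exact (mem_compl.1 hi) hj), prod_const, card_compl, Fintype.card_fin, prod_neg]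
    · rw [prod_eq_zero (i := j) (mem_compl.2 hj) (by simp), mul_zero]
  have h2 : ∑ j, y j * (N - x j) * ∏ i ∈ univ.erase j, (N - y i) =
      ∑ S : Finset (Fin k), ∑ j, (x j - N) * if j ∈ S then
        (-1) ^ S.card * (∏ i ∈ S, y i) * N ^ (k - S.card) else 0 := by
    rw [sum_comm]
    refine sum_congr rfl fun j _ => ?_
    rw [← mul_sum, ← h1]
    ring
  rw [h2, Ppoly, mul_sum]
  refine sum_congr rfl fun S _ => ?_
  have h3 : (∑ j, (x j - N) * if j ∈ S then
        (-1) ^ S.card * (∏ i ∈ S, y i) * N ^ (k - S.card) else 0) =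
      (∑ j ∈ S, x j - S.card * N) * ((-1) ^ S.card * (∏ i ∈ S, y i) * N ^ (k - S.card)) := by
    simp only [mul_ite, mul_zero, sum_ite_mem, univ_inter, ← sum_mul, sum_sub_distrib, sum_const,
      nsmul_eq_mul]
  rw [h3]
  split_ifs with hS
  · subst hS
    simp only [card_univ, Fintype.card_fin, hx, Nat.sub_self, pow_zero]
    ring
  · have hc : S.card < k := by
      simpa using (card_lt_univ_of_notMem (s := S) (by
        simpa [eq_univ_iff_forall] using hS : ∃ i, i ∉ S).choose_spec)
    have h4 : ∑ i : Fin k, ((if i ∈ S then (1:ℚ) else 0) - (S.card : ℚ)) * x i =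
        ∑ j ∈ S, x j - S.card * N := by
      simp [sub_mul, sum_sub_distrib, ← mul_sum, hx]
    rw [h4, hx, show k - S.card = k - S.card - 1 + 1 by omega, pow_succ]
    simp only [Nat.add_sub_cancel]
    ring

/-! ### The summands `α_n(ρ, μ)` as coefficients -/

/-- The `i`-th factor of the `j`-th product: `G_{a_j}` when `i = j` and `F_{a_i}` otherwise. -/
noncomputable def mixedSer {k : ℕ} (a : Fin k → ℕ) (j i : Fin k) : PowerSeries ℤ :=
  if i = j then gSer (a i) else fSer (a i)

lemma prod_mixedSer {k : ℕ} (a : Fin k → ℕ) (j : Fin k) :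
    ∏ i, mixedSer a j i = gSer ((∑ i, a i : ℕ) : ℤ) := by
  rw [← prod_erase_mul univ _ (mem_univ j),
    prod_congr (g := fun i => fSer ((a i : ℕ) : ℤ)) rfl (by
      intro i hi; rw [mixedSer, if_neg (ne_of_mem_erase hi)]),
    mixedSer, if_pos rfl, prod_fSer_mul_gSer, sum_erase_add _ _ (mem_univ j)]
  push_cast
  rfl

lemma prod_coeff_mixedSer {k : ℕ} (a m : Fin k → ℕ) (j : Fin k) :
    ∏ i, PowerSeries.coeff (m i) (mixedSer a j i) =
      PowerSeries.coeff (m j) (gSer (a j)) *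
        ∏ i ∈ univ.erase j, PowerSeries.coeff (m i) (fSer (a i)) := by
  rw [← mul_prod_erase univ _ (mem_univ j), mixedSer, if_pos rfl]
  congr 1
  refine prod_congr rfl fun i hi => ?_
  rw [mixedSer, if_neg (ne_of_mem_erase hi)]

/-- Each `α_n(ρ, μ)` is, up to the factor `ℓ + n`, the `ρ`-weighted sum over `j` of the
`μ`-contribution to the coefficient of `X ^ n` in `∏ i, mixedSer a j i`, where `a i = ℓ + n - ρ i`
and the last exponent is `n - |μ|`. The exceptional case of the definition is covered too: there
only `j = 0` has `ρ j ≠ 0`, and the vanishing denominator does not occur in that term. -/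
lemma alphaDist_eq (n p ℓ : ℕ) (hp : 1 ≤ p) (hl : 1 ≤ ℓ) (ρ : Fin (p + 1) → ℕ)
    (hmono : ∀ i j : Fin (p + 1), i ≤ j → ρ j ≤ ρ i) (hsum : ∑ i, ρ i = ℓ)
    (μ : Fin p → ℕ) (hμ : ∑ i, μ i ≤ n) :
    ((ℓ + n : ℕ) : ℚ) * alphaDist n p ℓ hp ρ μ =
      ∑ j, (ρ j : ℚ) *
        (((∏ i, PowerSeries.coeff (μ i) (mixedSer (fun i => ℓ + n - ρ i) j i.castSucc)) *
          PowerSeries.coeff (n - ∑ i, μ i)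
            (mixedSer (fun i => ℓ + n - ρ i) j (Fin.last p)) : ℤ) : ℚ) := by
  -- `m` extends `μ` to a composition of `n` into `p + 1` parts.
  obtain ⟨m, hmdef⟩ : ∃ m : Fin (p + 1) → ℕ, m = Fin.snoc μ (n - ∑ i, μ i) := ⟨_, rfl⟩
  have hmc (i : Fin p) : m i.castSucc = μ i := by simp [hmdef]
  have hml : m (Fin.last p) = n - ∑ i, μ i := by simp [hmdef]
  have hmsum : ∑ i, m i = n := by
    rw [Fin.sum_univ_castSucc, hml]
    simp only [hmc]
    omega
  have hρle (i) : ρ i ≤ ℓ := hsum ▸ single_le_sum (f := ρ) (fun _ _ => Nat.zero_le _) (mem_univ i)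
  have hmle (i) : m i ≤ n := hmsum ▸ single_le_sum (f := m) (fun _ _ => Nat.zero_le _) (mem_univ i)
  have hprod (j : Fin (p + 1)) :
      (∏ i, PowerSeries.coeff (μ i) (mixedSer (fun i => ℓ + n - ρ i) j i.castSucc)) *
          PowerSeries.coeff (n - ∑ i, μ i) (mixedSer (fun i => ℓ + n - ρ i) j (Fin.last p)) =
      PowerSeries.coeff (m j) (gSer ((ℓ + n - ρ j : ℕ) : ℤ)) *
        ∏ i ∈ univ.erase j, PowerSeries.coeff (m i) (fSer ((ℓ + n - ρ i : ℕ) : ℤ)) := by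
    rw [← prod_coeff_mixedSer (fun i => ℓ + n - ρ i) m j, Fin.prod_univ_castSucc, hml]
    simp only [hmc]
  simp only [hprod]
  have h00 : (⟨0, hp⟩ : Fin p).castSucc = 0 := rfl
  by_cases hdeg : ρ 0 = ℓ ∧ μ ⟨0, hp⟩ = n
  · obtain ⟨hρ0, hμ0⟩ := hdeg
    have hm0 : m 0 = n := by rw [← h00, hmc, hμ0]
    have hρz (i) (hi : i ≠ 0) : ρ i = 0 := by
      have h := add_sum_erase univ ρ (mem_univ 0)
      have h' : ρ i ≤ ∑ i ∈ univ.erase 0, ρ i :=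
        single_le_sum (f := ρ) (fun _ _ => Nat.zero_le _) (mem_erase.2 ⟨hi, mem_univ i⟩)
      omega
    have hmz (i) (hi : i ≠ 0) : m i = 0 := by
      have h := add_sum_erase univ m (mem_univ 0)
      have h' : m i ≤ ∑ i ∈ univ.erase 0, m i :=
        single_le_sum (f := m) (fun _ _ => Nat.zero_le _) (mem_erase.2 ⟨hi, mem_univ i⟩)
      omega
    rw [sum_eq_single 0 (fun i _ hi => by rw [hρz i hi]; simp) (by simp), alphaDist,
      if_pos ⟨hρ0, hμ0⟩, hρ0, hm0, show ℓ + n - ℓ = 0 + n by omega, coeff_gSer,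
      prod_eq_one (by
        intro i hi
        rw [hmz i (ne_of_mem_erase hi)]
        simp [fSer, gSer])]
    cases n <;> simp
  -- `b i` is the `i`-th denominator; by monotonicity of `ρ` it can vanish only at `i = 0`.
  · obtain ⟨b, hb⟩ : ∃ b : Fin (p + 1) → ℕ, b = fun i => ℓ + n - ρ i - m i := ⟨_, rfl⟩
    have hbm (i) : ℓ + n - ρ i = b i + m i := by
      have := hρle i; have := hmle i; rw [hb]; dsimp only; omega
    have hbq (i) : (ℓ : ℚ) + n - ρ i - m i = b i := by
      have h : ℓ + n = b i + m i + ρ i := by have := hbm i; have := hρle i; omega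
      have h' : (ℓ : ℚ) + n = b i + m i + ρ i := by exact_mod_cast h
      rw [h']; ring
    have hbpos (i) : 0 < b i := by
      rw [Nat.pos_iff_ne_zero]
      intro h
      have h1 := hbm i
      have h2 := hρle i
      have h3 := hmle i
      have h4 : ρ i = ℓ := by omega
      by_cases hi : i = 0
      · subst hi
        exact hdeg ⟨h4, by rw [← hmc, h00]; omega⟩
      · have h5 := hmono 0 i (Fin.zero_le i)
        have h := add_sum_erase univ ρ (mem_univ 0)
        have h' : ρ i ≤ ∑ i ∈ univ.erase 0, ρ i :=
          single_le_sum (f := ρ) (fun _ _ => Nat.zero_le _) (mem_erase.2 ⟨hi, mem_univ i⟩)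
        omega
    have hμq : ((n - ∑ i, μ i : ℕ) : ℚ) = n - ∑ i, (μ i : ℚ) := by
      rw [Nat.cast_sub hμ]; push_cast; rfl
    have hx : (Fin.snoc (fun i : Fin p => (ρ i.castSucc : ℚ) + (μ i : ℚ))
        ((ρ (Fin.last p) : ℚ) + (n : ℚ) - ∑ i, (μ i : ℚ)) : Fin (p + 1) → ℚ) =
        fun i => (ρ i : ℚ) + m i := by
      ext i
      refine Fin.lastCases ?_ (fun i => ?_) i
      · rw [Fin.snoc_last, hml, hμq]; ring
      · rw [Fin.snoc_castSucc, hmc]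
    have hα : alphaDist n p ℓ hp ρ μ =
        Ppoly (p + 1) (fun i => (ρ i : ℚ) + m i) (fun i => (ρ i : ℚ)) *
          ∏ i, (1 / (b i : ℚ) * ((b i).choose (m i) : ℚ)) := by
      rw [alphaDist, if_neg hdeg, hx, Fin.prod_univ_castSucc, mul_assoc]
      congr 1
      rw [mul_comm]
      congr 1
      · refine prod_congr rfl fun i _ => ?_
        rw [← hbq, hb]
        simp only [hmc]
      · rw [← hbq, hb, hml, hμq]
        dsimp only
        rw [hml]
        congr 2
        · ring
        · congr 1
          have := hρle (Fin.last p)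
          omega
    rw [hα, ← mul_assoc, Ppoly_eq _ _ _ ((ℓ + n : ℕ) : ℚ) (by
      rw [sum_add_distrib]; exact_mod_cast congrArg₂ (· + ·) hsum hmsum), sum_mul]
    refine sum_congr rfl fun j _ => ?_
    push_cast
    simp only [hbm, coeff_gSer]
    rw [prod_congr rfl fun i _ => coeff_fSer (b i) (m i) (hbpos i),
      prod_mul_distrib (f := fun i => ((b i + m i : ℕ) : ℚ)),
      ← mul_prod_erase univ (fun i => (1 / (b i : ℚ) * ((b i).choose (m i) : ℚ))) (mem_univ j),
      prod_congr (s₁ := univ.erase j) (f := fun i => (ℓ : ℚ) + n - ρ i)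
        (g := fun i => ((b i + m i : ℕ) : ℚ)) rfl
        (fun i _ => by push_cast; rw [← hbq]; ring),
      show (ℓ : ℚ) + n - (ρ j + m j) = b j by rw [← hbq]; ring]
    have hbj : (b j : ℚ) ≠ 0 := by exact_mod_cast (hbpos j).ne'
    push_cast
    field_simp

/-- `A_n(p, pℓ) = Σ_{μ ∈ (ℤ≥0)^p, |μ| ≤ n} α_n(ρ,μ)`; the inner sum over
`antidiagonalTuple p s` enumerates the `μ` with `|μ| = s`, `s = 0,…,n`. -/
theorem statement5 (n p ℓ : ℕ) (hp : 1 ≤ p) (hl : 1 ≤ ℓ) (ρ : Fin (p + 1) → ℕ)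
    (hmono : ∀ i j : Fin (p + 1), i ≤ j → ρ j ≤ ρ i) (hsum : ∑ i, ρ i = ℓ) :
    fussCat n p (p * ℓ) =
      ∑ s ∈ Finset.range (n + 1), ∑ μ ∈ Finset.Nat.antidiagonalTuple p s,
        alphaDist n p ℓ hp ρ μ := by
  have hN : ((ℓ + n : ℕ) : ℚ) ≠ 0 := by
    have : ℓ + n ≠ 0 := by omega
    exact_mod_cast this
  have hp0 : (p : ℚ) ≠ 0 := by
    have : p ≠ 0 := by omega
    exact_mod_cast this
  have hρle (i) : ρ i ≤ ℓ := hsum ▸ single_le_sum (f := ρ) (fun _ _ => Nat.zero_le _) (mem_univ i)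
  have ha : ∑ i, (ℓ + n - ρ i) = p * (ℓ + n) + n := by
    have h : ∑ i, (ℓ + n - ρ i) + ∑ i, ρ i = (p + 1) * (ℓ + n) := by
      rw [← sum_add_distrib, sum_congr rfl fun i _ =>
        Nat.sub_add_cancel ((hρle i).trans (Nat.le_add_right ℓ n))]
      simp
    rw [hsum] at h
    linarith
  -- The coefficient does not depend on `j`, so the weights `ρ j` simply add up to `ℓ`.
  have hj (j : Fin (p + 1)) : ∑ s ∈ range (n + 1), ∑ μ ∈ Finset.Nat.antidiagonalTuple p s,
      (∏ i, PowerSeries.coeff (μ i) (mixedSer (fun i => ℓ + n - ρ i) j i.castSucc)) *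
          PowerSeries.coeff (n - s) (mixedSer (fun i => ℓ + n - ρ i) j (Fin.last p)) =
      ((p * (ℓ + n)).choose n : ℤ) := by
    rw [← coeff_prod_snoc, prod_mixedSer, ha, coeff_gSer]
  have key : ((ℓ + n : ℕ) : ℚ) * ∑ s ∈ range (n + 1), ∑ μ ∈ Finset.Nat.antidiagonalTuple p s,
      alphaDist n p ℓ hp ρ μ = ℓ * ((p * (ℓ + n)).choose n : ℚ) := by
    have h : ((ℓ + n : ℕ) : ℚ) * ∑ s ∈ range (n + 1), ∑ μ ∈ Finset.Nat.antidiagonalTuple p s,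
        alphaDist n p ℓ hp ρ μ =
        ∑ j, (ρ j : ℚ) * ((∑ s ∈ range (n + 1), ∑ μ ∈ Finset.Nat.antidiagonalTuple p s,
          (∏ i, PowerSeries.coeff (μ i) (mixedSer (fun i => ℓ + n - ρ i) j i.castSucc)) *
          PowerSeries.coeff (n - s) (mixedSer (fun i => ℓ + n - ρ i) j (Fin.last p)) : ℤ) : ℚ) := by
      simp only [Int.cast_sum, mul_sum]
      rw [sum_comm]
      refine sum_congr rfl fun s hs => ?_
      rw [sum_comm]
      refine sum_congr rfl fun μ hμ => ?_
      rw [Finset.Nat.mem_antidiagonalTuple] at hμ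
      subst hμ
      exact alphaDist_eq n p ℓ hp hl ρ hmono hsum μ (Nat.lt_succ_iff.1 (mem_range.1 hs))
    rw [h]
    simp only [hj]
    rw [← sum_mul, ← hsum]
    push_cast
    rfl
  rw [fussCat, show n * p + p * ℓ = p * (ℓ + n) by ring]
  refine mul_left_cancel₀ hN ?_
  rw [key]
  push_cast at hN ⊢
  field_simp
end

section
/- Let n ≥ 3 and let λ = (λ_1 ≥ λ_2 ≥ λ_3 ≥ 0) be a partition of n into at most 3 parts. If λ_3 = 0 then |Tri_n^λ| = 0. Otherwise |Tri_n^λ| = (o(λ)·n·(n−2)) / (3·(n−λ_1−1)(n−λ_2−1)(n−λ_3−1)) · C(n−λ_1−1, λ_1−1)·C(n−λ_2−1, λ_2−1)·C(n−λ_3−1, λ_3−1), where o(λ) is the number of distinct permutations of the triple (λ_1,λ_2,λ_3) (an identity of rational numbers; each factor n−λ_i−1 is positive when λ_3 ≥ 1). -/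
/-!
Number the vertices of the polygon `0, …, n - 1` and take the side `(0, n - 1)` as the base. Removing
the triangle on the base leaves two smaller triangulated polygons, which turns triangulations into
binary trees with `n - 2` nodes: `chords` is the map from trees to families of chords, it is
injective (`chords_injective`), and every non-crossing family of the right cardinality is in its
image (`exists_tree`). A proper 3-colouring is determined by the two distinct colours `c`, `d` of the
ends of the base (`ProperOn.sum_eq`, `exists_properOn`): the apex of the base triangle has the third
colour, and so on recursively. Hence the colour class sizes are `colourCount t c d`, and permuting
the colours shows that a triangulation has type `λ` exactly when `colourCount t 0 1` is a
permutation of `λ` (`hasType_iff`, `exists_colourCount_iff`).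

Let `Pᵢ` be the generating function of the trees whose base ends have the two colours other than
`i`, where `xⱼ` marks the interior vertices of colour `j`. The decomposition at the apex gives
`P₀ = 1 + x₀ P₁ P₂`, `P₁ = 1 + x₁ P₀ P₂`, `P₂ = 1 + x₂ P₀ P₁`. Lagrange–Good inversion predicts the
coefficients of `P₀^k₀ P₁^k₁ P₂^k₂`: they are the numbers `goodCoeff`. This is verified directly in
`coeff_system`. Multiplying the first equation by `P₀^k₀ P₁^k₁ P₂^k₂` yields a recursion for the
coefficients, and Pascal's rule yields the same one for `goodCoeff` (`goodCoeff_succ₀`); the base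
case `k₀ = k₁ = k₂ = 0` is `goodCoeff_zero`, where the determinant in the definition of `goodCoeff`
makes everything cancel.

The coefficients of `P₂` have a closed form (`goodCoeff_closed`). It shows that the number of
triangulations whose colour class sizes are `μ` when the base ends have colours `0`, `1` is
`(n - 2) (n - 2 μ₂) ∏ᵢ C(n - μᵢ - 1, μᵢ - 1) / (n - μᵢ - 1)` (`card_colourCount`). The product is
symmetric, and over the `o(λ)` distinct permutations `μ` of `λ` the average of `μ₂` is `n / 3`
(`sum_orbit`), so that `n - 2 μ₂` contributes `o(λ) n / 3` in total. If `λ₃ = 0` there is no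
triangulation, since the base triangle uses all three colours (`colourCount_pos`).
-/


/- Combinatorial model of the regular convex `n`-gon with vertices `0,…,n-1` in
cyclic order. `arcLen n a b` is the number of steps from `a` forward to `b`. -/
def arcLen (n : ℕ) (a b : Fin n) : ℕ := (b.val + n - a.val) % n

/- `x` lies strictly inside the arc from `a` forward to `b`. -/
def StrictBtw (n : ℕ) (a x b : Fin n) : Prop :=
  0 < arcLen n a x ∧ arcLen n a x < arcLen n a b

/- A diagonal: a chord between two non-adjacent vertices. -/
def IsDiagonal (n : ℕ) (e : Sym2 (Fin n)) : Prop :=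
  ∃ a b : Fin n, e = s(a, b) ∧ 2 ≤ arcLen n a b ∧ arcLen n a b ≤ n - 2

/- Two chords cross: the endpoints of one strictly separate the endpoints of the
other on the circle. -/
def Crosses (n : ℕ) (e f : Sym2 (Fin n)) : Prop :=
  ∃ a b c d : Fin n, e = s(a, b) ∧ f = s(c, d) ∧ StrictBtw n a c b ∧ StrictBtw n b d a

/- A triangulation of the convex `n`-gon: `n - 3` pairwise non-crossing
diagonals. -/
structure Triangulation (n : ℕ) where
  diags : Finset (Sym2 (Fin n))
  card_diags : diags.card = n - 3
  diag_mem : ∀ e ∈ diags, IsDiagonal n e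
  noncross : ∀ e ∈ diags, ∀ f ∈ diags, ¬ Crosses n e f

/- A proper 3-coloring of the triangulation graph (sides of the polygon
together with the diagonals). -/
def Triangulation.Proper {n : ℕ} (T : Triangulation n) (ℓ : Fin n → Fin 3) : Prop :=
  ∀ a b : Fin n, (arcLen n a b = 1 ∨ s(a, b) ∈ T.diags) → ℓ a ≠ ℓ b

/- `T` has type `λ`: some proper 3-coloring has exactly `λ i` vertices of
color `i`. -/
def Triangulation.HasType {n : ℕ} (T : Triangulation n) (lam : Fin 3 → ℕ) : Prop :=
  ∃ ℓ : Fin n → Fin 3, T.Proper ℓ ∧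
    ∀ i : Fin 3, (Finset.univ.filter (fun v => ℓ v = i)).card = lam i

/- `o(λ)`: the number of distinct permutations of the triple `λ`. -/
def oCount (lam : Fin 3 → ℕ) : ℕ :=
  (Finset.univ.image (fun σ : Equiv.Perm (Fin 3) => lam ∘ σ)).card

/-! ### Lagrange–Good coefficients in three variables -/

/-- The binomial coefficient `[w^a] (1 + w)^N` for integers `N` and `a`; it vanishes for `a < 0`. -/
noncomputable def intChoose (N a : ℤ) : ℚ :=
  if a < 0 then 0 else ((Ring.choose N a.toNat : ℤ) : ℚ)

theorem intChoose_neg (N : ℤ) {a : ℤ} (h : a < 0) : intChoose N a = 0 := by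
  simp [intChoose, h]

theorem intChoose_natCast (N a : ℕ) : intChoose N a = (N.choose a : ℚ) := by
  simp only [intChoose, Int.toNat_natCast, Ring.choose_natCast]
  rw [if_neg (by omega)]
  simp

theorem intChoose_pascal (N a : ℤ) :
    intChoose (N + 1) a = intChoose N a + intChoose N (a - 1) := by
  rcases lt_trichotomy a 0 with h | h | h
  · rw [intChoose_neg _ h, intChoose_neg _ h, intChoose_neg _ (by omega), add_zero]
  · subst h
    simp [intChoose]
  · obtain ⟨b, rfl⟩ : ∃ b : ℕ, a = (b : ℤ) + 1 := ⟨(a - 1).toNat, by omega⟩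
    have e1 : ((b : ℤ) + 1).toNat = b + 1 := by omega
    have e2 : ((b : ℤ) + 1 - 1).toNat = b := by omega
    simp only [intChoose, e1, e2]
    rw [if_neg (by omega), if_neg (by omega), if_neg (by omega), Ring.choose_succ_succ]
    push_cast
    ring

/-- The absorption identity `C(N - 1, a - 1) = (a / N) C(N, a)`. -/
theorem intChoose_absorb (N a : ℕ) (hN : 0 < N) :
    intChoose ((N : ℤ) - 1) ((a : ℤ) - 1) = (a : ℚ) / N * intChoose N a := by
  have hN' : (N : ℚ) ≠ 0 := by positivity
  rcases Nat.eq_zero_or_pos a with rfl | ha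
  · rw [intChoose_neg _ (by simp)]
    simp
  · obtain ⟨M, rfl⟩ : ∃ M, N = M + 1 := ⟨N - 1, by omega⟩
    obtain ⟨b, rfl⟩ : ∃ b, a = b + 1 := ⟨a - 1, by omega⟩
    have e1 : ((M + 1 : ℕ) : ℤ) - 1 = (M : ℕ) := by push_cast; ring
    have e2 : ((b + 1 : ℕ) : ℤ) - 1 = (b : ℕ) := by push_cast; ring
    rw [e1, e2, intChoose_natCast, intChoose_natCast]
    have h := congrArg (Nat.cast : ℕ → ℚ) (Nat.add_one_mul_choose_eq M b)
    push_cast at h ⊢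
    field_simp
    push_cast at hN'
    linarith

/-- The Lagrange–Good coefficient
`[w^a] ∏ᵢ (1 + wᵢ)^(Nᵢ) · (1 - s₀s₁ - s₀s₂ - s₁s₂ - 2 s₀s₁s₂)`, where `sᵢ = wᵢ / (1 + wᵢ)` and
`Nᵢ = kᵢ + (sum of the two aⱼ with j ≠ i)`. The polynomial in the `sᵢ` is the determinant of the
matrix with diagonal entries `1` and off-diagonal entries `-sⱼ`. -/
noncomputable def goodCoeff (k₀ k₁ k₂ a₀ a₁ a₂ : ℤ) : ℚ :=
  intChoose (a₁ + a₂ + k₀) a₀ * intChoose (a₀ + a₂ + k₁) a₁ * intChoose (a₀ + a₁ + k₂) a₂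
  - intChoose (a₁ + a₂ + k₀ - 1) (a₀ - 1) * intChoose (a₀ + a₂ + k₁ - 1) (a₁ - 1) *
      intChoose (a₀ + a₁ + k₂) a₂
  - intChoose (a₁ + a₂ + k₀ - 1) (a₀ - 1) * intChoose (a₀ + a₂ + k₁) a₁ *
      intChoose (a₀ + a₁ + k₂ - 1) (a₂ - 1)
  - intChoose (a₁ + a₂ + k₀) a₀ * intChoose (a₀ + a₂ + k₁ - 1) (a₁ - 1) *
      intChoose (a₀ + a₁ + k₂ - 1) (a₂ - 1)
  - 2 * (intChoose (a₁ + a₂ + k₀ - 1) (a₀ - 1) * intChoose (a₀ + a₂ + k₁ - 1) (a₁ - 1) *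
      intChoose (a₀ + a₁ + k₂ - 1) (a₂ - 1))

theorem goodCoeff_swap₀₁ (k₀ k₁ k₂ a₀ a₁ a₂ : ℤ) :
    goodCoeff k₀ k₁ k₂ a₀ a₁ a₂ = goodCoeff k₁ k₀ k₂ a₁ a₀ a₂ := by
  simp only [goodCoeff]
  rw [add_comm a₁ a₀]
  ring

theorem goodCoeff_swap₀₂ (k₀ k₁ k₂ a₀ a₁ a₂ : ℤ) :
    goodCoeff k₀ k₁ k₂ a₀ a₁ a₂ = goodCoeff k₂ k₁ k₀ a₂ a₁ a₀ := by
  simp only [goodCoeff]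
  rw [add_comm a₁ a₀, add_comm a₂ a₀, add_comm a₂ a₁]
  ring

/-- Pascal's rule in the variable `w₀`: it mirrors `P₀ = 1 + x₀ P₁ P₂`. -/
theorem goodCoeff_succ₀ (k₀ k₁ k₂ a₀ a₁ a₂ : ℤ) :
    goodCoeff (k₀ + 1) k₁ k₂ a₀ a₁ a₂ =
      goodCoeff k₀ k₁ k₂ a₀ a₁ a₂ + goodCoeff k₀ (k₁ + 1) (k₂ + 1) (a₀ - 1) a₁ a₂ := by
  simp only [goodCoeff]
  have h1 := intChoose_pascal (a₁ + a₂ + k₀) a₀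
  have h2 := intChoose_pascal (a₁ + a₂ + k₀ - 1) (a₀ - 1)
  rw [show a₁ + a₂ + k₀ + 1 = a₁ + a₂ + (k₀ + 1) by ring] at h1
  rw [show a₁ + a₂ + k₀ - 1 + 1 = a₁ + a₂ + (k₀ + 1) - 1 by ring] at h2
  rw [h1, h2, show a₀ - 1 + a₂ + (k₁ + 1) = a₀ + a₂ + k₁ by ring,
    show a₀ - 1 + a₁ + (k₂ + 1) = a₀ + a₁ + k₂ by ring]
  ring

theorem goodCoeff_succ₁ (k₀ k₁ k₂ a₀ a₁ a₂ : ℤ) :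
    goodCoeff k₀ (k₁ + 1) k₂ a₀ a₁ a₂ =
      goodCoeff k₀ k₁ k₂ a₀ a₁ a₂ + goodCoeff (k₀ + 1) k₁ (k₂ + 1) a₀ (a₁ - 1) a₂ := by
  rw [goodCoeff_swap₀₁, goodCoeff_succ₀, goodCoeff_swap₀₁, goodCoeff_swap₀₁ k₁]

theorem goodCoeff_succ₂ (k₀ k₁ k₂ a₀ a₁ a₂ : ℤ) :
    goodCoeff k₀ k₁ (k₂ + 1) a₀ a₁ a₂ =
      goodCoeff k₀ k₁ k₂ a₀ a₁ a₂ + goodCoeff (k₀ + 1) (k₁ + 1) k₂ a₀ a₁ (a₂ - 1) := by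
  rw [goodCoeff_swap₀₂, goodCoeff_succ₀, goodCoeff_swap₀₂, goodCoeff_swap₀₂ k₂]

theorem goodCoeff_of_neg₀ (k₀ k₁ k₂ a₁ a₂ : ℤ) {a₀ : ℤ} (h : a₀ < 0) :
    goodCoeff k₀ k₁ k₂ a₀ a₁ a₂ = 0 := by
  simp [goodCoeff, intChoose_neg _ h, intChoose_neg _ (show a₀ - 1 < 0 by omega)]

theorem goodCoeff_of_neg₁ (k₀ k₁ k₂ a₀ a₂ : ℤ) {a₁ : ℤ} (h : a₁ < 0) :
    goodCoeff k₀ k₁ k₂ a₀ a₁ a₂ = 0 := by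
  rw [goodCoeff_swap₀₁, goodCoeff_of_neg₀ _ _ _ _ _ h]

theorem goodCoeff_of_neg₂ (k₀ k₁ k₂ a₀ a₁ : ℤ) {a₂ : ℤ} (h : a₂ < 0) :
    goodCoeff k₀ k₁ k₂ a₀ a₁ a₂ = 0 := by
  rw [goodCoeff_swap₀₂, goodCoeff_of_neg₀ _ _ _ _ _ h]

theorem goodCoeff_axis (a : ℕ) :
    goodCoeff 0 0 0 a 0 0 = if a = 0 then 1 else 0 := by
  have h0 : ∀ N : ℕ, intChoose N 0 = 1 := fun N => by
    have := intChoose_natCast N 0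
    simpa using this
  have h1 : ∀ N : ℤ, intChoose N (0 - 1) = 0 := fun N => intChoose_neg _ (by norm_num)
  have h2 := intChoose_natCast 0 a
  simp only [Nat.cast_zero] at h2
  simp only [goodCoeff, h1, add_zero, h0, h2]
  rcases Nat.eq_zero_or_pos a with rfl | ha
  · simp
  · simp [Nat.choose_eq_zero_of_lt ha, ha.ne']

/-- The determinant factor makes the coefficient of the constant function `1` trivial. -/
theorem goodCoeff_zero (a b c : ℕ) :
    goodCoeff 0 0 0 a b c = if a = 0 ∧ b = 0 ∧ c = 0 then 1 else 0 := by
  by_cases hbc : b + c = 0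
  · obtain ⟨rfl, rfl⟩ : b = 0 ∧ c = 0 := by omega
    simpa using goodCoeff_axis a
  by_cases hac : a + c = 0
  · obtain ⟨rfl, rfl⟩ : a = 0 ∧ c = 0 := by omega
    rw [goodCoeff_swap₀₁]
    simpa using goodCoeff_axis b
  by_cases hab : a + b = 0
  · obtain ⟨rfl, rfl⟩ : a = 0 ∧ b = 0 := by omega
    rw [goodCoeff_swap₀₂]
    simpa using goodCoeff_axis c
  rw [if_neg (by omega)]
  have h1 := intChoose_absorb (b + c) a (by omega)
  have h2 := intChoose_absorb (a + c) b (by omega)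
  have h3 := intChoose_absorb (a + b) c (by omega)
  have n1 : (b : ℚ) + c ≠ 0 := by exact_mod_cast hbc
  have n2 : (a : ℚ) + c ≠ 0 := by exact_mod_cast hac
  have n3 : (a : ℚ) + b ≠ 0 := by exact_mod_cast hab
  push_cast at h1 h2 h3
  simp only [goodCoeff, add_zero, h1, h2, h3]
  field_simp
  ring

/-- Closed form of the coefficients of `P₂`. -/
theorem goodCoeff_closed (a b c : ℕ) (hc : 1 ≤ c) :
    goodCoeff 0 0 1 a b c =
      ((a : ℚ) + b + c) * ((a : ℚ) + b + 2 - c) / ((b + c) * (a + c) * (a + b + 1)) *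
        ((b + c).choose a) * ((a + c).choose b) * ((a + b + 1).choose (c - 1)) := by
  have h1 := intChoose_absorb (b + c) a (by omega)
  have h2 := intChoose_absorb (a + c) b (by omega)
  have h3 := intChoose_absorb (a + b + 1) c (by omega)
  have n1 : (b : ℚ) + c ≠ 0 := by positivity
  have n2 : (a : ℚ) + c ≠ 0 := by positivity
  have n3 : (a : ℚ) + b + 1 ≠ 0 := by positivity
  have n4 : (c : ℚ) ≠ 0 := by positivity
  rw [intChoose_natCast] at h1 h2 h3
  have e1 := intChoose_natCast (b + c) a
  have e2 := intChoose_natCast (a + c) b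
  have e3 := intChoose_natCast (a + b + 1) c
  have e4 : (((a + b + 1).choose c : ℕ) : ℚ) =
      ((a : ℚ) + b + 2 - c) / c * ((a + b + 1).choose (c - 1) : ℕ) := by
    obtain ⟨d, rfl⟩ : ∃ d, c = d + 1 := ⟨c - 1, by omega⟩
    have h : (((a + b + 1).choose (d + 1) : ℕ) : ℚ) * (d + 1) =
        ((a + b + 1).choose d : ℕ) * ((a : ℚ) + b + 1 - d) := by
      rcases le_or_gt d (a + b + 1) with hd | hd
      · have := congrArg (Nat.cast : ℕ → ℚ) (Nat.choose_succ_right_eq (a + b + 1) d)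
        push_cast [Nat.cast_sub hd] at this
        linarith
      · rw [Nat.choose_eq_zero_of_lt hd, Nat.choose_eq_zero_of_lt (by omega)]
        simp
    push_cast at n4 ⊢
    field_simp
    linarith
  push_cast at h1 h2 h3 e1 e2 e3
  simp only [goodCoeff, add_zero, h1, h2, h3, e1, e2, e3, e4]
  field_simp
  ring

/-! ### The quadratic system and its solution -/

theorem coeff_coeff_step (s : Fin 3) {F G H : PowerSeries (MvPolynomial (Fin 3) ℚ)}
    (h : F = G + PowerSeries.X * (PowerSeries.C (MvPolynomial.X s) * H))
    (m : ℕ) (a : Fin 3 →₀ ℕ) (ha : a s ≤ m) :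
    MvPolynomial.coeff a (PowerSeries.coeff m F) = MvPolynomial.coeff a (PowerSeries.coeff m G) +
      if a s = 0 then 0 else
        MvPolynomial.coeff (a - Finsupp.single s 1) (PowerSeries.coeff (m - 1) H) := by
  rw [h, map_add, MvPolynomial.coeff_add]
  congr 1
  rcases m with _ | m
  · rw [if_pos (by omega)]
    simp
  · rw [PowerSeries.coeff_succ_X_mul, PowerSeries.coeff_C_mul, MvPolynomial.coeff_X_mul']
    simp only [Finsupp.mem_support_iff, Nat.add_sub_cancel]
    split_ifs <;> simp_all

/-- The monomials in a solution of the quadratic system have the Lagrange–Good coefficients: both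
sides obey the same recursion. The variable of the power series only records the degree. -/
theorem coeff_system {P₀ P₁ P₂ : PowerSeries (MvPolynomial (Fin 3) ℚ)}
    (h₀ : P₀ = 1 + PowerSeries.X * (PowerSeries.C (MvPolynomial.X 0) * (P₁ * P₂)))
    (h₁ : P₁ = 1 + PowerSeries.X * (PowerSeries.C (MvPolynomial.X 1) * (P₀ * P₂)))
    (h₂ : P₂ = 1 + PowerSeries.X * (PowerSeries.C (MvPolynomial.X 2) * (P₀ * P₁)))
    (m : ℕ) : ∀ (k₀ k₁ k₂ : ℕ) (a : Fin 3 →₀ ℕ), a 0 + a 1 + a 2 = m →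
      MvPolynomial.coeff a (PowerSeries.coeff m (P₀ ^ k₀ * P₁ ^ k₁ * P₂ ^ k₂)) =
        goodCoeff k₀ k₁ k₂ (a 0) (a 1) (a 2) := by
  induction m using Nat.strong_induction_on with
  | _ m ihm =>
  intro k₀ k₁ k₂
  induction hk : k₀ + k₁ + k₂ generalizing k₀ k₁ k₂ with
  | zero =>
    intro a ha
    obtain ⟨rfl, rfl, rfl⟩ : k₀ = 0 ∧ k₁ = 0 ∧ k₂ = 0 := by omega
    have hg := goodCoeff_zero (a 0) (a 1) (a 2)
    simp only [Nat.cast_zero, hg, pow_zero, mul_one, PowerSeries.coeff_one]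
    by_cases hm : m = 0
    · have : a = 0 := by
        ext i
        fin_cases i <;> simp <;> omega
      subst this
      simp [hm]
    · rw [if_neg hm, if_neg (by omega)]
      simp
  | succ K ih =>
    intro a ha
    rcases Nat.eq_zero_or_pos k₀ with hk₀ | hk₀
    · rcases Nat.eq_zero_or_pos k₁ with hk₁ | hk₁
      · obtain ⟨k, rfl⟩ : ∃ k, k₂ = k + 1 := ⟨k₂ - 1, by omega⟩
        have hF : P₀ ^ k₀ * P₁ ^ k₁ * P₂ ^ (k + 1) = P₀ ^ k₀ * P₁ ^ k₁ * P₂ ^ k +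
            PowerSeries.X * (PowerSeries.C (MvPolynomial.X 2) *
              (P₀ ^ (k₀ + 1) * P₁ ^ (k₁ + 1) * P₂ ^ k)) := by
          linear_combination (P₀ ^ k₀ * P₁ ^ k₁ * P₂ ^ k) * h₂
        rw [coeff_coeff_step 2 hF m a (by omega), ih k₀ k₁ k (by omega) a ha, Nat.cast_succ,
          goodCoeff_succ₂]
        congr 1
        split_ifs with h0
        · rw [goodCoeff_of_neg₂ _ _ _ _ _ (by omega)]
        · rw [ihm (m - 1) (by omega) _ _ _ _ (by simp; omega)]
          simp [Nat.cast_sub (show 1 ≤ a 2 by omega)]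
      · obtain ⟨k, rfl⟩ : ∃ k, k₁ = k + 1 := ⟨k₁ - 1, by omega⟩
        have hF : P₀ ^ k₀ * P₁ ^ (k + 1) * P₂ ^ k₂ = P₀ ^ k₀ * P₁ ^ k * P₂ ^ k₂ +
            PowerSeries.X * (PowerSeries.C (MvPolynomial.X 1) *
              (P₀ ^ (k₀ + 1) * P₁ ^ k * P₂ ^ (k₂ + 1))) := by
          linear_combination (P₀ ^ k₀ * P₁ ^ k * P₂ ^ k₂) * h₁
        rw [coeff_coeff_step 1 hF m a (by omega), ih k₀ k k₂ (by omega) a ha, Nat.cast_succ,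
          goodCoeff_succ₁]
        congr 1
        split_ifs with h0
        · rw [goodCoeff_of_neg₁ _ _ _ _ _ (by omega)]
        · rw [ihm (m - 1) (by omega) _ _ _ _ (by simp; omega)]
          simp [Nat.cast_sub (show 1 ≤ a 1 by omega)]
    · obtain ⟨k, rfl⟩ : ∃ k, k₀ = k + 1 := ⟨k₀ - 1, by omega⟩
      have hF : P₀ ^ (k + 1) * P₁ ^ k₁ * P₂ ^ k₂ = P₀ ^ k * P₁ ^ k₁ * P₂ ^ k₂ +
          PowerSeries.X * (PowerSeries.C (MvPolynomial.X 0) *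
            (P₀ ^ k * P₁ ^ (k₁ + 1) * P₂ ^ (k₂ + 1))) := by
        linear_combination (P₀ ^ k * P₁ ^ k₁ * P₂ ^ k₂) * h₀
      rw [coeff_coeff_step 0 hF m a (by omega), ih k k₁ k₂ (by omega) a ha, Nat.cast_succ,
        goodCoeff_succ₀]
      congr 1
      split_ifs with h0
      · rw [goodCoeff_of_neg₀ _ _ _ _ _ (by omega)]
      · rw [ihm (m - 1) (by omega) _ _ _ _ (by simp; omega)]
        simp [Nat.cast_sub (show 1 ≤ a 0 by omega)]

/-! ### Coloured binary trees -/

open BinaryTree in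
/-- The number of interior vertices of each colour in the triangulated polygon encoded by a binary
tree, when the endpoints of its base edge have the distinct colours `c` and `d`. The apex of the
base triangle then has the third colour, which is `-(c + d)` since `0 + 1 + 2 = 0` in `Fin 3`. -/
noncomputable def content : BinaryTree Unit → Fin 3 → Fin 3 → Fin 3 →₀ ℕ
  | .nil, _, _ => 0
  | .node _ l r, c, d =>
    Finsupp.single (-(c + d)) 1 + (content l c (-(c + d)) + content r (-(c + d)) d)

theorem content_degree (t : BinaryTree Unit) (c d : Fin 3) :
    content t c d 0 + content t c d 1 + content t c d 2 = t.numNodes := by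
  induction t generalizing c d with
  | nil => simp [content]
  | node _ l r ihl ihr =>
    have h1 := ihl c (-(c + d))
    have h2 := ihr (-(c + d)) d
    have h3 : ∀ e : Fin 3, (Finsupp.single e 1 : Fin 3 →₀ ℕ) 0 + (Finsupp.single e 1 : Fin 3 →₀ ℕ) 1
        + (Finsupp.single e 1 : Fin 3 →₀ ℕ) 2 = 1 := by
      intro e
      fin_cases e <;> simp
    have h4 := h3 (-(c + d))
    simp only [content, Finsupp.add_apply, BinaryTree.numNodes]
    omega

theorem content_perm (σ : Equiv.Perm (Fin 3)) (t : BinaryTree Unit) :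
    ∀ (c d : Fin 3), c ≠ d → ∀ i, content t (σ c) (σ d) (σ i) = content t c d i := by
  have hthird : ∀ (σ : Equiv.Perm (Fin 3)) (c d : Fin 3), c ≠ d →
      -(σ c + σ d) = σ (-(c + d)) := by decide
  have hne : ∀ c d : Fin 3, c ≠ d → c ≠ -(c + d) ∧ -(c + d) ≠ d := by decide
  induction t with
  | nil => simp [content]
  | node _ l r ihl ihr =>
    intro c d hcd i
    simp only [content, hthird σ c d hcd, Finsupp.add_apply, ihl c _ (hne c d hcd).1,
      ihr _ d (hne c d hcd).2]
    simp only [Finsupp.single_apply, σ.injective.eq_iff]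

open BinaryTree in
/-- The content enumerator of the binary trees with `m` nodes, for base colours `c` and `d`. -/
noncomputable def contentPoly (m : ℕ) (c d : Fin 3) : MvPolynomial (Fin 3) ℚ :=
  ∑ t ∈ treesOfNumNodesEq m, MvPolynomial.monomial (content t c d) 1

theorem contentPoly_zero (c d : Fin 3) : contentPoly 0 c d = 1 := by
  simp [contentPoly, content]

open BinaryTree in
theorem contentPoly_succ (m : ℕ) (c d : Fin 3) :
    contentPoly (m + 1) c d = MvPolynomial.X (-(c + d)) *
      ∑ ij ∈ Finset.HasAntidiagonal.antidiagonal m,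
        contentPoly ij.1 c (-(c + d)) * contentPoly ij.2 (-(c + d)) d := by
  rw [contentPoly, treesOfNumNodesEq_succ, Finset.sum_biUnion, Finset.mul_sum]
  · refine Finset.sum_congr rfl fun ij _ => ?_
    rw [Finset.sum_map, contentPoly, contentPoly, Finset.sum_mul_sum, Finset.sum_product,
      Finset.mul_sum]
    refine Finset.sum_congr rfl fun l _ => ?_
    rw [Finset.mul_sum]
    refine Finset.sum_congr rfl fun r _ => ?_
    simp only [MvPolynomial.X, MvPolynomial.monomial_mul, mul_one]
    rfl
  · intro ij _ kl _ hne
    refine Finset.disjoint_left.2 fun t ht ht' => hne ?_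
    simp only [Finset.mem_map, Finset.mem_product, mem_treesOfNumNodesEq] at ht ht'
    obtain ⟨⟨l, r⟩, ⟨h1, h2⟩, rfl⟩ := ht
    obtain ⟨⟨l', r'⟩, ⟨h3, h4⟩, h⟩ := ht'
    obtain ⟨rfl, rfl⟩ : l' = l ∧ r' = r := by simpa using h
    exact Prod.ext (h1.symm.trans h3) (h2.symm.trans h4)

/-- Mirroring the trees exchanges the two ends of the base. -/
theorem contentPoly_symm (m : ℕ) (c d : Fin 3) : contentPoly m c d = contentPoly m d c := by
  induction m using Nat.strong_induction_on generalizing c d with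
  | _ m ih =>
  rcases m with _ | m
  · simp [contentPoly_zero]
  · rw [contentPoly_succ, contentPoly_succ, ← Finset.Nat.sum_antidiagonal_swap, add_comm d c]
    congr 1
    refine Finset.sum_congr rfl fun ij hij => ?_
    rw [Finset.HasAntidiagonal.mem_antidiagonal] at hij
    simp only [Prod.fst_swap, Prod.snd_swap]
    rw [ih ij.2 (by omega) c, ih ij.1 (by omega) _ d, mul_comm]

/-- The generating function of `contentPoly`, with the number of nodes marked by the power series
variable. -/
noncomputable def contentSeries (c d : Fin 3) : PowerSeries (MvPolynomial (Fin 3) ℚ) :=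
  PowerSeries.mk fun m => contentPoly m c d

theorem contentSeries_symm (c d : Fin 3) : contentSeries c d = contentSeries d c := by
  simp only [contentSeries, contentPoly_symm _ c d]

/-- Decomposition at the apex of the base triangle, whose colour `e` is the third one when
`c ≠ d`. -/
theorem contentSeries_eq (c d e : Fin 3) (he : -(c + d) = e) :
    contentSeries c d = 1 + PowerSeries.X * (PowerSeries.C (MvPolynomial.X e) *
      (contentSeries c e * contentSeries e d)) := by
  subst he
  ext1 m
  rcases m with _ | m
  · simp [contentSeries, contentPoly_zero]
  · rw [map_add, PowerSeries.coeff_succ_X_mul, PowerSeries.coeff_C_mul, PowerSeries.coeff_mul]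
    simp [contentSeries, contentPoly_succ, PowerSeries.coeff_one]

open BinaryTree in
theorem card_trees_content (a : Fin 3 →₀ ℕ) (m : ℕ) (ha : a 0 + a 1 + a 2 = m) :
    (((treesOfNumNodesEq m).filter (fun t => content t 0 1 = a)).card : ℚ) =
      goodCoeff 0 0 1 (a 0) (a 1) (a 2) := by
  have h := coeff_system (P₀ := contentSeries 1 2) (P₁ := contentSeries 0 2)
    (P₂ := contentSeries 0 1)
    (by
      have := contentSeries_eq 1 2 0 (by decide)
      rwa [contentSeries_symm 1 0, mul_comm (contentSeries 0 1)] at this)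
    (by
      have := contentSeries_eq 0 2 1 (by decide)
      rwa [mul_comm (contentSeries 0 1)] at this)
    (by
      have := contentSeries_eq 0 1 2 (by decide)
      rwa [contentSeries_symm 2 1, mul_comm (contentSeries 0 2)] at this)
    m 0 0 1 a ha
  simp only [Nat.cast_zero, Nat.cast_one] at h
  rw [← h]
  simp [contentSeries, contentPoly, MvPolynomial.coeff_sum, MvPolynomial.coeff_monomial]

/-! ### Binary trees as maximal non-crossing families of chords -/

/-- The chords `(a, b)`, with `a + 2 ≤ b`, of the triangulated polygon with vertices
`i, …, i + t.numNodes + 1` encoded by the binary tree `t`. The base `(i, i + t.numNodes + 1)` is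
included as soon as `t` is not empty; the two subtrees hang on the other sides of its triangle. -/
def chords : BinaryTree Unit → ℕ → Finset (ℕ × ℕ)
  | .nil, _ => ∅
  | .node _ l r, i =>
    insert (i, i + l.numNodes + r.numNodes + 2) (chords l i ∪ chords r (i + l.numNodes + 1))

/-- No two chords of `S` cross. -/
def NonCrossing (S : Finset (ℕ × ℕ)) : Prop :=
  ∀ p ∈ S, ∀ q ∈ S, ¬ (p.1 < q.1 ∧ q.1 < p.2 ∧ p.2 < q.2)

/-- All elements of `S` are chords `(a, b)`, `a + 2 ≤ b`, of the polygon with vertices `i, …, j`. -/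
def ChordsIn (S : Finset (ℕ × ℕ)) (i j : ℕ) : Prop :=
  ∀ p ∈ S, i ≤ p.1 ∧ p.1 + 2 ≤ p.2 ∧ p.2 ≤ j

theorem mem_chords_node {u : Unit} {l r : BinaryTree Unit} {i : ℕ} {p : ℕ × ℕ} :
    p ∈ chords (.node u l r) i ↔ p = (i, i + l.numNodes + r.numNodes + 2) ∨
      p ∈ chords l i ∨ p ∈ chords r (i + l.numNodes + 1) := by
  simp [chords]

theorem chordsIn_chords (t : BinaryTree Unit) (i : ℕ) :
    ChordsIn (chords t i) i (i + t.numNodes + 1) := by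
  induction t generalizing i with
  | nil => simp [chords, ChordsIn]
  | node u l r ihl ihr =>
    intro p hp
    rcases mem_chords_node.1 hp with rfl | hp | hp
    · simp only [BinaryTree.numNodes]
      omega
    · have := ihl i p hp
      simp only [BinaryTree.numNodes]
      omega
    · have := ihr _ p hp
      simp only [BinaryTree.numNodes]
      omega

theorem nonCrossing_chords (t : BinaryTree Unit) (i : ℕ) : NonCrossing (chords t i) := by
  induction t generalizing i with
  | nil => simp [chords, NonCrossing]
  | node u l r ihl ihr =>
    intro p hp q hq
    have hl := chordsIn_chords l i
    have hr := chordsIn_chords r (i + l.numNodes + 1)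
    rcases mem_chords_node.1 hp with rfl | hp | hp <;>
      rcases mem_chords_node.1 hq with rfl | hq | hq
    · simp
    · have := hl q hq; dsimp only; omega
    · have := hr q hq; dsimp only; omega
    · have := hl p hp; dsimp only; omega
    · exact ihl i p hp q hq
    · have := hl p hp; have := hr q hq; omega
    · have := hr p hp; dsimp only; omega
    · have := hr p hp; have := hl q hq; omega
    · exact ihr _ p hp q hq

theorem card_chords (t : BinaryTree Unit) (i : ℕ) : (chords t i).card = t.numNodes := by
  induction t generalizing i with
  | nil => simp [chords]
  | node u l r ihl ihr =>
    have hl := chordsIn_chords l i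
    have hr := chordsIn_chords r (i + l.numNodes + 1)
    rw [chords, Finset.card_insert_of_notMem, Finset.card_union_of_disjoint, ihl, ihr]
    · rfl
    · refine Finset.disjoint_left.2 fun p hp hp' => ?_
      have := hl p hp
      have := hr p hp'
      omega
    · intro hp
      rcases Finset.mem_union.1 hp with hp | hp
      · have := hl _ hp
        dsimp only at this
        omega
      · have := hr _ hp
        dsimp only at this
        omega

theorem base_mem_chords (t : BinaryTree Unit) (i : ℕ) (ht : t.numNodes ≠ 0) :
    (i, i + t.numNodes + 1) ∈ chords t i := by
  rcases t with _ | ⟨u, l, r⟩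
  · simp at ht
  · rw [mem_chords_node]
    left
    simp only [BinaryTree.numNodes, Prod.mk.injEq, true_and]
    omega

/-- The base `(i, i + l.numNodes + 1)` of the left subpolygon of the first tree, if it is a chord,
must lie in the left subpolygon of the second tree. Together with the symmetric inequality this
shows that the chords determine the apex of the base triangle. -/
theorem numNodes_left_le {u : Unit} {l r l' r' : BinaryTree Unit} {i : ℕ}
    (h : chords (.node u l r) i = chords (.node u l' r') i)
    (hn : l.numNodes + r.numNodes = l'.numNodes + r'.numNodes) : l.numNodes ≤ l'.numNodes := by
  by_contra! hlt
  have hmem : (i, i + l.numNodes + 1) ∈ chords (.node u l' r') i := by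
    rw [← h, mem_chords_node]
    exact Or.inr (Or.inl (base_mem_chords l i (by omega)))
  rcases mem_chords_node.1 hmem with hp | hp | hp
  · simp only [Prod.mk.injEq, true_and] at hp
    omega
  · have := chordsIn_chords l' i _ hp
    dsimp only at this
    omega
  · have := chordsIn_chords r' _ _ hp
    dsimp only at this
    omega

theorem chords_injective {t t' : BinaryTree Unit} {i : ℕ} (h : chords t i = chords t' i) :
    t = t' := by
  induction t generalizing t' i with
  | nil =>
    rcases t' with _ | ⟨u, l, r⟩
    · rfl
    · exact absurd h.symm (Finset.insert_ne_empty _ _)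
  | node u l r ihl ihr =>
    rcases t' with _ | ⟨u, l', r'⟩
    · simp [chords] at h
    · have hn := congrArg Finset.card h
      rw [card_chords, card_chords] at hn
      simp only [BinaryTree.numNodes, Nat.add_right_cancel_iff] at hn
      have hll := le_antisymm (numNodes_left_le h hn) (numNodes_left_le h.symm hn.symm)
      have hsplit : ∀ p, p ∈ chords (.node u l r) i ↔ p ∈ chords (.node u l' r') i := by
        simp [h]
      simp only [mem_chords_node] at hsplit
      have bl := chordsIn_chords l i
      have br := chordsIn_chords r (i + l.numNodes + 1)
      have bl' := chordsIn_chords l' i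
      have br' := chordsIn_chords r' (i + l'.numNodes + 1)
      have e1 : chords l i = chords l' i := by
        ext p
        constructor
        · intro hp
          have h1 := bl p hp
          rcases (hsplit p).1 (Or.inr (Or.inl hp)) with rfl | hp' | hp'
          · dsimp only at h1; omega
          · exact hp'
          · have := br' p hp'; omega
        · intro hp
          have h1 := bl' p hp
          rcases (hsplit p).2 (Or.inr (Or.inl hp)) with rfl | hp' | hp'
          · dsimp only at h1; omega
          · exact hp'
          · have := br p hp'; omega
      have e2 : chords r (i + l.numNodes + 1) = chords r' (i + l.numNodes + 1) := by
        rw [← hll] at br' hsplit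
        ext p
        constructor
        · intro hp
          have h1 := br p hp
          rcases (hsplit p).1 (Or.inr (Or.inr hp)) with rfl | hp' | hp'
          · dsimp only at h1; omega
          · have := bl' p hp'; omega
          · exact hp'
        · intro hp
          have h1 := br' p hp
          rcases (hsplit p).2 (Or.inr (Or.inr hp)) with rfl | hp' | hp'
          · dsimp only at h1; omega
          · have := bl p hp'; omega
          · exact hp'
      rw [ihl e1, ihr e2]

/-- A non-crossing family splits at the apex `p` of the triangle on the base: `p` is the largest
vertex below the last one which is joined to the first vertex by a side or a chord of the family. -/
theorem exists_apex {S : Finset (ℕ × ℕ)} {i j : ℕ} (hij : i + 2 ≤ j) (hin : ChordsIn S i j)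
    (hnc : NonCrossing S) :
    ∃ p, i < p ∧ p < j ∧ ∀ q ∈ S, q = (i, j) ∨ q.2 ≤ p ∨ p ≤ q.1 := by
  classical
  let A := (Finset.Ioo i j).filter (fun p => p = i + 1 ∨ (i, p) ∈ S)
  have hA : A.Nonempty := ⟨i + 1, by simp [A]; omega⟩
  have hmem := A.max'_mem hA
  have hmax : ∀ x ∈ A, x ≤ A.max' hA := fun x hx => A.le_max' x hx
  generalize A.max' hA = p at hmem hmax
  simp only [A, Finset.mem_filter, Finset.mem_Ioo] at hmem hmax
  obtain ⟨⟨h1, h2⟩, h3⟩ := hmem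
  refine ⟨p, h1, h2, fun q hq => ?_⟩
  by_contra! hcon
  obtain ⟨hne, h4, h5⟩ := hcon
  have hb := hin q hq
  rcases Nat.eq_or_lt_of_le hb.1 with he | hlt
  · have hqj : q.2 ≠ j := fun h => hne (Prod.ext he.symm h)
    have hq' : (i, q.2) ∈ S := by
      have : q = (i, q.2) := Prod.ext he.symm rfl
      rwa [this] at hq
    have := hmax q.2 ⟨by omega, Or.inr hq'⟩
    omega
  · rcases h3 with rfl | h3
    · omega
    · exact hnc _ h3 q hq ⟨hlt, h5, h4⟩

/-- A non-crossing family of chords of an `(m + 2)`-gon, base allowed, has at most `m` elements, and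
the families with `m` elements come from binary trees. -/
theorem exists_tree (m : ℕ) : ∀ (i : ℕ) (S : Finset (ℕ × ℕ)), ChordsIn S i (i + m + 1) →
    NonCrossing S → S.card ≤ m ∧
      (S.card = m → ∃ t : BinaryTree Unit, t.numNodes = m ∧ chords t i = S) := by
  induction m using Nat.strong_induction_on with
  | _ m ih =>
  intro i S hin hnc
  rcases Nat.eq_zero_or_pos m with rfl | hm
  · have hS : S = ∅ := Finset.eq_empty_of_forall_notMem fun q hq => by
      have := hin q hq
      omega
    exact ⟨by simp [hS], fun _ => ⟨.nil, rfl, by simp [chords, hS]⟩⟩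
  obtain ⟨p, hp1, hp2, hsplit⟩ := exists_apex (by omega) hin hnc
  obtain ⟨x, rfl⟩ : ∃ x, p = i + x + 1 := ⟨p - i - 1, by omega⟩
  obtain ⟨y, rfl⟩ : ∃ y, m = x + y + 1 := ⟨m - x - 1, by omega⟩
  let S₁ := S.filter (fun q => q.2 ≤ i + x + 1)
  let S₂ := S.filter (fun q => i + x + 1 ≤ q.1)
  have hS : S ⊆ insert (i, i + x + y + 2) (S₁ ∪ S₂) := by
    intro q hq
    simp only [S₁, S₂, Finset.mem_insert, Finset.mem_union, Finset.mem_filter]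
    rcases hsplit q hq with h | h | h
    · exact Or.inl (h.trans (Prod.ext rfl (by dsimp only; omega)))
    · exact Or.inr (Or.inl ⟨hq, h⟩)
    · exact Or.inr (Or.inr ⟨hq, h⟩)
  have hin₁ : ChordsIn S₁ i (i + x + 1) := by
    intro q hq
    obtain ⟨hq, h⟩ := Finset.mem_filter.1 hq
    have := hin q hq
    omega
  have hin₂ : ChordsIn S₂ (i + x + 1) (i + x + 1 + y + 1) := by
    intro q hq
    obtain ⟨hq, h⟩ := Finset.mem_filter.1 hq
    have := hin q hq
    omega
  have hnc₁ : NonCrossing S₁ := fun q hq q' hq' =>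
    hnc q (Finset.mem_filter.1 hq).1 q' (Finset.mem_filter.1 hq').1
  have hnc₂ : NonCrossing S₂ := fun q hq q' hq' =>
    hnc q (Finset.mem_filter.1 hq).1 q' (Finset.mem_filter.1 hq').1
  obtain ⟨c₁, t₁⟩ := ih x (by omega) i S₁ hin₁ hnc₁
  obtain ⟨c₂, t₂⟩ := ih y (by omega) (i + x + 1) S₂ hin₂ hnc₂
  have hcard := Finset.card_le_card hS
  have hcard' := Finset.card_insert_le (i, i + x + y + 2) (S₁ ∪ S₂)
  have hcard'' := Finset.card_union_le S₁ S₂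
  refine ⟨by omega, fun hfull => ?_⟩
  obtain ⟨l, hl, hl'⟩ := t₁ (by omega)
  obtain ⟨r, hr, hr'⟩ := t₂ (by omega)
  refine ⟨.node () l r, by simp [hl, hr], ?_⟩
  rw [chords, hl, hr, hl', hr']
  exact (Finset.eq_of_subset_of_card_le hS (by omega)).symm

/-! ### Colourings -/

/-- `ℓ` is a proper colouring of the triangulated polygon encoded by `t` and based at `i`. -/
def ProperOn (t : BinaryTree Unit) (i : ℕ) (ℓ : ℕ → Fin 3) : Prop :=
  (∀ v, i ≤ v → v ≤ i + t.numNodes → ℓ v ≠ ℓ (v + 1)) ∧ ∀ q ∈ chords t i, ℓ q.1 ≠ ℓ q.2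

theorem properOn_nil {i : ℕ} {ℓ : ℕ → Fin 3} : ProperOn .nil i ℓ ↔ ℓ i ≠ ℓ (i + 1) := by
  constructor
  · exact fun h => h.1 i le_rfl (by simp)
  · refine fun h => ⟨fun v h1 h2 => ?_, by simp [chords]⟩
    obtain rfl : v = i := by simp at h2; omega
    exact h

theorem properOn_node {u : Unit} {l r : BinaryTree Unit} {i : ℕ} {ℓ : ℕ → Fin 3} :
    ProperOn (.node u l r) i ℓ ↔ ℓ i ≠ ℓ (i + l.numNodes + r.numNodes + 2) ∧
      ProperOn l i ℓ ∧ ProperOn r (i + l.numNodes + 1) ℓ := by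
  constructor
  · rintro ⟨h1, h2⟩
    simp only [BinaryTree.numNodes] at h1
    refine ⟨h2 _ (mem_chords_node.2 (Or.inl rfl)), ⟨fun v hv hv' => h1 v hv (by omega),
      fun q hq => h2 q (mem_chords_node.2 (Or.inr (Or.inl hq)))⟩,
      ⟨fun v hv hv' => h1 v (by omega) (by omega),
      fun q hq => h2 q (mem_chords_node.2 (Or.inr (Or.inr hq)))⟩⟩
  · rintro ⟨h1, ⟨h2, h3⟩, h4, h5⟩
    refine ⟨fun v hv hv' => ?_, fun q hq => ?_⟩
    · simp only [BinaryTree.numNodes] at hv'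
      rcases le_or_gt v (i + l.numNodes) with h | h
      · exact h2 v hv h
      · exact h4 v (by omega) (by omega)
    · rcases mem_chords_node.1 hq with rfl | hq | hq
      · exact h1
      · exact h3 q hq
      · exact h5 q hq

theorem ProperOn.ends_ne {t : BinaryTree Unit} {i : ℕ} {ℓ : ℕ → Fin 3} (h : ProperOn t i ℓ) :
    ℓ i ≠ ℓ (i + t.numNodes + 1) := by
  rcases t with _ | ⟨u, l, r⟩
  · exact properOn_nil.1 h
  · have h1 := (properOn_node.1 h).1
    rwa [show i + l.numNodes + r.numNodes + 2 =
      i + (BinaryTree.node u l r).numNodes + 1 by simp; omega] at h1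

/-- A proper colouring is determined by the colours of the ends of the base, so its colour counts
are given by `content`. -/
theorem ProperOn.sum_eq {t : BinaryTree Unit} {i : ℕ} {ℓ : ℕ → Fin 3} (h : ProperOn t i ℓ) :
    ∑ v ∈ Finset.Ioo i (i + t.numNodes + 1), (Finsupp.single (ℓ v) 1 : Fin 3 →₀ ℕ) =
      content t (ℓ i) (ℓ (i + t.numNodes + 1)) := by
  induction t generalizing i with
  | nil => simp [content]
  | node u l r ihl ihr =>
    obtain ⟨h1, h2, h3⟩ := properOn_node.1 h
    have hl := h2.ends_ne
    have hr := h3.ends_ne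
    have e : i + (BinaryTree.node u l r).numNodes + 1 =
        i + l.numNodes + 1 + r.numNodes + 1 := by simp; omega
    rw [show i + l.numNodes + r.numNodes + 2 = i + l.numNodes + 1 + r.numNodes + 1 by omega] at h1
    have hthird : ∀ c d e : Fin 3, c ≠ d → c ≠ e → e ≠ d → e = -(c + d) := by decide
    rw [e, content, ← hthird _ _ _ h1 hl hr, ← ihl h2, ← ihr h3]
    have hI : Finset.Ioo i (i + l.numNodes + 1 + r.numNodes + 1) =
        insert (i + l.numNodes + 1) (Finset.Ioo i (i + l.numNodes + 1) ∪
          Finset.Ioo (i + l.numNodes + 1) (i + l.numNodes + 1 + r.numNodes + 1)) := by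
      ext v
      simp only [Finset.mem_Ioo, Finset.mem_insert, Finset.mem_union]
      omega
    rw [hI, Finset.sum_insert (by simp), Finset.sum_union]
    refine Finset.disjoint_left.2 fun v hv hv' => ?_
    simp only [Finset.mem_Ioo] at hv hv'
    omega

theorem ProperOn.congr {t : BinaryTree Unit} {i : ℕ} {ℓ ℓ' : ℕ → Fin 3} (h : ProperOn t i ℓ)
    (he : ∀ v, i ≤ v → v ≤ i + t.numNodes + 1 → ℓ v = ℓ' v) : ProperOn t i ℓ' := by
  refine ⟨fun v h1 h2 => ?_, fun q hq => ?_⟩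
  · rw [← he v h1 (by omega), ← he (v + 1) (by omega) (by omega)]
    exact h.1 v h1 h2
  · have := chordsIn_chords t i q hq
    rw [← he q.1 (by omega) (by omega), ← he q.2 (by omega) (by omega)]
    exact h.2 q hq

/-- Any two distinct colours on the ends of the base extend to a proper colouring: the apex gets the
third colour, and the two subpolygons are coloured recursively. -/
theorem exists_properOn (t : BinaryTree Unit) (i : ℕ) (c d : Fin 3) (hcd : c ≠ d) :
    ∃ ℓ : ℕ → Fin 3, ProperOn t i ℓ ∧ ℓ i = c ∧ ℓ (i + t.numNodes + 1) = d := by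
  induction t generalizing i c d with
  | nil => exact ⟨fun v => if v = i then c else d, by simp [properOn_nil, hcd]⟩
  | node u l r ihl ihr =>
    have hne : ∀ c d : Fin 3, c ≠ d → c ≠ -(c + d) ∧ -(c + d) ≠ d := by decide
    obtain ⟨ℓ₁, h1, h2, h3⟩ := ihl i c _ (hne c d hcd).1
    obtain ⟨ℓ₂, h4, h5, h6⟩ := ihr (i + l.numNodes + 1) _ d (hne c d hcd).2
    have hlast : i + (BinaryTree.node u l r).numNodes + 1 =
        i + l.numNodes + 1 + r.numNodes + 1 := by simp; omega
    refine ⟨fun v => if v ≤ i + l.numNodes + 1 then ℓ₁ v else ℓ₂ v, properOn_node.2 ⟨?_, ?_, ?_⟩,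
      ?_, ?_⟩
    · rw [if_pos (by omega), if_neg (by omega), h2,
        show i + l.numNodes + r.numNodes + 2 = i + l.numNodes + 1 + r.numNodes + 1 by omega, h6]
      exact hcd
    · exact h1.congr fun v _ hv => by rw [if_pos hv]
    · refine h4.congr fun v hv _ => ?_
      split_ifs with h
      · obtain rfl : v = i + l.numNodes + 1 := by omega
        rw [h3, h5]
      · rfl
    · dsimp only
      rw [if_pos (by omega), h2]
    · dsimp only
      rw [hlast, if_neg (by omega), h6]

/-! ### From `Triangulation n` to families of chords -/

theorem arcLen_eq {n : ℕ} (a b : Fin n) :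
    arcLen n a b = if a.val ≤ b.val then b.val - a.val else b.val + n - a.val := by
  have ha := a.isLt
  have hb := b.isLt
  unfold arcLen
  split_ifs with h
  · rw [show b.val + n - a.val = (b.val - a.val) + n by omega, Nat.add_mod_right,
      Nat.mod_eq_of_lt (by omega)]
  · exact Nat.mod_eq_of_lt (by omega)

theorem isDiagonal_iff {n : ℕ} (hn : 3 ≤ n) {a b : Fin n} (hab : a < b) :
    IsDiagonal n s(a, b) ↔ a.val + 2 ≤ b.val ∧ ¬ (a.val = 0 ∧ b.val = n - 1) := by
  have ha := a.isLt
  have hb := b.isLt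
  rw [Fin.lt_def] at hab
  constructor
  · rintro ⟨c, d, h, h1, h2⟩
    rw [arcLen_eq] at h1 h2
    rcases Sym2.eq_iff.1 h with ⟨rfl, rfl⟩ | ⟨rfl, rfl⟩
    · rw [if_pos hab.le] at h1 h2
      omega
    · rw [if_neg (by omega)] at h1 h2
      omega
  · rintro ⟨h1, h2⟩
    refine ⟨a, b, rfl, ?_⟩
    rw [arcLen_eq, if_pos hab.le]
    omega

/-- For increasing pairs, crossing on the circle is interleaving of the endpoints. -/
theorem crosses_iff {n : ℕ} {a b c d : Fin n} (hab : a < b) (hcd : c < d) :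
    Crosses n s(a, b) s(c, d) ↔ (a < c ∧ c < b ∧ b < d) ∨ (c < a ∧ a < d ∧ d < b) := by
  have ha := a.isLt
  have hb := b.isLt
  have hc := c.isLt
  have hd := d.isLt
  simp only [Fin.lt_def] at *
  constructor
  · rintro ⟨a', b', c', d', h1, h2, ⟨h3, h4⟩, h5, h6⟩
    simp only [arcLen_eq] at h3 h4 h5 h6
    rcases Sym2.eq_iff.1 h1 with ⟨rfl, rfl⟩ | ⟨rfl, rfl⟩ <;>
      rcases Sym2.eq_iff.1 h2 with ⟨rfl, rfl⟩ | ⟨rfl, rfl⟩ <;>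
      split_ifs at h3 h4 h5 h6 <;> omega
  · rintro (⟨h1, h2, h3⟩ | ⟨h1, h2, h3⟩)
    · refine ⟨a, b, c, d, rfl, rfl, ?_, ?_⟩ <;> simp only [StrictBtw, arcLen_eq] <;>
        split_ifs <;> omega
    · refine ⟨a, b, d, c, rfl, Sym2.eq_swap, ?_, ?_⟩ <;> simp only [StrictBtw, arcLen_eq] <;>
        split_ifs <;> omega

/-- A chord as the increasing pair of its endpoints. -/
def toPair {n : ℕ} (e : Sym2 (Fin n)) : ℕ × ℕ := (e.inf.val, e.sup.val)

theorem toPair_mk {n : ℕ} {a b : Fin n} (h : a < b) : toPair s(a, b) = (a.val, b.val) := by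
  simp [toPair, inf_eq_left.2 h.le, sup_eq_right.2 h.le]

theorem toPair_injective {n : ℕ} : Function.Injective (toPair : Sym2 (Fin n) → ℕ × ℕ) := by
  intro e f h
  simp only [toPair, Prod.mk.injEq] at h
  exact Sym2.inf_eq_inf_and_sup_eq_sup.1 ⟨Fin.ext h.1, Fin.ext h.2⟩

theorem IsDiagonal.exists_lt {n : ℕ} {e : Sym2 (Fin n)} (h : IsDiagonal n e) :
    ∃ a b : Fin n, a < b ∧ e = s(a, b) := by
  obtain ⟨a, b, rfl, h1, h2⟩ := h
  have ha := a.isLt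
  rcases lt_trichotomy a b with hab | rfl | hab
  · exact ⟨a, b, hab, rfl⟩
  · rw [arcLen_eq, if_pos le_rfl] at h1
    omega
  · exact ⟨b, a, hab, Sym2.eq_swap⟩

/-- The diagonals of a triangulation, together with the side `(0, n - 1)` taken as the base. -/
def Triangulation.family {n : ℕ} (T : Triangulation n) : Finset (ℕ × ℕ) :=
  insert (0, n - 1) (T.diags.image toPair)

namespace Triangulation

variable {n : ℕ}

theorem mem_image_diags (T : Triangulation n) {p : ℕ × ℕ} :
    p ∈ T.diags.image toPair ↔
      ∃ a b : Fin n, a < b ∧ s(a, b) ∈ T.diags ∧ p = (a.val, b.val) := by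
  rw [Finset.mem_image]
  constructor
  · rintro ⟨e, he, rfl⟩
    obtain ⟨a, b, hab, rfl⟩ := (T.diag_mem e he).exists_lt
    exact ⟨a, b, hab, he, toPair_mk hab⟩
  · rintro ⟨a, b, hab, he, rfl⟩
    exact ⟨_, he, toPair_mk hab⟩

theorem base_notMem (hn : 3 ≤ n) (T : Triangulation n) : (0, n - 1) ∉ T.diags.image toPair := by
  intro h
  obtain ⟨a, b, hab, he, hp⟩ := T.mem_image_diags.1 h
  simp only [Prod.mk.injEq] at hp
  exact ((isDiagonal_iff hn hab).1 (T.diag_mem _ he)).2 ⟨hp.1.symm, hp.2.symm⟩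

theorem card_family (hn : 3 ≤ n) (T : Triangulation n) : T.family.card = n - 2 := by
  rw [family, Finset.card_insert_of_notMem (T.base_notMem hn),
    Finset.card_image_of_injective _ toPair_injective, T.card_diags]
  omega

theorem family_injective (hn : 3 ≤ n) :
    Function.Injective (family : Triangulation n → Finset (ℕ × ℕ)) := by
  intro T T' h
  have h' := congrArg (fun S => S.erase (0, n - 1)) h
  simp only [family, Finset.erase_insert (base_notMem hn _)] at h'
  have hd := Finset.image_injective toPair_injective h'
  cases T
  cases T'
  simp only at hd
  subst hd
  rfl

theorem chordsIn_family (hn : 3 ≤ n) (T : Triangulation n) : ChordsIn T.family 0 (n - 1) := by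
  intro p hp
  rcases Finset.mem_insert.1 hp with rfl | hp
  · dsimp only
    omega
  · obtain ⟨a, b, hab, he, rfl⟩ := T.mem_image_diags.1 hp
    have := (isDiagonal_iff hn hab).1 (T.diag_mem _ he)
    have := b.isLt
    dsimp only
    omega

theorem nonCrossing_family (hn : 3 ≤ n) (T : Triangulation n) : NonCrossing T.family := by
  intro p hp q hq
  have hp' := T.chordsIn_family hn p hp
  have hq' := T.chordsIn_family hn q hq
  rcases Finset.mem_insert.1 hp with rfl | hp
  · dsimp only at *
    omega
  rcases Finset.mem_insert.1 hq with rfl | hq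
  · dsimp only at *
    omega
  obtain ⟨a, b, hab, he, rfl⟩ := T.mem_image_diags.1 hp
  obtain ⟨c, d, hcd, hf, rfl⟩ := T.mem_image_diags.1 hq
  intro h
  exact T.noncross _ he _ hf ((crosses_iff hab hcd).2 (Or.inl h))

theorem exists_chords_eq (hn : 3 ≤ n) (T : Triangulation n) :
    ∃ t : BinaryTree Unit, t.numNodes = n - 2 ∧ chords t 0 = T.family := by
  have h := T.chordsIn_family hn
  rw [show n - 1 = 0 + (n - 2) + 1 by omega] at h
  exact (exists_tree (n - 2) 0 T.family h (T.nonCrossing_family hn)).2 (T.card_family hn)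

theorem exists_family_eq (hn : 3 ≤ n) (t : BinaryTree Unit) (ht : t.numNodes = n - 2) :
    ∃ T : Triangulation n, T.family = chords t 0 := by
  classical
  have hin := chordsIn_chords t 0
  rw [show 0 + t.numNodes + 1 = n - 1 by omega] at hin
  have hbase := base_mem_chords t 0 (by omega)
  rw [show 0 + t.numNodes + 1 = n - 1 by omega] at hbase
  let D : Finset (Sym2 (Fin n)) :=
    Finset.univ.filter fun e => toPair e ∈ (chords t 0).erase (0, n - 1)
  have himg : D.image toPair = (chords t 0).erase (0, n - 1) := by
    ext p
    simp only [D, Finset.mem_image, Finset.mem_filter, Finset.mem_univ, true_and]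
    constructor
    · rintro ⟨e, he, rfl⟩
      exact he
    · intro hp
      have := hin p (Finset.mem_of_mem_erase hp)
      have hlt : (⟨p.1, by omega⟩ : Fin n) < ⟨p.2, by omega⟩ := by
        rw [Fin.lt_def]
        dsimp only
        omega
      have := toPair_mk hlt
      exact ⟨_, by rwa [this], this⟩
  have hD : ∀ e ∈ D, ∃ a b : Fin n, a < b ∧ e = s(a, b) ∧
      (a.val, b.val) ∈ (chords t 0).erase (0, n - 1) := by
    intro e he
    have he' := (Finset.mem_filter.1 he).2
    have hlt := hin _ (Finset.mem_of_mem_erase he')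
    induction e using Sym2.ind with
    | _ a b =>
    rcases lt_trichotomy a b with hab | rfl | hab
    · exact ⟨a, b, hab, rfl, by rwa [toPair_mk hab] at he'⟩
    · simp [toPair] at hlt
    · rw [Sym2.eq_swap] at he' ⊢
      exact ⟨b, a, hab, rfl, by rwa [toPair_mk hab] at he'⟩
  refine ⟨⟨D, ?_, ?_, ?_⟩, ?_⟩
  · rw [← Finset.card_image_of_injective D toPair_injective, himg, Finset.card_erase_of_mem hbase,
      card_chords]
    omega
  · intro e he
    obtain ⟨a, b, hab, rfl, hp⟩ := hD e he
    rw [isDiagonal_iff hn hab]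
    rw [Finset.mem_erase] at hp
    refine ⟨(hin _ hp.2).2.1, fun h => hp.1 (Prod.ext h.1 h.2)⟩
  · intro e he f hf
    obtain ⟨a, b, hab, rfl, hp⟩ := hD e he
    obtain ⟨c, d, hcd, rfl, hq⟩ := hD f hf
    rw [crosses_iff hab hcd]
    rintro (h | h)
    · exact nonCrossing_chords t 0 _ (Finset.mem_of_mem_erase hp) _ (Finset.mem_of_mem_erase hq) h
    · exact nonCrossing_chords t 0 _ (Finset.mem_of_mem_erase hq) _ (Finset.mem_of_mem_erase hp) h
  · rw [family]
    change insert (0, n - 1) (D.image toPair) = _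
    rw [himg, Finset.insert_erase hbase]

/-- The side `(0, n - 1)` is an edge of the polygon on one side, and the base chord of `t` on the
other, so both notions of properness concern the same edges. -/
theorem proper_iff (hn : 3 ≤ n) (T : Triangulation n) {t : BinaryTree Unit}
    (ht : t.numNodes = n - 2) (hT : chords t 0 = T.family) (f : ℕ → Fin 3) :
    T.Proper (fun v => f v.val) ↔ ProperOn t 0 f := by
  constructor
  · intro h
    refine ⟨fun v _ hv => ?_, fun q hq => ?_⟩
    · refine h ⟨v, by omega⟩ ⟨v + 1, by omega⟩ (Or.inl ?_)
      rw [arcLen_eq, if_pos (by simp)]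
      simp
    · rw [hT] at hq
      rcases Finset.mem_insert.1 hq with rfl | hq
      · refine (h ⟨n - 1, by omega⟩ ⟨0, by omega⟩ (Or.inl ?_)).symm
        rw [arcLen_eq, if_neg (by dsimp only; omega)]
        dsimp only
        omega
      · obtain ⟨a, b, hab, he, rfl⟩ := T.mem_image_diags.1 hq
        exact h a b (Or.inr he)
  · rintro ⟨h1, h2⟩ a b (hab | hab)
    · have ha := a.isLt
      have hb := b.isLt
      rw [arcLen_eq] at hab
      split_ifs at hab with hle
      · have := h1 a.val (by omega) (by omega)
        rwa [show a.val + 1 = b.val by omega] at this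
      · have := h2 (0, n - 1) (by rw [hT]; exact Finset.mem_insert_self _ _)
        dsimp only at this ⊢
        rw [show a.val = n - 1 by omega, show b.val = 0 by omega]
        exact this.symm
    · have key : ∀ a b : Fin n, a < b → s(a, b) ∈ T.diags → f a.val ≠ f b.val :=
        fun a b hlt he => h2 (a.val, b.val) (by
          rw [hT]
          exact Finset.mem_insert_of_mem (T.mem_image_diags.2 ⟨a, b, hlt, he, rfl⟩))
      rcases lt_trichotomy a b with hlt | rfl | hlt
      · exact key a b hlt hab
      · obtain ⟨c, d, hlt, he⟩ := (T.diag_mem _ hab).exists_lt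
        rcases Sym2.eq_iff.1 he with ⟨rfl, rfl⟩ | ⟨rfl, rfl⟩ <;> exact absurd hlt (lt_irrefl _)
      · exact (key b a hlt (by rwa [Sym2.eq_swap])).symm

end Triangulation

/-- The number of vertices of each colour, the ends of the base (of colours `c` and `d`)
included. -/
noncomputable def colourCount (t : BinaryTree Unit) (c d : Fin 3) : Fin 3 → ℕ :=
  ⇑(Finsupp.single c 1 + Finsupp.single d 1 + content t c d : Fin 3 →₀ ℕ)

theorem ProperOn.card_filter {n : ℕ} (hn : 3 ≤ n) {t : BinaryTree Unit}
    (ht : t.numNodes = n - 2) {f : ℕ → Fin 3} (h : ProperOn t 0 f) (i : Fin 3) :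
    ((Finset.univ : Finset (Fin n)).filter (fun v => f v.val = i)).card =
      colourCount t (f 0) (f (n - 1)) i := by
  have hs := h.sum_eq
  rw [show 0 + t.numNodes + 1 = n - 1 by omega] at hs
  have hr : Finset.range n = insert 0 (insert (n - 1) (Finset.Ioo 0 (n - 1))) := by
    ext v
    simp only [Finset.mem_range, Finset.mem_insert, Finset.mem_Ioo]
    omega
  rw [colourCount, ← hs, Finset.card_filter, Fin.sum_univ_eq_sum_range
    (fun v => if f v = i then 1 else 0), hr, Finset.sum_insert (by simp; omega),
    Finset.sum_insert (by simp)]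
  simp [Finsupp.single_apply, add_assoc]

/-- A triangulation has as many proper colourings as there are pairs of distinct colours for the
ends of the base, and `colourCount` gives their colour class sizes. -/
theorem hasType_iff {n : ℕ} (hn : 3 ≤ n) (T : Triangulation n) {t : BinaryTree Unit}
    (ht : t.numNodes = n - 2) (hT : chords t 0 = T.family) (lam : Fin 3 → ℕ) :
    T.HasType lam ↔ ∃ c d : Fin 3, c ≠ d ∧ colourCount t c d = lam := by
  constructor
  · rintro ⟨ℓ, hℓ, hc⟩
    obtain ⟨f, rfl⟩ : ∃ f : ℕ → Fin 3, ℓ = fun v => f v.val :=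
      ⟨fun v => if h : v < n then ℓ ⟨v, h⟩ else 0, by ext v; simp⟩
    have hf := (T.proper_iff hn ht hT f).1 hℓ
    have hne := hf.ends_ne
    rw [show 0 + t.numNodes + 1 = n - 1 by omega] at hne
    exact ⟨f 0, f (n - 1), hne, funext fun i => by rw [← hc i, hf.card_filter hn ht]⟩
  · rintro ⟨c, d, hcd, rfl⟩
    obtain ⟨f, hf, h0, h1⟩ := exists_properOn t 0 c d hcd
    rw [show 0 + t.numNodes + 1 = n - 1 by omega] at h1
    exact ⟨fun v => f v.val, (T.proper_iff hn ht hT f).2 hf, fun i => by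
      rw [hf.card_filter hn ht, h0, h1]⟩

open BinaryTree Classical in
theorem card_hasType {n : ℕ} (hn : 3 ≤ n) (lam : Fin 3 → ℕ) :
    Nat.card {T : Triangulation n // T.HasType lam} =
      ((treesOfNumNodesEq (n - 2)).filter
        (fun t => ∃ c d : Fin 3, c ≠ d ∧ colourCount t c d = lam)).card := by
  choose g hg₁ hg₂ using fun T : Triangulation n => T.exists_chords_eq hn
  rw [← Nat.subtype_card _ fun t => Iff.rfl]
  refine Nat.card_eq_of_bijective (fun T => ⟨g T.1, ?_⟩) ⟨fun T T' h => ?_, fun t => ?_⟩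
  · rw [Finset.mem_filter, mem_treesOfNumNodesEq]
    exact ⟨hg₁ T.1, (hasType_iff hn T.1 (hg₁ _) (hg₂ _) lam).1 T.2⟩
  · have h' : g T.1 = g T'.1 := congrArg Subtype.val h
    refine Subtype.ext (Triangulation.family_injective hn ?_)
    rw [← hg₂, ← hg₂, h']
  · obtain ⟨t, ht⟩ := t
    rw [Finset.mem_filter, mem_treesOfNumNodesEq] at ht
    obtain ⟨T, hT⟩ := Triangulation.exists_family_eq hn t ht.1
    refine ⟨⟨T, (hasType_iff hn T ht.1 hT.symm lam).2 ht.2⟩, Subtype.ext ?_⟩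
    exact chords_injective ((hg₂ T).trans hT)

/-! ### Summing over the permutations of `λ` -/

/-- Permuting the colours, one may assume that the base colours are `0` and `1`, at the price of
permuting `λ`. -/
theorem exists_colourCount_iff (t : BinaryTree Unit) (lam : Fin 3 → ℕ) :
    (∃ c d : Fin 3, c ≠ d ∧ colourCount t c d = lam) ↔
      colourCount t 0 1 ∈ Finset.univ.image (fun σ : Equiv.Perm (Fin 3) => lam ∘ σ) := by
  have hperm : ∀ σ : Equiv.Perm (Fin 3), colourCount t (σ 0) (σ 1) ∘ σ = colourCount t 0 1 := by
    intro σ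
    funext i
    simp only [Function.comp_apply, colourCount, Finsupp.add_apply,
      content_perm σ t 0 1 (by decide)]
    simp only [Finsupp.single_apply, σ.injective.eq_iff]
  have hex : ∀ c d : Fin 3, c ≠ d → ∃ σ : Equiv.Perm (Fin 3), σ 0 = c ∧ σ 1 = d := by decide
  rw [Finset.mem_image]
  constructor
  · rintro ⟨c, d, hcd, rfl⟩
    obtain ⟨σ, rfl, rfl⟩ := hex c d hcd
    exact ⟨σ, Finset.mem_univ _, hperm σ⟩
  · rintro ⟨σ, -, h⟩
    refine ⟨σ 0, σ 1, by simp, ?_⟩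
    rw [← hperm σ] at h
    exact (σ.surjective.injective_comp_right h).symm

/-- The apex of the base triangle has the colour missing at the ends of the base. -/
theorem colourCount_pos (t : BinaryTree Unit) (ht : t.numNodes ≠ 0) (i : Fin 3) :
    0 < colourCount t 0 1 i := by
  rcases t with _ | ⟨u, l, r⟩
  · simp at ht
  · have h2 : -(0 + 1 : Fin 3) = 2 := by decide
    simp only [colourCount, content, h2, Finsupp.add_apply]
    fin_cases i <;> simp

/-- The part of the formula which is symmetric in `λ`. -/
noncomputable def weight (n : ℕ) (lam : Fin 3 → ℕ) : ℚ :=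
  ∏ i, ((n - lam i - 1).choose (lam i - 1) : ℚ) / ((n : ℚ) - lam i - 1)

theorem weight_comp (n : ℕ) (lam : Fin 3 → ℕ) (σ : Equiv.Perm (Fin 3)) :
    weight n (lam ∘ σ) = weight n lam :=
  Equiv.prod_comp σ fun i => ((n - lam i - 1).choose (lam i - 1) : ℚ) / ((n : ℚ) - lam i - 1)

open BinaryTree in
/-- The number of triangulations in which the colour class sizes are `mu` when the ends of the base
have colours `0` and `1`. Apart from the factor `n - 2 * mu 2`, it is symmetric in `mu`. -/
theorem card_colourCount {n : ℕ} {mu : Fin 3 → ℕ} (hmu : ∀ i, 1 ≤ mu i)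
    (hsum : mu 0 + mu 1 + mu 2 = n) :
    (((treesOfNumNodesEq (n - 2)).filter (fun t => colourCount t 0 1 = mu)).card : ℚ) =
      ((n : ℚ) - 2) * (n - 2 * mu 2) * weight n mu := by
  have p0 := hmu 0
  have p1 := hmu 1
  have p2 := hmu 2
  obtain ⟨x, hx⟩ : ∃ x, mu 0 = x + 1 := ⟨mu 0 - 1, by omega⟩
  obtain ⟨y, hy⟩ : ∃ y, mu 1 = y + 1 := ⟨mu 1 - 1, by omega⟩
  let a : Fin 3 →₀ ℕ := Finsupp.equivFunOnFinite.symm ![x, y, mu 2]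
  have a0 : a 0 = x := rfl
  have a1 : a 1 = y := rfl
  have a2 : a 2 = mu 2 := rfl
  have hfilter : ∀ t : BinaryTree Unit, colourCount t 0 1 = mu ↔ content t 0 1 = a := by
    intro t
    rw [Finsupp.ext_iff, funext_iff, Fin.forall_fin_succ, Fin.forall_fin_succ,
      Fin.forall_fin_succ, Fin.forall_fin_succ, Fin.forall_fin_succ, Fin.forall_fin_succ]
    simp only [colourCount, Finsupp.add_apply, Fin.succ_zero_eq_one, Fin.succ_one_eq_two,
      a0, a1, a2, hx, hy]
    simp
    omega
  simp only [hfilter]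
  rw [card_trees_content a (n - 2) (by omega), a0, a1, a2, goodCoeff_closed x y (mu 2) p2, weight,
    Fin.prod_univ_three, hx, hy]
  have hn : (n : ℚ) = x + y + mu 2 + 2 := by
    rw [← hsum, hx, hy]
    push_cast
    ring
  rw [show n - (x + 1) - 1 = y + mu 2 by omega, show n - (y + 1) - 1 = x + mu 2 by omega,
    show n - mu 2 - 1 = x + y + 1 by omega, hn]
  have q2 : (mu 2 : ℚ) ≠ 0 := by positivity
  have n1 : (y : ℚ) + mu 2 ≠ 0 := by positivity
  have n2 : (x : ℚ) + mu 2 ≠ 0 := by positivity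
  have n3 : (x : ℚ) + y + 1 ≠ 0 := by positivity
  simp only [Nat.add_sub_cancel]
  push_cast
  rw [show (x : ℚ) + y + mu 2 + 2 - (x + 1) - 1 = y + mu 2 by ring,
    show (x : ℚ) + y + mu 2 + 2 - (y + 1) - 1 = x + mu 2 by ring,
    show (x : ℚ) + y + mu 2 + 2 - mu 2 - 1 = x + y + 1 by ring]
  field_simp
  ring

/-- By symmetry, a part of a permutation of `λ` is `n / 3` on average. -/
theorem sum_orbit (lam : Fin 3 → ℕ) {n : ℕ} (hsum : ∑ i, lam i = n) :
    3 * ∑ mu ∈ Finset.univ.image (fun σ : Equiv.Perm (Fin 3) => lam ∘ σ), (mu 2 : ℚ) =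
      oCount lam * n := by
  set O := Finset.univ.image (fun σ : Equiv.Perm (Fin 3) => lam ∘ σ) with hO
  have hmem : ∀ (τ : Equiv.Perm (Fin 3)) (mu : Fin 3 → ℕ), mu ∈ O → mu ∘ τ ∈ O := by
    intro τ mu h
    obtain ⟨σ, -, rfl⟩ := Finset.mem_image.1 h
    exact Finset.mem_image.2 ⟨σ * τ, Finset.mem_univ _, rfl⟩
  have hsw : ∀ i : Fin 3, ∑ mu ∈ O, (mu i : ℚ) = ∑ mu ∈ O, (mu 2 : ℚ) := by
    intro i
    refine Finset.sum_nbij' (fun mu => mu ∘ Equiv.swap i 2) (fun mu => mu ∘ Equiv.swap i 2)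
      (fun mu h => hmem _ mu h) (fun mu h => hmem _ mu h) ?_ ?_ ?_
    · intro mu _
      funext j
      simp
    · intro mu _
      funext j
      simp
    · intro mu _
      simp
  have htot : ∑ mu ∈ O, ∑ i, (mu i : ℚ) = oCount lam * n := by
    have : ∀ mu ∈ O, ∑ i, (mu i : ℚ) = n := by
      intro mu h
      obtain ⟨σ, -, rfl⟩ := Finset.mem_image.1 h
      rw [← hsum]
      push_cast
      exact Equiv.sum_comp σ fun i => (lam i : ℚ)
    rw [Finset.sum_congr rfl this, Finset.sum_const, nsmul_eq_mul]
    rfl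
  rw [← htot, Finset.sum_comm, Fin.sum_univ_three, hsw 0, hsw 1]
  ring

open BinaryTree Classical in
theorem card_hasType_eq_sum {n : ℕ} (hn : 3 ≤ n) (lam : Fin 3 → ℕ) :
    Nat.card {T : Triangulation n // T.HasType lam} =
      ∑ mu ∈ Finset.univ.image (fun σ : Equiv.Perm (Fin 3) => lam ∘ σ),
        ((treesOfNumNodesEq (n - 2)).filter (fun t => colourCount t 0 1 = mu)).card := by
  rw [card_hasType hn]
  simp only [exists_colourCount_iff]
  refine (Finset.card_eq_sum_card_fiberwise (f := fun t => colourCount t 0 1)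
    (t := Finset.univ.image (fun σ : Equiv.Perm (Fin 3) => lam ∘ σ)) ?_).trans ?_
  · intro t ht
    exact (Finset.mem_filter.1 (Finset.mem_coe.1 ht)).2
  refine Finset.sum_congr rfl fun mu hmu => ?_
  rw [Finset.filter_filter]
  congr 1
  refine Finset.filter_congr fun t _ => ⟨fun h => h.2, fun h => ⟨?_, h⟩⟩
  rw [h]
  exact hmu

theorem statement6 (n : ℕ) (hn : 3 ≤ n) (lam : Fin 3 → ℕ)
    (hsum : ∑ i, lam i = n) (h01 : lam 1 ≤ lam 0) (h12 : lam 2 ≤ lam 1) :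
    (lam 2 = 0 → Nat.card {T : Triangulation n // T.HasType lam} = 0) ∧
    (1 ≤ lam 2 →
      (Nat.card {T : Triangulation n // T.HasType lam} : ℚ) =
        ((oCount lam : ℚ) * (n : ℚ) * ((n : ℚ) - 2)) /
            (3 * ((n : ℚ) - (lam 0 : ℚ) - 1) * ((n : ℚ) - (lam 1 : ℚ) - 1) *
              ((n : ℚ) - (lam 2 : ℚ) - 1)) *
          ((n - lam 0 - 1).choose (lam 0 - 1) : ℚ) *
          ((n - lam 1 - 1).choose (lam 1 - 1) : ℚ) *
          ((n - lam 2 - 1).choose (lam 2 - 1) : ℚ)) := by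
  constructor
  · intro h0
    rw [card_hasType_eq_sum hn, Finset.sum_eq_zero]
    intro mu hmu
    obtain ⟨σ, -, rfl⟩ := Finset.mem_image.1 hmu
    rw [Finset.card_eq_zero, Finset.filter_eq_empty_iff]
    intro t ht heq
    rw [BinaryTree.mem_treesOfNumNodesEq] at ht
    -- all three colours occur, the third one at the apex of the base triangle
    have hpos := colourCount_pos t (by omega) (σ.symm 2)
    rw [heq] at hpos
    simp [h0] at hpos
  · intro h2
    have hpos : ∀ i, 1 ≤ lam i := by
      intro i
      fin_cases i <;> simp <;> omega
    rw [card_hasType_eq_sum hn, Nat.cast_sum]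
    have hterm : ∀ mu ∈ Finset.univ.image (fun σ : Equiv.Perm (Fin 3) => lam ∘ σ),
        (((BinaryTree.treesOfNumNodesEq (n - 2)).filter
          (fun t => colourCount t 0 1 = mu)).card : ℚ) =
          ((n : ℚ) - 2) * weight n lam * (n - 2 * mu 2) := by
      intro mu hmu
      obtain ⟨σ, -, rfl⟩ := Finset.mem_image.1 hmu
      have hs : ∑ i, (lam ∘ σ) i = n := by
        rw [← hsum]
        exact Equiv.sum_comp σ lam
      rw [Fin.sum_univ_three] at hs
      rw [card_colourCount (mu := lam ∘ σ) (fun i => hpos (σ i)) hs, weight_comp]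
      ring
    rw [Finset.sum_congr rfl hterm, ← Finset.mul_sum, Finset.sum_sub_distrib, ← Finset.mul_sum,
      Finset.sum_const, nsmul_eq_mul]
    have hcard : (Finset.univ.image (fun σ : Equiv.Perm (Fin 3) => lam ∘ σ)).card = oCount lam :=
      rfl
    have horb := sum_orbit lam hsum
    have hsum' : ∑ mu ∈ Finset.univ.image (fun σ : Equiv.Perm (Fin 3) => lam ∘ σ), (mu 2 : ℚ) =
        oCount lam * n / 3 := by linarith
    have hn' : (n : ℚ) = lam 0 + lam 1 + lam 2 := by
      rw [← hsum, Fin.sum_univ_three]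
      push_cast
      ring
    have q : ∀ i, (1 : ℚ) ≤ lam i := fun i => by exact_mod_cast hpos i
    have q0 := q 0
    have q1 := q 1
    have q2 := q 2
    have n0 : (n : ℚ) - lam 0 - 1 ≠ 0 := by
      rw [hn']
      exact ne_of_gt (by linarith)
    have n1 : (n : ℚ) - lam 1 - 1 ≠ 0 := by
      rw [hn']
      exact ne_of_gt (by linarith)
    have n2 : (n : ℚ) - lam 2 - 1 ≠ 0 := by
      rw [hn']
      exact ne_of_gt (by linarith)
    rw [hcard, hsum', weight, Fin.prod_univ_three]
    field_simp
    ring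
end

section
/- Fix n ≥ 3 and orient the regular convex n-gon so that one side s (the base) is distinguished; color the left endpoint of s with 1 and the right endpoint of s with 2. Then every triangulation τ of the n-gon has a unique proper 3-coloring extending this assignment, and for every λ = (λ_1,λ_2,λ_3) ∈ (ℤ≥0)^3 with λ_1+λ_2+λ_3 = n and λ_1, λ_2 ≥ 1, the number of triangulations τ whose proper 3-coloring (with this base convention) has exactly λ_i vertices of color i for each i equals t_{(λ_1−1, λ_2−1, λ_3), 3}, the number of isomorphism classes of injectively 3-colored rooted trees with λ_1−1 vertices of color 1, λ_2−1 vertices of color 2, λ_3 vertices of color 3, and root colored 3. In particular, the total number of triangulations of the regular convex n-gon equals the Catalan number A_{n−2}(2,1). -/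
/- A 1-rooted forest (= rooted tree for `m = 1`) on vertex set `Fin n` with an
injective `k`-coloring. -/
structure CForest (k m n : ℕ) where
  adj : Fin n → Fin n → Prop
  root : Fin m → Fin n
  color : Fin n → Fin k
  root_inj : Function.Injective root
  path_unique : ∀ v : Fin n, ∃! p : List (Fin n),
    List.Chain' adj p ∧ (∃ j : Fin m, p.head? = some (root j)) ∧ p.getLast? = some v
  color_inj : ∀ v : Fin n, Set.InjOn color ({v} ∪ {w | adj v w})

def CForest.Iso {k m n : ℕ} (F G : CForest k m n) : Prop :=
  ∃ e : Fin n ≃ Fin n, (∀ v w : Fin n, F.adj v w ↔ G.adj (e v) (e w)) ∧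
    (∀ j : Fin m, e (F.root j) = G.root j) ∧ (∀ v : Fin n, G.color (e v) = F.color v)

noncomputable def forestCount (k m : ℕ) (lam : Fin k → ℕ) (c : Fin m → Fin k) : ℕ :=
  Nat.card (Quot (fun F G : {F : CForest k m (∑ i, lam i) //
    (∀ i : Fin k, (Finset.univ.filter (fun v => F.color v = i)).card = lam i) ∧
    (∀ j : Fin m, F.color (F.root j) = c j)} => CForest.Iso F.1 G.1))

/- `t_{λ,c}`: the number of isomorphism classes of injectively 3-colored rooted
trees with `λ i` vertices of color `i` and root colored `c`. -/
noncomputable def treeCount (k : ℕ) (lam : Fin k → ℕ) (c : Fin k) : ℕ :=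
  forestCount k 1 lam (fun _ => c)

/-!
Both triangulations of the `n`-gon and isomorphism classes of injectively 3-colored rooted trees
with root color `3` are encoded by plane binary trees with `n - 2` nodes, compatibly with colors.
(Colors `1, 2, 3` are the elements `0, 1, 2` of `Fin 3`.)

*Triangulations.* Cutting the polygon open along its base turns chords into arcs `(i, j)` with
`i < j` on the positions `0, …, n - 1`. At most `n - 2` pairwise noncrossing arcs of length at
least two fit there, the base arc included, and a family attaining this bound splits at the apex of
the triangle on the base into two families attaining the bound on smaller intervals
(`NC.card_le_and_tree`). So triangulations are the arc systems of binary trees, whose nodes are the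
triangles of the triangulation (`Rep`, `card_triangulation`).

*Colorings.* In a proper coloring the apex of each triangle has the color missing from the two ends
of the side through which the triangle is entered from the base. This gives existence and
uniqueness of the coloring, and computes its color counts recursively along the tree (`cnt`,
`Rep.count`), since every vertex not on the base is the apex of exactly one triangle.

*Colored trees.* In an injectively colored rooted tree a vertex is determined by the sequence of
colors on the path from the root, so the isomorphism class is determined by the set of these words
(`iso_iff_range_word`). The sets that occur are the prefix-closed sets of words beginning with the
root color and without repeated consecutive letters. A vertex therefore has at most one child of
each of the two colors other than its own, and such a set is the set of color words of a unique
binary tree (`Adm.exists_tree`, `words_inj`) in which every node has the color of the apex of the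
corresponding triangle. Comparing color counts yields the second claim (`treeCount_eq`), and counting
all binary trees with `n - 2` nodes gives the Catalan number.
-/

namespace TriTree

open BinaryTree

/-! ### Noncrossing arcs and binary trees -/

/-- The arcs of the triangulated polygon with vertices `a, a+1, …, a + |t| + 1` encoded by the
binary tree `t`: a node is a triangle on the base arc (joining the first and the last vertex),
and its two subtrees triangulate the polygons cut off by the two other sides of that triangle.
The base arc itself is included as soon as there is a triangle; sides of length one never are. -/
def arcs : BinaryTree Unit → ℕ → Finset (ℕ × ℕ)
  | nil, _ => ∅
  | node _ l r, a => insert (a, a + (l.numNodes + r.numNodes + 2))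
      (arcs l a ∪ arcs r (a + (l.numNodes + 1)))

/-- `S` is a set of pairwise noncrossing arcs of length at least two on the vertices `a, …, b`;
the base arc `(a, b)` is allowed. -/
structure NC (a b : ℕ) (S : Finset (ℕ × ℕ)) : Prop where
  bd : ∀ p ∈ S, a ≤ p.1 ∧ p.1 + 2 ≤ p.2 ∧ p.2 ≤ b
  nc : ∀ p ∈ S, ∀ q ∈ S, ¬ (p.1 < q.1 ∧ q.1 < p.2 ∧ p.2 < q.2)

lemma arcs_bd (t : BinaryTree Unit) : ∀ a, ∀ p ∈ arcs t a,
    a ≤ p.1 ∧ p.1 + 2 ≤ p.2 ∧ p.2 ≤ a + (t.numNodes + 1) := by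
  induction t with
  | nil => simp [arcs]
  | node _ l r ihl ihr =>
    intro a p hp
    simp only [arcs, Finset.mem_insert, Finset.mem_union] at hp
    simp only [numNodes]
    rcases hp with rfl | hp | hp
    · simp only; omega
    · have := ihl _ _ hp; omega
    · have := ihr _ _ hp; omega

lemma arcs_nc (t : BinaryTree Unit) : ∀ a, NC a (a + (t.numNodes + 1)) (arcs t a) := by
  intro a
  refine ⟨arcs_bd t a, ?_⟩
  induction t generalizing a with
  | nil => simp [arcs]
  | node _ l r ihl ihr =>
    intro p hp q hq
    simp only [arcs, Finset.mem_insert, Finset.mem_union] at hp hq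
    rcases hp with rfl | hp | hp <;> rcases hq with rfl | hq | hq
    · simp
    · have := arcs_bd l _ _ hq; simp only; omega
    · have := arcs_bd r _ _ hq; simp only; omega
    · have := arcs_bd l _ _ hp; simp only; omega
    · exact ihl _ _ hp _ hq
    · have := arcs_bd l _ _ hp; have := arcs_bd r _ _ hq; omega
    · have := arcs_bd r _ _ hp; simp only; omega
    · have := arcs_bd r _ _ hp; have := arcs_bd l _ _ hq; omega
    · exact ihr _ _ hp _ hq

lemma arcs_card (t : BinaryTree Unit) : ∀ a, (arcs t a).card = t.numNodes := by
  induction t with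
  | nil => simp [arcs, numNodes]
  | node _ l r ihl ihr =>
    intro a
    rw [arcs, Finset.card_insert_of_notMem, Finset.card_union_of_disjoint, ihl, ihr, numNodes]
    · rw [Finset.disjoint_left]
      intro p hp hq
      have := arcs_bd l _ _ hp; have := arcs_bd r _ _ hq; omega
    · rw [Finset.mem_union]
      rintro (h | h)
      · have := arcs_bd l _ _ h; simp only at this; omega
      · have := arcs_bd r _ _ h; simp only at this; omega

lemma base_mem_arcs (t : BinaryTree Unit) (h : t ≠ nil) (a : ℕ) :
    (a, a + (t.numNodes + 1)) ∈ arcs t a := by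
  cases t with
  | nil => exact absurd rfl h
  | node _ l r => 
    rw [arcs, Finset.mem_insert]
    left; rfl

/-- In the arc system of a node, the apex of the base triangle is the far end of the longest arc
other than the base arc leaving the first vertex; hence
having the same arcs bounds the size of one left subtree by that of the other. -/
lemma arcs_left_le {l r l' r' : BinaryTree Unit} {a : ℕ}
    (h : arcs (node () l r) a = arcs (node () l' r') a)
    (hn : l.numNodes + r.numNodes = l'.numNodes + r'.numNodes) :
    l'.numNodes ≤ l.numNodes := by
  by_contra! hlt
  have hne : l' ≠ nil := by rintro rfl; simp [numNodes] at hlt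
  have h1 := base_mem_arcs l' hne a
  have h2 : (a, a + (l'.numNodes + 1)) ∈ arcs (node () l r) a := by
    rw [h, arcs]; simp [h1]
  simp only [arcs, Finset.mem_insert, Finset.mem_union] at h2
  rcases h2 with h2 | h2 | h2
  · have := congrArg Prod.snd h2; simp only at this; omega
  · have := arcs_bd l _ _ h2; simp only at this; omega
  · have := arcs_bd r _ _ h2; simp only at this; omega

lemma arcs_inj (t : BinaryTree Unit) : ∀ (t' : BinaryTree Unit) (a : ℕ),
    arcs t a = arcs t' a → t = t' := by
  induction t with
  | nil =>
    intro t' a h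
    by_contra hne
    have := base_mem_arcs t' (Ne.symm hne) a
    rw [← h] at this
    simp [arcs] at this
  | node _ l r ihl ihr =>
    intro t' a h
    have hc := congrArg Finset.card h
    rw [arcs_card, arcs_card] at hc
    cases t' with
    | nil => simp [numNodes] at hc
    | node _ l' r' =>
      simp only [numNodes] at hc
      have hn : l.numNodes + r.numNodes = l'.numNodes + r'.numNodes := by omega
      have e1 : l.numNodes = l'.numNodes :=
        le_antisymm (arcs_left_le h.symm hn.symm) (arcs_left_le h hn)
      have e2 : r.numNodes = r'.numNodes := by omega
      have hl : arcs l a = arcs l' a := by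
        ext p
        have hp := congrArg (p ∈ ·) h
        simp only [arcs, Finset.mem_insert, Finset.mem_union, eq_iff_iff] at hp
        constructor
        · intro hm
          have b1 := arcs_bd l _ _ hm
          rcases hp.1 (Or.inr (Or.inl hm)) with h1 | h1 | h1
          · rw [h1] at b1; simp only at b1; omega
          · exact h1
          · have := arcs_bd _ _ _ h1; omega
        · intro hm
          have b1 := arcs_bd l' _ _ hm
          rcases hp.2 (Or.inr (Or.inl hm)) with h1 | h1 | h1
          · rw [h1] at b1; simp only at b1; omega
          · exact h1
          · have := arcs_bd _ _ _ h1; omega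
      have hr : arcs r (a + (l.numNodes + 1)) = arcs r' (a + (l.numNodes + 1)) := by
        ext p
        have hp := congrArg (p ∈ ·) h
        simp only [arcs, Finset.mem_insert, Finset.mem_union, eq_iff_iff, ← e1] at hp
        constructor
        · intro hm
          have b1 := arcs_bd r _ _ hm
          rcases hp.1 (Or.inr (Or.inr hm)) with h1 | h1 | h1
          · rw [h1] at b1; simp only at b1; omega
          · have := arcs_bd _ _ _ h1; omega
          · exact h1
        · intro hm
          have b1 := arcs_bd r' _ _ hm
          rcases hp.2 (Or.inr (Or.inr hm)) with h1 | h1 | h1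
          · rw [h1] at b1; simp only at b1; omega
          · have := arcs_bd _ _ _ h1; omega
          · exact h1
      rw [ihl _ _ hl, ihr _ _ hr]

/-- The end of the longest arc other than `(a, b)` that starts at `a` (or `a + 1`) separates the
remaining arcs into those to its left and those to its right. -/
lemma NC.exists_split {a b : ℕ} {S : Finset (ℕ × ℕ)} (h : NC a b S) (hab : a + 2 ≤ b) :
    ∃ m, a < m ∧ m < b ∧ ∀ p ∈ S, p = (a, b) ∨ p.2 ≤ m ∨ m ≤ p.1 := by
  classical
  set J := insert (a + 1) ((S.filter (fun p => p.1 = a ∧ p.2 ≠ b)).image Prod.snd) with hJ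
  have hne : J.Nonempty := ⟨a + 1, by simp [hJ]⟩
  have hmem := J.max'_mem hne
  set m := J.max' hne with hm
  have hmax : ∀ j ∈ J, j ≤ m := fun j hj => J.le_max' j hj
  have ham : a + 1 ≤ m := hmax _ (by simp [hJ])
  rw [hJ, Finset.mem_insert, Finset.mem_image] at hmem
  refine ⟨m, by omega, ?_, ?_⟩
  · rcases hmem with h1 | ⟨p, hp, h1⟩
    · omega
    · rw [Finset.mem_filter] at hp
      have := h.bd p hp.1
      omega
  · rintro ⟨k, l⟩ hp
    have hb := h.bd _ hp
    simp only at hb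
    by_cases hk : k = a
    · subst hk
      by_cases hl : l = b
      · left; rw [hl]
      · right; left
        exact hmax l (by
          rw [hJ, Finset.mem_insert, Finset.mem_image]
          exact Or.inr ⟨(k, l), by simp [hp, hl], rfl⟩)
    · right
      simp only
      by_contra! hcon
      rcases hmem with h1 | ⟨q, hq, h1⟩
      · omega
      · rw [Finset.mem_filter] at hq
        have := h.nc q hq.1 _ hp
        simp only at this
        omega

/-- At most `b - a - 1` noncrossing arcs fit on `a, …, b`, and a family attaining the bound is the
arc system of a binary tree. -/
lemma NC.card_le_and_tree (d : ℕ) : ∀ (a : ℕ) (S : Finset (ℕ × ℕ)), NC a (a + (d + 1)) S →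
    S.card ≤ d ∧ (S.card = d → ∃ t : BinaryTree Unit, t.numNodes = d ∧ arcs t a = S) := by
  classical
  induction d using Nat.strong_induction_on with
  | _ d ih =>
  intro a S h
  rcases Nat.eq_zero_or_pos d with rfl | hd
  · have : S = ∅ := by
      rw [Finset.eq_empty_iff_forall_notMem]
      intro p hp
      have := h.bd p hp
      omega
    subst this
    exact ⟨by simp, fun _ => ⟨nil, rfl, rfl⟩⟩
  · obtain ⟨m, ham, hmb, hsplit⟩ := h.exists_split (by omega)
    obtain ⟨x, rfl⟩ : ∃ x, m = a + (x + 1) := ⟨m - a - 1, by omega⟩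
    obtain ⟨y, rfl⟩ : ∃ y, d = x + y + 1 := ⟨d - x - 1, by omega⟩
    set L := S.filter (fun p => p.2 ≤ a + (x + 1)) with hL
    set R := S.filter (fun p => a + (x + 1) ≤ p.1) with hR
    have hNL : NC a (a + (x + 1)) L := by
      refine ⟨fun p hp => ?_, fun p hp q hq => ?_⟩
      · rw [hL, Finset.mem_filter] at hp
        have := h.bd p hp.1; omega
      · rw [hL, Finset.mem_filter] at hp hq
        exact h.nc p hp.1 q hq.1
    have hNR : NC (a + (x + 1)) (a + (x + 1) + (y + 1)) R := by
      refine ⟨fun p hp => ?_, fun p hp q hq => ?_⟩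
      · rw [hR, Finset.mem_filter] at hp
        have := h.bd p hp.1; omega
      · rw [hR, Finset.mem_filter] at hp hq
        exact h.nc p hp.1 q hq.1
    obtain ⟨l1, l2⟩ := ih x (by omega) _ _ hNL
    obtain ⟨r1, r2⟩ := ih y (by omega) _ _ hNR
    have hsub : S ⊆ insert (a, a + (x + y + 1 + 1)) (L ∪ R) := by
      intro p hp
      rw [Finset.mem_insert, Finset.mem_union, hL, hR, Finset.mem_filter, Finset.mem_filter]
      rcases hsplit p hp with h1 | h1 | h1
      · exact Or.inl h1
      · exact Or.inr (Or.inl ⟨hp, h1⟩)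
      · exact Or.inr (Or.inr ⟨hp, h1⟩)
    have c1 := Finset.card_le_card hsub
    have c2 := Finset.card_insert_le (a, a + (x + y + 1 + 1)) (L ∪ R)
    have c3 := Finset.card_union_le L R
    refine ⟨by omega, fun hc => ?_⟩
    obtain ⟨tl, hl1, hl2⟩ := l2 (by omega)
    obtain ⟨tr, hr1, hr2⟩ := r2 (by omega)
    refine ⟨node () tl tr, by simp only [numNodes]; omega, ?_⟩
    rw [Finset.eq_of_subset_of_card_le hsub (by omega), arcs, hl1, hr1, hl2, hr2]

/-! ### Colorings of a triangulated polygon -/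

/-- The color different from the two distinct colors `x` and `y`. -/
def third (x y : Fin 3) : Fin 3 := -(x + y)

lemma third_ne_left : ∀ {x y : Fin 3}, x ≠ y → x ≠ third x y := by decide
lemma third_ne_right : ∀ {x y : Fin 3}, x ≠ y → third x y ≠ y := by decide
lemma eq_third : ∀ {x y z : Fin 3}, x ≠ y → x ≠ z → z ≠ y → z = third x y := by decide
lemma third_third_left : ∀ x y : Fin 3, third x (third x y) = y := by decide
lemma third_third_right : ∀ x y : Fin 3, third (third x y) y = x := by decide

/-- The number of nodes of color `i` in the tree `t`, when its base arc has end colors `x` and `y`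
and every node (triangle) receives the color of its apex. -/
def cnt : BinaryTree Unit → Fin 3 → Fin 3 → Fin 3 → ℕ
  | nil, _, _, _ => 0
  | node _ l r, x, y, i =>
    cnt l x (third x y) i + cnt r (third x y) y i + if third x y = i then 1 else 0

lemma sum_cnt (t : BinaryTree Unit) : ∀ x y, ∑ i, cnt t x y i = t.numNodes := by
  induction t with
  | nil => intro x y; simp [cnt, numNodes]
  | node _ l r ihl ihr =>
    intro x y
    simp only [cnt, Finset.sum_add_distrib, ihl, ihr, numNodes]
    simp

/-- `ℓ` is a proper coloring of the polygon with vertices `a, …, a + |t| + 1` triangulated by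
the tree `t`. -/
def Good (t : BinaryTree Unit) (a : ℕ) (ℓ : ℕ → Fin 3) : Prop :=
  (∀ i, a ≤ i → i < a + (t.numNodes + 1) → ℓ i ≠ ℓ (i + 1)) ∧ ∀ p ∈ arcs t a, ℓ p.1 ≠ ℓ p.2

/-- The two ends of the base of a properly colored triangulated polygon have distinct colors. -/
lemma Good.ends {t : BinaryTree Unit} {a : ℕ} {ℓ : ℕ → Fin 3} (h : Good t a ℓ) :
    ℓ a ≠ ℓ (a + (t.numNodes + 1)) := by
  by_cases ht : t = nil
  · subst ht; exact h.1 a le_rfl (by omega)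
  · exact h.2 _ (base_mem_arcs t ht a)

lemma good_node {l r : BinaryTree Unit} {u : Unit} {a : ℕ} {ℓ : ℕ → Fin 3} :
    Good (node u l r) a ℓ ↔ ℓ a ≠ ℓ (a + (l.numNodes + r.numNodes + 2)) ∧ Good l a ℓ ∧
      Good r (a + (l.numNodes + 1)) ℓ := by
  simp only [Good, arcs, numNodes, Finset.mem_insert, Finset.mem_union]
  constructor
  · rintro ⟨h1, h2⟩
    exact ⟨h2 _ (Or.inl rfl),
      ⟨fun i hi hi' => h1 i hi (by omega), fun p hp => h2 p (Or.inr (Or.inl hp))⟩,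
      ⟨fun i hi hi' => h1 i (by omega) (by omega), fun p hp => h2 p (Or.inr (Or.inr hp))⟩⟩
  · rintro ⟨h0, ⟨h1, h2⟩, h3, h4⟩
    refine ⟨fun i hi hi' => ?_, ?_⟩
    · by_cases h : i < a + (l.numNodes + 1)
      · exact h1 i hi h
      · exact h3 i (by omega) (by omega)
    · rintro p (rfl | hp | hp)
      · exact h0
      · exact h2 p hp
      · exact h4 p hp

/-- The color of the apex is forced by the colors of the ends of the base. -/
lemma Good.apex {l r : BinaryTree Unit} {u : Unit} {a : ℕ} {ℓ : ℕ → Fin 3}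
    (h : Good (node u l r) a ℓ) :
    ℓ (a + (l.numNodes + 1)) = third (ℓ a) (ℓ (a + (l.numNodes + r.numNodes + 2))) := by
  obtain ⟨h0, hl, hr⟩ := good_node.1 h
  have h2 := hr.ends
  rw [show a + (l.numNodes + 1) + (r.numNodes + 1) = a + (l.numNodes + r.numNodes + 2) by ring]
    at h2
  exact eq_third h0 hl.ends h2

lemma Good.unique (t : BinaryTree Unit) : ∀ (a : ℕ) (ℓ ℓ' : ℕ → Fin 3), Good t a ℓ → Good t a ℓ' →
    ℓ a = ℓ' a → ℓ (a + (t.numNodes + 1)) = ℓ' (a + (t.numNodes + 1)) →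
    ∀ i, a ≤ i → i ≤ a + (t.numNodes + 1) → ℓ i = ℓ' i := by
  induction t with
  | nil =>
    intro a ℓ ℓ' _ _ h0 h1 i hi hi'
    simp only [numNodes] at hi' h1
    rcases (show i = a ∨ i = a + (0 + 1) by omega) with rfl | rfl
    · exact h0
    · exact h1
  | node _ l r ihl ihr =>
    intro a ℓ ℓ' h h' h0 h1 i hi hi'
    have hm := h.apex
    have hm' := h'.apex
    simp only [numNodes] at h1 hi'
    rw [show l.numNodes + r.numNodes + 1 + 1 = l.numNodes + r.numNodes + 2 by ring] at h1
    rw [h0, h1, ← hm'] at hm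
    obtain ⟨_, hl, hr⟩ := good_node.1 h
    obtain ⟨_, hl', hr'⟩ := good_node.1 h'
    by_cases hi2 : i ≤ a + (l.numNodes + 1)
    · exact ihl a ℓ ℓ' hl hl' h0 hm i hi hi2
    · refine ihr _ ℓ ℓ' hr hr' hm ?_ i (by omega) (by omega)
      rwa [show a + (l.numNodes + 1) + (r.numNodes + 1) = a + (l.numNodes + r.numNodes + 2) by ring]

/-- Counting the interior vertices of each color in a properly colored triangulated polygon. -/
lemma Good.count (t : BinaryTree Unit) : ∀ (a : ℕ) (ℓ : ℕ → Fin 3), Good t a ℓ → ∀ i,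
    ((Finset.Ioo a (a + (t.numNodes + 1))).filter (fun p => ℓ p = i)).card =
      cnt t (ℓ a) (ℓ (a + (t.numNodes + 1))) i := by
  induction t with
  | nil =>
    intro a ℓ _ i
    simp [cnt, numNodes]
  | node _ l r ihl ihr =>
    intro a ℓ h i
    have hm := h.apex
    obtain ⟨_, hl, hr⟩ := good_node.1 h
    have e : a + (l.numNodes + 1) + (r.numNodes + 1) = a + (l.numNodes + r.numNodes + 2) := by ring
    have hL := ihl _ _ hl i
    have hR := ihr _ _ hr i
    rw [e, hm] at hR
    rw [hm] at hL
    have hI : Finset.Ioo a (a + ((node () l r).numNodes + 1)) =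
        insert (a + (l.numNodes + 1)) (Finset.Ioo a (a + (l.numNodes + 1)) ∪
          Finset.Ioo (a + (l.numNodes + 1)) (a + (l.numNodes + r.numNodes + 2))) := by
      ext p
      simp only [numNodes, Finset.mem_Ioo, Finset.mem_insert, Finset.mem_union]
      omega
    simp only [numNodes] at hI ⊢
    rw [hI, Finset.card_filter, Finset.sum_insert (by simp), Finset.sum_union, ← Finset.card_filter,
      ← Finset.card_filter, hL, hR, hm, cnt]
    · rw [show l.numNodes + r.numNodes + 1 + 1 = l.numNodes + r.numNodes + 2 by ring]
      ring
    · rw [Finset.disjoint_left]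
      intro p hp hq
      rw [Finset.mem_Ioo] at hp hq
      omega

lemma Good.congr {t : BinaryTree Unit} {a : ℕ} {ℓ ℓ' : ℕ → Fin 3} (h : Good t a ℓ)
    (he : ∀ i, a ≤ i → i ≤ a + (t.numNodes + 1) → ℓ i = ℓ' i) : Good t a ℓ' := by
  refine ⟨fun i hi hi' => ?_, fun p hp => ?_⟩
  · rw [← he i hi hi'.le, ← he (i + 1) (by omega) (by omega)]
    exact h.1 i hi hi'
  · have := arcs_bd t a p hp
    rw [← he p.1 (by omega) (by omega), ← he p.2 (by omega) (by omega)]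
    exact h.2 p hp

lemma Good.exists_coloring (t : BinaryTree Unit) : ∀ (a : ℕ) (x y : Fin 3), x ≠ y →
    ∃ ℓ : ℕ → Fin 3, Good t a ℓ ∧ ℓ a = x ∧ ℓ (a + (t.numNodes + 1)) = y := by
  induction t with
  | nil =>
    intro a x y hxy
    refine ⟨fun p => if p ≤ a then x else y, ⟨fun i hi hi' => ?_, by simp [arcs]⟩, by simp,
      by simp [numNodes]⟩
    simp only [numNodes] at hi'
    obtain rfl : i = a := by omega
    simpa using hxy
  | node _ l r ihl ihr =>
    intro a x y hxy
    obtain ⟨f, hf, f0, f1⟩ := ihl a x (third x y) (third_ne_left hxy)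
    obtain ⟨g, hg, g0, g1⟩ := ihr (a + (l.numNodes + 1)) (third x y) y (third_ne_right hxy)
    set ℓ : ℕ → Fin 3 := fun p => if p ≤ a + (l.numNodes + 1) then f p else g p with hℓ
    have e1 : ∀ i, a ≤ i → i ≤ a + (l.numNodes + 1) → f i = ℓ i := by
      intro i _ hi
      simp [hℓ, hi]
    have e2 : ∀ i, a + (l.numNodes + 1) ≤ i → i ≤ a + (l.numNodes + 1) + (r.numNodes + 1) →
        g i = ℓ i := by
      intro i hi _
      rcases eq_or_lt_of_le hi with rfl | hlt
      · simp [hℓ, f1, g0]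
      · simp [hℓ, not_le.2 hlt]
    have e : a + (l.numNodes + 1) + (r.numNodes + 1) = a + (l.numNodes + r.numNodes + 2) := by ring
    have h0 : ℓ a = x := by rw [← e1 a le_rfl (by omega), f0]
    have h1 : ℓ (a + (l.numNodes + r.numNodes + 2)) = y := by
      rw [← e, ← e2 _ (by omega) le_rfl, g1]
    refine ⟨ℓ, good_node.2 ⟨by rwa [h0, h1], hf.congr e1, hg.congr e2⟩, h0, ?_⟩
    rw [← h1]
    rfl

/-! ### The polygon as an interval of positions -/

/-- The position of a polygon vertex when the polygon is cut open along its base: vertex `1`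
has position `0`, vertex `2` position `1`, …, and vertex `0` has the last position `n - 1`. -/
def pos {n : ℕ} (v : Fin n) : ℕ := if v.val = 0 then n - 1 else v.val - 1

/-- The polygon vertex at position `p` (for `p < n`). -/
def vert (n : ℕ) (hn : 0 < n) (p : ℕ) : Fin n := ⟨(p + 1) % n, Nat.mod_lt _ hn⟩

lemma pos_lt {n : ℕ} (v : Fin n) : pos v < n := by
  have := v.isLt
  unfold pos
  split_ifs <;> omega

lemma pos_inj {n : ℕ} {v w : Fin n} (h : pos v = pos w) : v = w := by
  have := v.isLt
  have := w.isLt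
  unfold pos at h
  ext
  split_ifs at h <;> omega

lemma pos_vert {n : ℕ} (hn : 0 < n) {p : ℕ} (hp : p < n) : pos (vert n hn p) = p := by
  unfold pos vert
  rcases eq_or_lt_of_le (show p + 1 ≤ n from hp) with h | h
  · simp only [h, Nat.mod_self]; simp; omega
  · simp only [Nat.mod_eq_of_lt h]; simp

lemma vert_pos {n : ℕ} (hn : 0 < n) (v : Fin n) : vert n hn (pos v) = v :=
  pos_inj (pos_vert hn (pos_lt v))

lemma arcLen_eq {n : ℕ} (a b : Fin n) :
    arcLen n a b = if pos a ≤ pos b then pos b - pos a else pos b + n - pos a := by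
  have ha := a.isLt
  have hb := b.isLt
  have : arcLen n a b = if a.val ≤ b.val then b.val - a.val else b.val + n - a.val := by
    unfold arcLen
    split_ifs with h
    · rw [show b.val + n - a.val = b.val - a.val + n by omega, Nat.add_mod_right,
        Nat.mod_eq_of_lt (by omega)]
    · exact Nat.mod_eq_of_lt (by omega)
  rw [this]
  unfold pos
  split_ifs <;> omega

/-- The pair of positions of the ends of a chord, in increasing order. -/
def chord {n : ℕ} : Sym2 (Fin n) → ℕ × ℕ :=
  Sym2.lift ⟨fun a b => (min (pos a) (pos b), max (pos a) (pos b)), fun a b => by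
    simp only [min_comm, max_comm]⟩

lemma chord_mk {n : ℕ} {a b : Fin n} (h : pos a ≤ pos b) : chord s(a, b) = (pos a, pos b) := by
  simp [chord, h]

lemma exists_chord {n : ℕ} (e : Sym2 (Fin n)) :
    ∃ a b, e = s(a, b) ∧ pos a ≤ pos b ∧ chord e = (pos a, pos b) := by
  induction e using Sym2.ind with
  | _ a b =>
    rcases le_total (pos a) (pos b) with h | h
    · exact ⟨a, b, rfl, h, chord_mk h⟩
    · exact ⟨b, a, Sym2.eq_swap, h, by rw [Sym2.eq_swap, chord_mk h]⟩

lemma chord_inj {n : ℕ} : Function.Injective (chord (n := n)) := by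
  intro e f h
  obtain ⟨a, b, rfl, _, he⟩ := exists_chord e
  obtain ⟨c, d, rfl, _, hf⟩ := exists_chord f
  rw [he, hf, Prod.mk.injEq] at h
  rw [pos_inj h.1, pos_inj h.2]

lemma exists_of_pair {n : ℕ} {p : ℕ × ℕ} (h : p.1 ≤ p.2) (h' : p.2 < n) :
    ∃ e : Sym2 (Fin n), chord e = p := by
  have hn : 0 < n := by omega
  refine ⟨s(vert n hn p.1, vert n hn p.2), ?_⟩
  have h1 := pos_vert hn (show p.1 < n by omega)
  have h2 := pos_vert hn h'
  rw [chord_mk (by omega), h1, h2]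

lemma isDiagonal_iff {n : ℕ} (e : Sym2 (Fin n)) :
    IsDiagonal n e ↔ (chord e).1 + 2 ≤ (chord e).2 ∧ chord e ≠ (0, n - 1) := by
  obtain ⟨x, y, rfl, hxy, he⟩ := exists_chord e
  rw [he]
  have hx := pos_lt x
  have hy := pos_lt y
  simp only [ne_eq, Prod.mk.injEq]
  constructor
  · rintro ⟨a, b, hab, h1, h2⟩
    rw [arcLen_eq] at h1 h2
    rcases Sym2.eq_iff.1 hab with ⟨rfl, rfl⟩ | ⟨rfl, rfl⟩ <;> split_ifs at h1 h2 <;> omega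
  · rintro ⟨h1, h2⟩
    refine ⟨x, y, rfl, ?_, ?_⟩ <;> rw [arcLen_eq, if_pos hxy] <;> omega

lemma crosses_of_chord {n : ℕ} {e f : Sym2 (Fin n)} (h1 : (chord e).1 < (chord f).1)
    (h2 : (chord f).1 < (chord e).2) (h3 : (chord e).2 < (chord f).2) : Crosses n e f := by
  obtain ⟨a, b, rfl, _, he⟩ := exists_chord e
  obtain ⟨c, d, rfl, _, hf⟩ := exists_chord f
  rw [he, hf] at h1 h2
  rw [he, hf] at h3
  simp only at h1 h2 h3
  have := pos_lt d
  refine ⟨a, b, c, d, rfl, rfl, ?_, ?_⟩ <;> unfold StrictBtw <;> simp only [arcLen_eq] <;>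
    split_ifs <;> omega

lemma chord_of_crosses {n : ℕ} {e f : Sym2 (Fin n)} (h : Crosses n e f) :
    ((chord e).1 < (chord f).1 ∧ (chord f).1 < (chord e).2 ∧ (chord e).2 < (chord f).2) ∨
    ((chord f).1 < (chord e).1 ∧ (chord e).1 < (chord f).2 ∧ (chord f).2 < (chord e).2) := by
  obtain ⟨a, b, c, d, rfl, rfl, h1, h2⟩ := h
  unfold StrictBtw at h1 h2
  simp only [arcLen_eq] at h1 h2
  have := pos_lt a
  have := pos_lt b
  have := pos_lt c
  have := pos_lt d
  simp only [chord, Sym2.lift_mk]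
  split_ifs at h1 h2 <;> omega

/-- The binary tree `t` encodes the triangulation `T`: the diagonals of `T` are the arcs of `t`
other than the base. -/
def Rep {n : ℕ} (T : Triangulation n) (t : BinaryTree Unit) : Prop :=
  t.numNodes = n - 2 ∧ ∀ e, e ∈ T.diags ↔ chord e ∈ arcs t 0 ∧ chord e ≠ (0, n - 1)

lemma base_mem {n : ℕ} (hn : 3 ≤ n) {t : BinaryTree Unit} (ht : t.numNodes = n - 2) :
    (0, n - 1) ∈ arcs t 0 := by
  have hne : t ≠ nil := by rintro rfl; simp only [numNodes] at ht; omega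
  have := base_mem_arcs t hne 0
  rwa [ht, show 0 + (n - 2 + 1) = n - 1 by omega] at this

lemma exists_rep_left {n : ℕ} (hn : 3 ≤ n) (T : Triangulation n) : ∃ t, Rep T t := by
  classical
  have hnot : (0, n - 1) ∉ T.diags.image chord := by
    rw [Finset.mem_image]
    rintro ⟨e, he, h⟩
    exact ((isDiagonal_iff e).1 (T.diag_mem e he)).2 h
  have hNC : NC 0 (0 + (n - 2 + 1)) (insert (0, n - 1) (T.diags.image chord)) := by
    refine ⟨fun p hp => ?_, fun p hp q hq => ?_⟩
    · rw [Finset.mem_insert, Finset.mem_image] at hp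
      rcases hp with rfl | ⟨e, he, rfl⟩
      · simp only; omega
      · have h1 := ((isDiagonal_iff e).1 (T.diag_mem e he)).1
        obtain ⟨a, b, rfl, hab, hc⟩ := exists_chord e
        have := pos_lt b
        rw [hc] at h1 ⊢
        simp only at h1 ⊢
        omega
    · rw [Finset.mem_insert, Finset.mem_image] at hp hq
      have hb : ∀ e : Sym2 (Fin n), (chord e).2 < n := by
        intro e
        obtain ⟨a, b, rfl, hab, hc⟩ := exists_chord e
        rw [hc]
        exact pos_lt b
      rcases hp with rfl | ⟨e, he, rfl⟩ <;> rcases hq with rfl | ⟨f, hf, rfl⟩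
      · simp
      · have := hb f; simp only; omega
      · simp
      · rintro ⟨h1, h2, h3⟩
        exact T.noncross e he f hf (crosses_of_chord h1 h2 h3)
  obtain ⟨t, ht, hS⟩ := (hNC.card_le_and_tree).2 (by
    rw [Finset.card_insert_of_notMem hnot, Finset.card_image_of_injective _ chord_inj,
      T.card_diags]
    omega)
  refine ⟨t, ht, fun e => ?_⟩
  rw [hS, Finset.mem_insert, chord_inj.mem_finset_image]
  constructor
  · intro he
    exact ⟨Or.inr he, ((isDiagonal_iff e).1 (T.diag_mem e he)).2⟩
  · rintro ⟨h | h, h'⟩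
    · exact absurd h h'
    · exact h

lemma exists_rep_right {n : ℕ} (hn : 3 ≤ n) (t : BinaryTree Unit) (ht : t.numNodes = n - 2) :
    ∃ T : Triangulation n, Rep T t := by
  classical
  have hA := arcs_nc t 0
  refine ⟨⟨Finset.univ.filter (fun e => chord e ∈ arcs t 0 ∧ chord e ≠ (0, n - 1)), ?_, ?_, ?_⟩,
    ht, fun e => by simp⟩
  · rw [← Finset.card_image_of_injective _ chord_inj]
    have : (Finset.univ.filter (fun e : Sym2 (Fin n) => chord e ∈ arcs t 0 ∧
        chord e ≠ (0, n - 1))).image chord = (arcs t 0).erase (0, n - 1) := by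
      ext p
      simp only [Finset.mem_image, Finset.mem_filter, Finset.mem_univ, true_and, Finset.mem_erase]
      constructor
      · rintro ⟨e, ⟨h1, h2⟩, rfl⟩
        exact ⟨h2, h1⟩
      · rintro ⟨h1, h2⟩
        have := hA.bd p h2
        obtain ⟨e, rfl⟩ := exists_of_pair (n := n) (p := p) (by omega) (by omega)
        exact ⟨e, ⟨h2, h1⟩, rfl⟩
    rw [this, Finset.card_erase_of_mem (base_mem hn ht), arcs_card, ht]
    omega
  · intro e he
    rw [Finset.mem_filter] at he
    exact (isDiagonal_iff e).2 ⟨(hA.bd _ he.2.1).2.1, he.2.2⟩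
  · intro e he f hf hc
    rw [Finset.mem_filter] at he hf
    rcases chord_of_crosses hc with h | h
    · exact hA.nc _ he.2.1 _ hf.2.1 h
    · exact hA.nc _ hf.2.1 _ he.2.1 h

lemma Rep.left_unique {n : ℕ} {T T' : Triangulation n} {t : BinaryTree Unit} (h : Rep T t)
    (h' : Rep T' t) : T = T' := by
  have : T.diags = T'.diags := by
    ext e
    rw [h.2, h'.2]
  cases T
  cases T'
  simpa using this

lemma Rep.right_unique {n : ℕ} (hn : 3 ≤ n) {T : Triangulation n} {t t' : BinaryTree Unit}
    (h : Rep T t) (h' : Rep T t') : t = t' := by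
  apply arcs_inj t t' 0
  have key : ∀ t t' : BinaryTree Unit, Rep T t → Rep T t' → arcs t 0 ⊆ arcs t' 0 := by
    intro t t' h h' p hp
    by_cases hb : p = (0, n - 1)
    · rw [hb]; exact base_mem hn h'.1
    · have := arcs_bd t 0 p hp
      have h1 := h.1
      obtain ⟨e, rfl⟩ := exists_of_pair (n := n) (p := p) (by omega) (by omega)
      exact ((h'.2 e).1 ((h.2 e).2 ⟨hp, hb⟩)).1
  exact Finset.Subset.antisymm (key t t' h h') (key t' t h' h)

/-- The encoding of triangulations by trees transports cardinalities. -/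
lemma card_triangulation {n : ℕ} (hn : 3 ≤ n) (P : Triangulation n → Prop)
    (Q : BinaryTree Unit → Prop) (hPQ : ∀ T t, Rep T t → (P T ↔ Q t)) :
    Nat.card {T : Triangulation n // P T} =
      Nat.card {t : BinaryTree Unit // t.numNodes = n - 2 ∧ Q t} := by
  choose f hf using exists_rep_left hn
  refine Nat.card_congr (Equiv.ofBijective
    (fun T => ⟨f T.1, (hf T.1).1, (hPQ _ _ (hf T.1)).1 T.2⟩) ⟨?_, ?_⟩)
  · intro T T' h
    have h1 : f T.1 = f T'.1 := congrArg Subtype.val h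
    exact Subtype.ext ((hf T.1).left_unique (h1 ▸ hf T'.1))
  · rintro ⟨t, ht, hQ⟩
    obtain ⟨T, hT⟩ := exists_rep_right hn t ht
    exact ⟨⟨T, (hPQ _ _ hT).2 hQ⟩, Subtype.ext ((hf T).right_unique hn hT)⟩

lemma Rep.proper_iff {n : ℕ} (hn : 3 ≤ n) (hn0 : 0 < n) {T : Triangulation n}
    {t : BinaryTree Unit}
    (h : Rep T t) (ℓ : Fin n → Fin 3) :
    T.Proper ℓ ↔ Good t 0 (fun p => ℓ (vert n hn0 p)) := by
  have hc := h.1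
  constructor
  · intro hP
    have hside : ∀ i, i + 1 < n → ℓ (vert n hn0 i) ≠ ℓ (vert n hn0 (i + 1)) := by
      intro i hi
      apply hP
      left
      rw [arcLen_eq, pos_vert hn0 hi, pos_vert hn0 (show i < n by omega), if_pos (by omega)]
      omega
    refine ⟨fun i _ hi => hside i (by omega), fun p hp => ?_⟩
    have hb := arcs_bd t 0 p hp
    by_cases hbase : p = (0, n - 1)
    · rw [hbase]
      apply Ne.symm
      apply hP
      left
      rw [arcLen_eq, pos_vert hn0 hn0, pos_vert hn0 (show n - 1 < n by omega), if_neg (by omega)]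
      omega
    · apply hP
      right
      rw [h.2]
      have h1 := pos_vert hn0 (show p.1 < n by omega)
      have h2 := pos_vert hn0 (show p.2 < n by omega)
      rw [chord_mk (by omega), h1, h2]
      exact ⟨hp, hbase⟩
  · intro hG a b hab
    have ha := pos_lt a
    have hb := pos_lt b
    rcases hab with hab | hab
    · rw [arcLen_eq] at hab
      split_ifs at hab with hle
      · have := hG.1 (pos a) (by omega) (by omega)
        simp only [show pos a + 1 = pos b by omega, vert_pos] at this
        exact this
      · have := hG.ends
        rw [← vert_pos hn0 a, ← vert_pos hn0 b, show pos b = 0 by omega,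
          show pos a = 0 + (t.numNodes + 1) by omega]
        exact this.symm
    · rw [h.2] at hab
      rcases le_total (pos a) (pos b) with hle | hle
      · rw [chord_mk hle] at hab
        have := hG.2 _ hab.1
        simpa only [vert_pos] using this
      · rw [Sym2.eq_swap, chord_mk hle] at hab
        have := hG.2 _ hab.1
        simp only [vert_pos] at this
        exact this.symm

lemma vert_zero {n : ℕ} (hn0 : 0 < n) (hn1 : 1 < n) : vert n hn0 0 = ⟨1, hn1⟩ := by
  ext
  simp only [vert]
  exact Nat.mod_eq_of_lt hn1

lemma vert_last {n : ℕ} (hn0 : 0 < n) : vert n hn0 (n - 1) = ⟨0, hn0⟩ := by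
  ext
  simp only [vert]
  rw [show n - 1 + 1 = n by omega, Nat.mod_self]

lemma Rep.existsUnique {n : ℕ} (hn : 3 ≤ n) (hn0 : 0 < n) (hn1 : 1 < n)
    {T : Triangulation n} {t : BinaryTree Unit}
    (h : Rep T t) : ∃! ℓ : Fin n → Fin 3,
      T.Proper ℓ ∧ ℓ ⟨0, hn0⟩ = 0 ∧ ℓ ⟨1, hn1⟩ = 1 := by
  have hc := h.1
  have hlast : 0 + (t.numNodes + 1) = n - 1 := by omega
  obtain ⟨f, hf, f0, f1⟩ := Good.exists_coloring t 0 1 0 (by decide)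
  rw [hlast] at f1
  refine ⟨fun v => f (pos v), ⟨?_, ?_, ?_⟩, ?_⟩
  · rw [h.proper_iff hn hn0]
    refine hf.congr fun i _ hi => ?_
    simp only [pos_vert hn0 (show i < n by omega)]
  · simpa [pos] using f1
  · simpa [pos] using f0
  · rintro ℓ ⟨hP, h0, h1⟩
    funext v
    rw [h.proper_iff hn hn0] at hP
    have := Good.unique t 0 _ _ hP hf (by simp only [vert_zero hn0 hn1, h1, f0])
      (by simp only [hlast, vert_last hn0, h0, f1]) (pos v) (by omega)
      (by have := pos_lt v; omega)
    simpa only [vert_pos] using this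

/-- The color counts of a properly colored triangulation: the interior counts of its tree, plus
the two ends of the base, which have colors `0` and `1`. -/
lemma Rep.count {n : ℕ} (hn : 3 ≤ n) (hn0 : 0 < n) (hn1 : 1 < n)
    {T : Triangulation n} {t : BinaryTree Unit}
    (h : Rep T t) {ℓ : Fin n → Fin 3} (hP : T.Proper ℓ) (h0 : ℓ ⟨0, hn0⟩ = 0)
    (h1 : ℓ ⟨1, hn1⟩ = 1) (i : Fin 3) :
    (Finset.univ.filter (fun v => ℓ v = i)).card =
      cnt t 1 0 i + ((if 1 = i then 1 else 0) + (if 0 = i then 1 else 0)) := by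
  have hc := h.1
  have hlast : 0 + (t.numNodes + 1) = n - 1 := by omega
  have hG := (h.proper_iff hn hn0 ℓ).1 hP
  have hcount := Good.count t 0 _ hG i
  simp only [hlast, vert_zero hn0 hn1, vert_last hn0, h0, h1] at hcount
  rw [← hcount]
  have e1 : (Finset.univ.filter (fun v => ℓ v = i)).card =
      ((Finset.range n).filter (fun p => ℓ (vert n hn0 p) = i)).card := by
    refine Finset.card_bij (fun v _ => pos v) ?_ ?_ ?_
    · intro v hv
      rw [Finset.mem_filter] at hv ⊢
      rw [vert_pos]
      exact ⟨Finset.mem_range.2 (pos_lt v), hv.2⟩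
    · intro v _ w _ hvw
      exact pos_inj hvw
    · intro p hp
      rw [Finset.mem_filter, Finset.mem_range] at hp
      exact ⟨vert n hn0 p, by simpa using hp.2, pos_vert hn0 hp.1⟩
  have e2 : Finset.range n = insert 0 (insert (n - 1) (Finset.Ioo 0 (n - 1))) := by
    ext p
    simp only [Finset.mem_range, Finset.mem_insert, Finset.mem_Ioo]
    omega
  rw [e1, e2, Finset.card_filter, Finset.sum_insert (by simp; omega), Finset.sum_insert (by simp),
    ← Finset.card_filter, vert_zero hn0 hn1, vert_last hn0, h0, h1]
  ring

/-! ### Color words of a binary tree -/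

/-- The color words of the nodes of `t`: each node contributes the sequence of colors met on the
way from the root of `t` to it. The left child of a node lies across the side with end colors
`x` and `third x y`, so it has color `y`; likewise the right child has color `x`. -/
def words : BinaryTree Unit → Fin 3 → Fin 3 → Finset (List (Fin 3))
  | nil, _, _ => ∅
  | node _ l r, x, y => (insert [] (words l x (third x y) ∪ words r (third x y) y)).image
      (List.cons (third x y))

lemma mem_words_node {u : Unit} {l r : BinaryTree Unit} {x y : Fin 3} {w : List (Fin 3)} :
    w ∈ words (node u l r) x y ↔ ∃ v, w = third x y :: v ∧
      (v = [] ∨ v ∈ words l x (third x y) ∨ v ∈ words r (third x y) y) := by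
  simp only [words, Finset.mem_image, Finset.mem_insert, Finset.mem_union]
  constructor
  · rintro ⟨v, h, rfl⟩
    exact ⟨v, rfl, h⟩
  · rintro ⟨v, rfl, h⟩
    exact ⟨v, h, rfl⟩

lemma cons_mem_words_node {u : Unit} {l r : BinaryTree Unit} {x y : Fin 3} {v : List (Fin 3)} :
    third x y :: v ∈ words (node u l r) x y ↔
      (v = [] ∨ v ∈ words l x (third x y) ∨ v ∈ words r (third x y) y) := by
  rw [mem_words_node]
  constructor
  · rintro ⟨v', h, h'⟩
    rw [(List.cons.inj h).2]
    exact h'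
  · intro h
    exact ⟨v, rfl, h⟩

lemma head_words {t : BinaryTree Unit} {x y : Fin 3} {w : List (Fin 3)} (h : w ∈ words t x y) :
    w.head? = some (third x y) := by
  cases t with
  | nil => simp [words] at h
  | node _ l r =>
    obtain ⟨v, rfl, _⟩ := mem_words_node.1 h
    rfl

/-- The sets of color words that come from injectively 3-colored rooted trees with root color `c`:
nonempty words starting with `c`, without repeated consecutive letters, closed under nonempty
prefixes. -/
structure Adm (c : Fin 3) (W : Set (List (Fin 3))) : Prop where
  head : ∀ w ∈ W, w.head? = some c
  chain : ∀ w ∈ W, w.IsChain (· ≠ ·)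
  pre : ∀ w d, w ≠ [] → w ++ [d] ∈ W → w ∈ W

lemma adm_words (t : BinaryTree Unit) : ∀ x y, x ≠ y → Adm (third x y) (words t x y) := by
  intro x y hxy
  refine ⟨fun w hw => head_words hw, ?_, ?_⟩
  · induction t generalizing x y with
    | nil => simp [words]
    | node _ l r ihl ihr =>
      intro w hw
      obtain ⟨v, rfl, hv⟩ := mem_words_node.1 (Finset.mem_coe.1 hw)
      rw [List.isChain_cons]
      rcases hv with rfl | hv | hv
      · simp
      · refine ⟨fun z hz => ?_, ihl x _ (third_ne_left hxy) v hv⟩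
        rw [head_words hv, Option.mem_some_iff, third_third_left] at hz
        rw [← hz]
        exact third_ne_right hxy
      · refine ⟨fun z hz => ?_, ihr _ y (third_ne_right hxy) v hv⟩
        rw [head_words hv, Option.mem_some_iff, third_third_right] at hz
        rw [← hz]
        exact (third_ne_left hxy).symm
  · induction t generalizing x y with
    | nil => simp [words]
    | node _ l r ihl ihr =>
      intro w d hw hwd
      obtain ⟨v, hv, hv'⟩ := mem_words_node.1 (Finset.mem_coe.1 hwd)
      cases w with
      | nil => exact absurd rfl hw
      | cons c w =>
        rw [List.cons_append] at hv
        obtain ⟨rfl, rfl⟩ := List.cons.inj hv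
        rw [Finset.mem_coe, cons_mem_words_node]
        by_cases hw0 : w = []
        · exact Or.inl hw0
        · rcases hv' with h | h | h
          · simp at h
          · exact Or.inr (Or.inl (ihl x _ (third_ne_left hxy) w d hw0 h))
          · exact Or.inr (Or.inr (ihr _ y (third_ne_right hxy) w d hw0 h))

lemma Adm.singleton_mem {c : Fin 3} {W : Set (List (Fin 3))} (h : Adm c W) {w : List (Fin 3)}
    (hw : w ∈ W) : [c] ∈ W := by
  induction w using List.reverseRecOn with
  | nil => simpa using h.head _ hw
  | append_singleton w d ih =>
    by_cases hw0 : w = []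
    · subst hw0
      have := h.head _ hw
      simp only [List.nil_append, List.head?_cons, Option.some.injEq] at this
      subst this
      exact hw
    · exact ih (h.pre w d hw0 hw)

lemma eq_or_eq_of_third_ne : ∀ {x y d : Fin 3}, x ≠ y → third x y ≠ d → d = x ∨ d = y := by decide

/-- Every admissible set of words of bounded length is the word set of a binary tree: a node has at
most one child of each of the two colors other than its own. -/
lemma Adm.exists_tree (k : ℕ) : ∀ (x y : Fin 3) (W : Set (List (Fin 3))), x ≠ y →
    Adm (third x y) W → (∀ w ∈ W, w.length ≤ k) → ∃ t, ∀ w, w ∈ words t x y ↔ w ∈ W := by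
  induction k with
  | zero =>
    intro x y W _ hW hk
    refine ⟨nil, fun w => ?_⟩
    simp only [words, Finset.notMem_empty, false_iff]
    intro hw
    have h1 := hW.head w hw
    rw [List.length_eq_zero_iff.1 (Nat.le_zero.1 (hk w hw))] at h1
    simp at h1
  | succ k ih =>
    intro x y W hxy hW hk
    by_cases hE : ∃ w, w ∈ W
    · obtain ⟨w0, hw0⟩ := hE
      have hc := hW.singleton_mem hw0
      have hsub : ∀ d, Adm d {w | w.head? = some d ∧ third x y :: w ∈ W} := by
        intro d
        refine ⟨fun w hw => hw.1, fun w hw => (hW.chain _ hw.2).tail, fun w e hw hwe => ⟨?_, ?_⟩⟩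
        · have := hwe.1
          rwa [List.head?_append_of_ne_nil _ hw] at this
        · exact hW.pre (third x y :: w) e (by simp) hwe.2
      have hlen : ∀ d, ∀ w ∈ {w | w.head? = some d ∧ third x y :: w ∈ W}, w.length ≤ k := by
        intro d w hw
        have := hk _ hw.2
        simpa using this
      have hL := hsub y
      rw [← third_third_left x y] at hL
      have hR := hsub x
      rw [← third_third_right x y] at hR
      obtain ⟨l, hl⟩ := ih x (third x y) _ (third_ne_left hxy) hL
        (by rw [third_third_left]; exact hlen y)
      obtain ⟨r, hr⟩ := ih (third x y) y _ (third_ne_right hxy) hR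
        (by rw [third_third_right]; exact hlen x)
      refine ⟨node () l r, fun w => ?_⟩
      rw [mem_words_node]
      simp only [hl, hr, third_third_left, third_third_right, Set.mem_ofPred_eq]
      constructor
      · rintro ⟨v, rfl, rfl | h | h⟩
        · exact hc
        · exact h.2
        · exact h.2
      · intro hw
        have hh := hW.head w hw
        cases w with
        | nil => simp at hh
        | cons c v =>
          simp only [List.head?_cons, Option.some.injEq] at hh
          subst hh
          refine ⟨v, rfl, ?_⟩
          cases v with
          | nil => exact Or.inl rfl
          | cons d v =>
            have := (List.isChain_cons_cons.1 (hW.chain _ hw)).1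
            rcases eq_or_eq_of_third_ne hxy this with rfl | rfl
            · exact Or.inr (Or.inr ⟨rfl, hw⟩)
            · exact Or.inr (Or.inl ⟨rfl, hw⟩)
    · refine ⟨nil, fun w => ?_⟩
      simp only [words, Finset.notMem_empty, false_iff]
      exact fun hw => hE ⟨w, hw⟩

lemma words_inj (t : BinaryTree Unit) : ∀ (t' : BinaryTree Unit) (x y : Fin 3), x ≠ y →
    words t x y = words t' x y → t = t' := by
  induction t with
  | nil =>
    intro t' x y _ h
    cases t' with
    | nil => rfl
    | node _ l r =>
      have : [third x y] ∈ words (node () l r) x y := cons_mem_words_node.2 (Or.inl rfl)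
      rw [← h] at this
      simp [words] at this
  | node _ l r ihl ihr =>
    intro t' x y hxy h
    cases t' with
    | nil =>
      have : [third x y] ∈ words (node () l r) x y := cons_mem_words_node.2 (Or.inl rfl)
      rw [h] at this
      simp [words] at this
    | node _ l' r' =>
      have key : ∀ v, (v = [] ∨ v ∈ words l x (third x y) ∨ v ∈ words r (third x y) y) ↔
          (v = [] ∨ v ∈ words l' x (third x y) ∨ v ∈ words r' (third x y) y) := by
        intro v
        rw [← cons_mem_words_node (u := ()), ← cons_mem_words_node (u := ())]
        exact iff_of_eq (congrArg (fun S => third x y :: v ∈ S) h)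
      have hL : ∀ {t v}, v ∈ words t x (third x y) → v.head? = some y := by
        intro t v hv
        rw [head_words hv, third_third_left]
      have hR : ∀ {t v}, v ∈ words t (third x y) y → v.head? = some x := by
        intro t v hv
        rw [head_words hv, third_third_right]
      have hne : ∀ {v : List (Fin 3)}, v.head? = some x → v.head? = some y → False := by
        intro v h1 h2
        rw [h1] at h2
        exact hxy (Option.some.inj h2)
      have hl : words l x (third x y) = words l' x (third x y) := by
        ext v
        constructor <;> intro hv
        · rcases (key v).1 (Or.inr (Or.inl hv)) with rfl | h1 | h1
          · simpa using hL hv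
          · exact h1
          · exact (hne (hR h1) (hL hv)).elim
        · rcases (key v).2 (Or.inr (Or.inl hv)) with rfl | h1 | h1
          · simpa using hL hv
          · exact h1
          · exact (hne (hR h1) (hL hv)).elim
      have hr : words r (third x y) y = words r' (third x y) y := by
        ext v
        constructor <;> intro hv
        · rcases (key v).1 (Or.inr (Or.inr hv)) with rfl | h1 | h1
          · simpa using hR hv
          · exact (hne (hR hv) (hL h1)).elim
          · exact h1
        · rcases (key v).2 (Or.inr (Or.inr hv)) with rfl | h1 | h1
          · simpa using hR hv
          · exact (hne (hR hv) (hL h1)).elim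
          · exact h1
      rw [ihl _ _ _ (third_ne_left hxy) hl, ihr _ _ _ (third_ne_right hxy) hr]

lemma sum_words_node {u : Unit} {l r : BinaryTree Unit} {x y : Fin 3} (hxy : x ≠ y)
    (f : List (Fin 3) → ℕ) :
    ∑ w ∈ words (node u l r) x y, f w = f [third x y] +
      (∑ w ∈ words l x (third x y), f (third x y :: w) +
        ∑ w ∈ words r (third x y) y, f (third x y :: w)) := by
  rw [words, Finset.sum_image (by intro a _ b _ h; exact (List.cons.inj h).2),
    Finset.sum_insert, Finset.sum_union]
  · rw [Finset.disjoint_left]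
    intro v h1 h2
    have h3 := head_words h1
    rw [head_words h2, third_third_left, third_third_right] at h3
    exact hxy (Option.some.inj h3)
  · rw [Finset.mem_union]
    rintro (h | h)
    · simpa using head_words h
    · simpa using head_words h

lemma card_words (t : BinaryTree Unit) : ∀ x y, x ≠ y → (words t x y).card = t.numNodes := by
  induction t with
  | nil => intro x y _; simp [words, numNodes]
  | node _ l r ihl ihr =>
    intro x y hxy
    rw [Finset.card_eq_sum_ones, sum_words_node hxy, ← Finset.card_eq_sum_ones,
      ← Finset.card_eq_sum_ones, ihl _ _ (third_ne_left hxy), ihr _ _ (third_ne_right hxy),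
      numNodes]
    ring

lemma count_words (t : BinaryTree Unit) (i : Fin 3) : ∀ x y, x ≠ y →
    ((words t x y).filter (fun w => w.getLast? = some i)).card = cnt t x y i := by
  induction t with
  | nil => intro x y _; simp [words, cnt]
  | node _ l r ihl ihr =>
    intro x y hxy
    have key : ∀ (t : BinaryTree Unit) (a b : Fin 3),
        ∑ w ∈ words t a b, (if (third x y :: w).getLast? = some i then 1 else 0) =
          ((words t a b).filter (fun w => w.getLast? = some i)).card := by
      intro t a b
      rw [Finset.card_filter]
      refine Finset.sum_congr rfl fun w hw => ?_
      have hne : w ≠ [] := by rintro rfl; simpa using head_words hw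
      obtain ⟨c, w, rfl⟩ := List.exists_cons_of_ne_nil hne
      rw [List.getLast?_cons_cons]
    rw [Finset.card_filter, sum_words_node hxy, key, key, ihl _ _ (third_ne_left hxy),
      ihr _ _ (third_ne_right hxy), cnt]
    simp only [List.getLast?_singleton, Option.some.injEq]
    ring

/-! ### Injectively colored rooted trees and their color words -/

/-- `p` is a directed path from `r` to `v`. -/
def IsPath {V : Type*} (adj : V → V → Prop) (r v : V) (p : List V) : Prop :=
  List.IsChain adj p ∧ p.head? = some r ∧ p.getLast? = some v

lemma IsPath.single {V : Type*} (adj : V → V → Prop) (r : V) : IsPath adj r r [r] :=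
  ⟨List.isChain_singleton _, rfl, rfl⟩

lemma IsPath.snoc {V : Type*} {adj : V → V → Prop} {r v w : V} {p : List V}
    (h : IsPath adj r v p) (hvw : adj v w) : IsPath adj r w (p ++ [w]) := by
  obtain ⟨h1, h2, h3⟩ := h
  refine ⟨h1.append (List.isChain_singleton _) ?_, ?_, ?_⟩
  · intro a ha b hb
    rw [h3, Option.mem_some_iff] at ha
    simp only [List.head?_cons, Option.mem_some_iff] at hb
    rwa [← ha, ← hb]
  · rw [List.head?_append, h2]; rfl
  · simp

lemma IsPath.cases {V : Type*} {adj : V → V → Prop} {r v : V} {p : List V}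
    (h : IsPath adj r v p) :
    (v = r ∧ p = [r]) ∨ ∃ u q, p = q ++ [v] ∧ IsPath adj r u q ∧ adj u v := by
  obtain ⟨h1, h2, h3⟩ := h
  rcases List.eq_nil_or_concat' p with rfl | ⟨q, x, rfl⟩
  · simp at h2
  · rw [List.getLast?_concat, Option.some.injEq] at h3
    subst h3
    rcases List.eq_nil_or_concat' q with rfl | ⟨q', u, rfl⟩
    · left
      simp only [List.nil_append, List.head?_cons, Option.some.injEq] at h2
      exact ⟨h2, by rw [h2]; rfl⟩
    · right
      refine ⟨u, q' ++ [u], rfl, ⟨h1.left_of_append, ?_, List.getLast?_concat⟩, ?_⟩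
      · rwa [List.head?_append_of_ne_nil _ (by simp)] at h2
      · have := h1.rel_getLast_head_of_append (by simp) (by simp)
        simpa using this

variable {N : ℕ}

lemma exists_path (F : CForest 3 1 N) (v : Fin N) : ∃! p, IsPath F.adj (F.root 0) v p := by
  have h := F.path_unique v
  simp only [Fin.exists_fin_one] at h
  exact h

/-- The unique path from the root to `v`. -/
noncomputable def path (F : CForest 3 1 N) (v : Fin N) : List (Fin N) := (exists_path F v).choose

lemma path_spec (F : CForest 3 1 N) (v : Fin N) : IsPath F.adj (F.root 0) v (path F v) :=
  (exists_path F v).choose_spec.1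

lemma path_eq (F : CForest 3 1 N) {v : Fin N} {p : List (Fin N)}
    (h : IsPath F.adj (F.root 0) v p) : path F v = p :=
  ((exists_path F v).choose_spec.2 _ h).symm

/-- The sequence of colors on the path from the root to `v`. -/
noncomputable def word (F : CForest 3 1 N) (v : Fin N) : List (Fin 3) := (path F v).map F.color

lemma word_root (F : CForest 3 1 N) : word F (F.root 0) = [F.color (F.root 0)] := by
  rw [word, path_eq F (IsPath.single _ _)]; rfl

lemma word_adj (F : CForest 3 1 N) {v w : Fin N} (h : F.adj v w) :
    word F w = word F v ++ [F.color w] := by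
  rw [word, path_eq F ((path_spec F v).snoc h), List.map_append, word]; rfl

lemma not_adj_self (F : CForest 3 1 N) (v : Fin N) : ¬ F.adj v v := by
  intro h
  have := congrArg List.length (word_adj F h)
  simp at this

lemma color_ne (F : CForest 3 1 N) {v w : Fin N} (h : F.adj v w) : F.color v ≠ F.color w := by
  intro hc
  have := F.color_inj v (Or.inl rfl) (Or.inr h) hc
  subst this
  exact not_adj_self F _ h

/-- Induction along the arrows of a rooted tree. -/
lemma vertex_induction (F : CForest 3 1 N) {P : Fin N → Prop} (h0 : P (F.root 0))
    (h1 : ∀ u v, F.adj u v → P u → P v) (v : Fin N) : P v := by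
  have : ∀ (k : ℕ) (v : Fin N) (p : List (Fin N)), p.length ≤ k → IsPath F.adj (F.root 0) v p →
      P v := by
    intro k
    induction k with
    | zero =>
      intro v p hp h
      rw [List.length_eq_zero_iff.1 (Nat.le_zero.1 hp)] at h
      simp [IsPath] at h
    | succ k ih =>
      intro v p hp h
      rcases h.cases with ⟨rfl, _⟩ | ⟨u, q, rfl, hq, huv⟩
      · exact h0
      · exact h1 u v huv (ih u q (by simpa using hp) hq)
  exact this _ v _ le_rfl (path_spec F v)

lemma root_or_adj (F : CForest 3 1 N) (v : Fin N) : v = F.root 0 ∨ ∃ u, F.adj u v :=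
  vertex_induction F (P := fun v => v = F.root 0 ∨ ∃ u, F.adj u v) (Or.inl rfl)
    (fun u _ h _ => Or.inr ⟨u, h⟩) v

lemma word_head (F : CForest 3 1 N) (v : Fin N) :
    (word F v).head? = some (F.color (F.root 0)) := by
  refine vertex_induction F (P := fun v => (word F v).head? = _) ?_ ?_ v
  · rw [word_root]; rfl
  · intro u v h ih
    rw [word_adj F h, List.head?_append, ih]; rfl

lemma word_ne_nil (F : CForest 3 1 N) (v : Fin N) : word F v ≠ [] := by
  intro h
  simpa [h] using word_head F v

lemma word_last (F : CForest 3 1 N) (v : Fin N) : (word F v).getLast? = some (F.color v) := by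
  rcases root_or_adj F v with rfl | ⟨u, h⟩
  · rw [word_root]; rfl
  · rw [word_adj F h, List.getLast?_concat]

lemma word_chain (F : CForest 3 1 N) (v : Fin N) : (word F v).IsChain (· ≠ ·) := by
  refine vertex_induction F (P := fun v => (word F v).IsChain (· ≠ ·)) ?_ ?_ v
  · rw [word_root]; exact List.isChain_singleton _
  · intro u v h ih
    rw [word_adj F h]
    refine ih.append (List.isChain_singleton _) ?_
    intro a ha b hb
    rw [word_last, Option.mem_some_iff] at ha
    simp only [List.head?_cons, Option.mem_some_iff] at hb
    rw [← ha, ← hb]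
    exact color_ne F h

lemma eq_root_of_word (F : CForest 3 1 N) {v : Fin N} {d : Fin 3} (h : word F v = [d]) :
    v = F.root 0 := by
  rcases root_or_adj F v with h' | ⟨u, hu⟩
  · exact h'
  · rw [word_adj F hu] at h
    have h1 := congrArg List.length h
    have h2 := List.length_pos_of_ne_nil (word_ne_nil F u)
    simp only [List.length_append, List.length_singleton] at h1
    omega

/-- A vertex is determined by its color word, because the children of a vertex have distinct
colors. -/
lemma word_inj (F : CForest 3 1 N) : Function.Injective (word F) := by
  intro v
  refine vertex_induction F (P := fun v => ∀ ⦃w⦄, word F v = word F w → v = w) ?_ ?_ v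
  · intro w h
    rw [word_root] at h
    exact (eq_root_of_word F h.symm).symm
  · intro u v huv ih w h
    rcases root_or_adj F w with rfl | ⟨u', hu'⟩
    · rw [word_root] at h
      exact eq_root_of_word F h
    · rw [word_adj F huv, word_adj F hu'] at h
      obtain ⟨h1, h2⟩ := List.append_inj' h rfl
      have := ih h1
      subst this
      exact F.color_inj u (Or.inr huv) (Or.inr hu') (List.cons.inj h2).1

lemma adj_iff_word (F : CForest 3 1 N) {v w : Fin N} :
    F.adj v w ↔ ∃ d, word F w = word F v ++ [d] := by
  constructor
  · exact fun h => ⟨_, word_adj F h⟩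
  · rintro ⟨d, h⟩
    rcases root_or_adj F w with rfl | ⟨u, hu⟩
    · rw [word_root] at h
      have h1 := congrArg List.length h
      have h2 := List.length_pos_of_ne_nil (word_ne_nil F v)
      simp only [List.length_append, List.length_singleton] at h1
      omega
    · rw [word_adj F hu] at h
      rwa [← word_inj F (List.append_inj' h rfl).1]

lemma adm_word (F : CForest 3 1 N) : Adm (F.color (F.root 0)) (Set.range (word F)) := by
  refine ⟨?_, ?_, ?_⟩
  · rintro _ ⟨v, rfl⟩
    exact word_head F v
  · rintro _ ⟨v, rfl⟩
    exact word_chain F v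
  · rintro w d hw ⟨v, hv⟩
    rcases root_or_adj F v with rfl | ⟨u, hu⟩
    · rw [word_root] at hv
      have h1 := congrArg List.length hv
      have h2 := List.length_pos_of_ne_nil hw
      simp only [List.length_append, List.length_singleton] at h1
      omega
    · rw [word_adj F hu] at hv
      exact ⟨u, (List.append_inj' hv rfl).1⟩

lemma iso_iff_range_word (F G : CForest 3 1 N) :
    CForest.Iso F G ↔ Set.range (word F) = Set.range (word G) := by
  constructor
  · rintro ⟨e, h1, h2, h3⟩
    have key : ∀ v, word G (e v) = word F v := by
      refine vertex_induction F ?_ ?_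
      · rw [h2, word_root, word_root, ← h2, h3]
      · intro u v h ih
        rw [word_adj G ((h1 u v).1 h), word_adj F h, ih, h3]
    ext w
    constructor
    · rintro ⟨v, rfl⟩
      exact ⟨e v, key v⟩
    · rintro ⟨v, rfl⟩
      exact ⟨e.symm v, by rw [← key, e.apply_symm_apply]⟩
  · intro h
    have hex : ∀ v, ∃ w, word G w = word F v := by
      intro v
      have : word F v ∈ Set.range (word G) := h ▸ ⟨v, rfl⟩
      exact this
    choose f hf using hex
    have hinj : Function.Injective f := by
      intro v w hvw
      apply word_inj F
      rw [← hf, ← hf, hvw]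
    refine ⟨Equiv.ofBijective f (Finite.injective_iff_bijective.1 hinj), ?_, ?_, ?_⟩
    · intro v w
      simp only [Equiv.ofBijective_apply, adj_iff_word, hf]
    · intro j
      obtain rfl : j = 0 := Subsingleton.elim _ _
      apply eq_root_of_word G
      rw [Equiv.ofBijective_apply, hf, word_root]
    · intro v
      have := word_last G (f v)
      rw [hf, word_last, Option.some.injEq] at this
      exact this.symm

/-- The binary tree `t` encodes the colored rooted tree `F`: they have the same color words. The
base colors `1` and `0` of `t` make its root have color `2`. -/
def TRep (F : CForest 3 1 N) (t : BinaryTree Unit) : Prop :=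
  ∀ w, w ∈ words t 1 0 ↔ w ∈ Set.range (word F)

lemma exists_trep_left (F : CForest 3 1 N) (h : F.color (F.root 0) = 2) : ∃ t, TRep F t := by
  have hA := adm_word F
  rw [h] at hA
  -- The lengths of the finitely many words of `F` are bounded.
  obtain ⟨k, hk⟩ := (Set.finite_range (fun v => (word F v).length)).bddAbove
  refine Adm.exists_tree k 1 0 _ (by decide) hA ?_
  rintro _ ⟨v, rfl⟩
  exact hk ⟨v, rfl⟩

lemma TRep.iso_iff {F G : CForest 3 1 N} {t t' : BinaryTree Unit} (h : TRep F t)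
    (h' : TRep G t') : CForest.Iso F G ↔ t = t' := by
  rw [iso_iff_range_word]
  constructor
  · intro he
    apply words_inj t t' 1 0 (by decide)
    ext w
    rw [h w, h' w, he]
  · rintro rfl
    ext w
    rw [← h w, ← h' w]

lemma TRep.count {F : CForest 3 1 N} {t : BinaryTree Unit} (h : TRep F t) (i : Fin 3) :
    (Finset.univ.filter (fun v => F.color v = i)).card = cnt t 1 0 i := by
  rw [← count_words t i 1 0 (by decide)]
  refine Finset.card_bij (fun v _ => word F v) ?_ ?_ ?_
  · intro v hv
    rw [Finset.mem_filter] at hv ⊢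
    exact ⟨(h _).2 ⟨v, rfl⟩, by rw [word_last, hv.2]⟩
  · intro v _ w _ hvw
    exact word_inj F hvw
  · intro w hw
    rw [Finset.mem_filter] at hw
    obtain ⟨v, rfl⟩ := (h _).1 hw.1
    refine ⟨v, ?_, rfl⟩
    rw [Finset.mem_filter]
    exact ⟨Finset.mem_univ _, by simpa [word_last] using hw.2⟩

/-- Every nonempty binary tree with `N` nodes encodes a colored rooted tree on `Fin N`: its
vertices are the color words, with an arrow from each word to its one-letter extensions. -/
lemma exists_trep_right (t : BinaryTree Unit) (ht : t ≠ nil) (hN : t.numNodes = N) :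
    ∃ F : CForest 3 1 N, F.color (F.root 0) = 2 ∧ TRep F t := by
  have hA : Adm 2 (words t 1 0 : Set (List (Fin 3))) := adm_words t 1 0 (by decide)
  have hroot : [2] ∈ words t 1 0 := by
    cases t with
    | nil => exact absurd rfl ht
    | node _ l r => exact cons_mem_words_node.2 (Or.inl rfl)
  have hcard : (words t 1 0).card = N := by rw [card_words t 1 0 (by decide), hN]
  set e : Fin N ≃ words t 1 0 := ((words t 1 0).equivFinOfCardEq hcard).symm with he
  have hne : ∀ v, (e v).1 ≠ [] := by
    intro v h
    have := hA.head _ (e v).2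
    rw [h] at this
    simp at this
  have hinj : ∀ {v w}, (e v).1 = (e w).1 → v = w := fun h => e.injective (Subtype.ext h)
  set adj : Fin N → Fin N → Prop := fun v w => ∃ d, (e w).1 = (e v).1 ++ [d] with hadj
  set r : Fin N := e.symm ⟨[2], hroot⟩ with hr
  have her : (e r).1 = [2] := by rw [hr, e.apply_symm_apply]
  have hnr : ∀ u, ¬ adj u r := by
    rintro u ⟨d, hd⟩
    rw [her] at hd
    have h1 := congrArg List.length hd
    have h2 := List.length_pos_of_ne_nil (hne u)
    simp only [List.length_append, List.length_singleton] at h1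
    omega
  have hex : ∀ (w : List (Fin 3)) (v : Fin N), (e v).1 = w → ∃ p, IsPath adj r v p := by
    intro w
    induction w using List.reverseRecOn with
    | nil => intro v hv; exact absurd hv (hne v)
    | append_singleton w d ih =>
      intro v hv
      have hv' := (e v).2
      rw [hv] at hv'
      by_cases hw : w = []
      · subst hw
        have := hA.head _ hv'
        simp only [List.nil_append, List.head?_cons, Option.some.injEq] at this
        subst this
        obtain rfl : v = r := hinj (by rw [hv, her]; rfl)
        exact ⟨_, IsPath.single _ _⟩
      · have hw' : w ∈ words t 1 0 := hA.pre w d hw hv'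
        have hu : (e (e.symm ⟨w, hw'⟩)).1 = w := by rw [e.apply_symm_apply]
        obtain ⟨p, hp⟩ := ih _ hu
        exact ⟨_, hp.snoc ⟨d, by rw [hv, hu]⟩⟩
  have huniq : ∀ (k : ℕ) (p q : List (Fin N)) (v : Fin N), p.length ≤ k → IsPath adj r v p →
      IsPath adj r v q → p = q := by
    intro k
    induction k with
    | zero =>
      intro p q v hk hp
      rw [List.length_eq_zero_iff.1 (Nat.le_zero.1 hk)] at hp
      simp [IsPath] at hp
    | succ k ih =>
      intro p q v hk hp hq
      rcases hp.cases with ⟨h1, h2⟩ | ⟨u, p', rfl, hp', d, hd⟩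
      · rcases hq.cases with ⟨_, h4⟩ | ⟨u', q', rfl, hq', hu'⟩
        · rw [h2, h4]
        · rw [h1] at hu'
          exact absurd hu' (hnr u')
      · rcases hq.cases with ⟨h3, _⟩ | ⟨u', q', rfl, hq', d', hd'⟩
        · rw [h3] at hd
          exact absurd ⟨d, hd⟩ (hnr u)
        · rw [hd] at hd'
          obtain rfl := hinj (List.append_inj' hd' rfl).1
          rw [ih p' q' u (by simpa using hk) hp' hq']
  set col : Fin N → Fin 3 := fun v => (e v).1.getLast (hne v) with hcol
  have hcol' : ∀ v, (e v).1.getLast? = some (col v) := fun v => List.getLast?_eq_some_getLast _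
  have hcadj : ∀ v w, adj v w → (e w).1 = (e v).1 ++ [col w] := by
    rintro v w ⟨d, hd⟩
    have := hcol' w
    rw [hd, List.getLast?_concat, Option.some.injEq] at this
    rw [hd, this]
  have hcne : ∀ v w, adj v w → col v ≠ col w := by
    intro v w h
    have h1 := hA.chain _ (e w).2
    rw [hcadj v w h, List.isChain_append] at h1
    exact h1.2.2 _ (hcol' v) _ rfl
  let F : CForest 3 1 N :=
    { adj := adj
      root := fun _ => r
      color := col
      root_inj := fun _ _ _ => Subsingleton.elim _ _
      path_unique := by
        intro v
        obtain ⟨p, hp⟩ := hex _ v rfl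
        refine ⟨p, ⟨hp.1, ⟨0, hp.2.1⟩, hp.2.2⟩, ?_⟩
        rintro q ⟨h1, ⟨_, h2⟩, h3⟩
        exact huniq _ q p v le_rfl ⟨h1, h2, h3⟩ hp
      color_inj := by
        intro v a ha b hb hab
        rcases ha with rfl | ha <;> rcases hb with rfl | hb
        · rfl
        · exact absurd hab (hcne _ _ hb)
        · exact absurd hab.symm (hcne _ _ ha)
        · apply hinj
          rw [hcadj _ _ ha, hcadj _ _ hb, hab] }
  have hFr : F.color (F.root 0) = 2 := by
    have := hcol' r
    rw [her] at this
    exact (Option.some.inj this).symm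
  have hword : ∀ v, word F v = (e v).1 := by
    refine vertex_induction F ?_ ?_
    · rw [word_root, hFr]; exact her.symm
    · intro u v h ih
      rw [word_adj F h, ih]
      exact (hcadj u v h).symm
  refine ⟨F, hFr, fun w => ?_⟩
  constructor
  · intro hw
    exact ⟨e.symm ⟨w, hw⟩, by rw [hword, e.apply_symm_apply]⟩
  · rintro ⟨v, rfl⟩
    rw [hword]
    exact (e v).2

/-- Isomorphism classes of injectively colored rooted trees with root color `2` are counted by
binary trees with the same color counts. -/
lemma treeCount_eq (lam : Fin 3 → ℕ) (hpos : 1 ≤ ∑ i, lam i) :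
    treeCount 3 lam 2 = Nat.card {t : BinaryTree Unit // ∀ i, cnt t 1 0 i = lam i} := by
  unfold treeCount forestCount
  have hroot : ∀ F : {F : CForest 3 1 (∑ i, lam i) //
      (∀ i : Fin 3, (Finset.univ.filter (fun v => F.color v = i)).card = lam i) ∧
      (∀ j : Fin 1, F.color (F.root j) = 2)}, ∃ t, TRep F.1 t :=
    fun F => exists_trep_left F.1 (F.2.2 0)
  choose f hf using hroot
  refine Nat.card_congr (Equiv.ofBijective
    (Quot.lift (fun F => ⟨f F, fun i => by rw [← (hf F).count, F.2.1 i]⟩) ?_) ⟨?_, ?_⟩)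
  · intro F G h
    exact Subtype.ext (((hf F).iso_iff (hf G)).1 h)
  · rintro ⟨F⟩ ⟨G⟩ h
    exact Quot.sound (((hf F).iso_iff (hf G)).2 (congrArg Subtype.val h))
  · rintro ⟨t, ht⟩
    have hN : t.numNodes = ∑ i, lam i := by
      rw [← sum_cnt t 1 0]
      exact Finset.sum_congr rfl fun i _ => ht i
    have hne : t ≠ nil := by
      rintro rfl
      simp only [numNodes] at hN
      omega
    obtain ⟨F, h2, hF⟩ := exists_trep_right t hne hN
    have hFr : ∀ j : Fin 1, F.color (F.root j) = 2 := by
      intro j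
      rwa [Subsingleton.elim j 0]
    refine ⟨Quot.mk _ ⟨F, fun i => by rw [hF.count, ht i], hFr⟩, Subtype.ext ?_⟩
    exact ((hf _).iso_iff hF).1 ((iso_iff_range_word _ _).2 rfl)

/-! ### Catalan numbers -/

lemma catalan_eq_fussCat (m : ℕ) : (catalan m : ℚ) = fussCat m 2 1 := by
  have h1 : ((m : ℚ) + 1) * catalan m = Nat.centralBinom m := by
    exact_mod_cast succ_mul_catalan_eq_centralBinom m
  have h2 : ((2 * m + 1).choose m : ℚ) * (m + 1) = (2 * m).choose m * (2 * m + 1) := by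
    have := Nat.choose_mul_succ_eq (2 * m) m
    rw [show 2 * m + 1 - m = m + 1 by omega] at this
    exact_mod_cast this.symm
  rw [← Nat.centralBinom_eq_two_mul_choose, ← h1] at h2
  unfold fussCat
  rw [show m * 2 + 1 = 2 * m + 1 by ring]
  push_cast
  have h3 : (m : ℚ) + 1 ≠ 0 := by positivity
  have h4 : (2 * (m : ℚ) + 1) ≠ 0 := by positivity
  field_simp
  apply mul_right_cancel₀ h3
  linarith

lemma card_numNodes (m : ℕ) : Nat.card {t : BinaryTree Unit // t.numNodes = m} = catalan m := by
  rw [← treesOfNumNodesEq_card_eq_catalan, ← Fintype.card_coe, ← Nat.card_eq_fintype_card]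
  exact Nat.card_congr (Equiv.subtypeEquivRight fun t => mem_treesOfNumNodesEq.symm)

end TriTree
theorem statement7 (n : ℕ) (hn : 3 ≤ n) :
    (∀ T : Triangulation n, ∃! ℓ : Fin n → Fin 3,
      T.Proper ℓ ∧ ℓ ⟨0, by omega⟩ = 0 ∧ ℓ ⟨1, by omega⟩ = 1) ∧
    (∀ lam : Fin 3 → ℕ, ∑ i, lam i = n → 1 ≤ lam 0 → 1 ≤ lam 1 →
      Nat.card {T : Triangulation n // ∃ ℓ : Fin n → Fin 3,
          T.Proper ℓ ∧ ℓ ⟨0, by omega⟩ = 0 ∧ ℓ ⟨1, by omega⟩ = 1 ∧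
          ∀ i : Fin 3, (Finset.univ.filter (fun v => ℓ v = i)).card = lam i} =
        treeCount 3 ![lam 0 - 1, lam 1 - 1, lam 2] 2) ∧
    (Nat.card (Triangulation n) : ℚ) = fussCat (n - 2) 2 1 := by
  refine ⟨fun T => ?_, fun lam hlam h0 h1 => ?_, ?_⟩
  · obtain ⟨t, ht⟩ := TriTree.exists_rep_left hn T
    exact ht.existsUnique hn (by omega) (by omega)
  · have hsum : lam 0 + lam 1 + lam 2 = n := by rw [← hlam, Fin.sum_univ_three]
    have hlam' : ∑ i, (![lam 0 - 1, lam 1 - 1, lam 2] : Fin 3 → ℕ) i = n - 2 := by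
      rw [Fin.sum_univ_three]
      simp
      omega
    rw [TriTree.treeCount_eq ![lam 0 - 1, lam 1 - 1, lam 2] (by rw [hlam']; omega),
      TriTree.card_triangulation hn _
      (fun t => ∀ i, TriTree.cnt t 1 0 i = ![lam 0 - 1, lam 1 - 1, lam 2] i)]
    · -- The color counts already determine the number of nodes.
      refine Nat.card_congr (Equiv.subtypeEquivRight fun t => ⟨fun h => h.2, fun h => ⟨?_, h⟩⟩)
      rw [← TriTree.sum_cnt t 1 0, ← hlam']
      exact Finset.sum_congr rfl fun i _ => h i
    · intro T t hT
      have key : ∀ ℓ : Fin n → Fin 3, T.Proper ℓ → ℓ ⟨0, by omega⟩ = 0 → ℓ ⟨1, by omega⟩ = 1 →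
          ((∀ i : Fin 3, (Finset.univ.filter (fun v => ℓ v = i)).card = lam i) ↔
            ∀ i, TriTree.cnt t 1 0 i = ![lam 0 - 1, lam 1 - 1, lam 2] i) := by
        intro ℓ hP hl0 hl1
        simp only [hT.count hn (by omega) (by omega) hP hl0 hl1, Fin.forall_fin_succ]
        simp
        omega
      constructor
      · rintro ⟨ℓ, hP, hl0, hl1, hc⟩
        exact (key ℓ hP hl0 hl1).1 hc
      · intro hc
        obtain ⟨ℓ, ⟨hP, hl0, hl1⟩, _⟩ := hT.existsUnique hn (by omega) (by omega)
        exact ⟨ℓ, hP, hl0, hl1, (key ℓ hP hl0 hl1).2 hc⟩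
  · rw [← TriTree.catalan_eq_fussCat, ← TriTree.card_numNodes]
    have := TriTree.card_triangulation hn (fun _ => True) (fun _ => True) (fun _ _ _ => Iff.rfl)
    rw [Nat.card_congr (Equiv.subtypeUnivEquiv fun _ => trivial)] at this
    rw [this]
    simp
end
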